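/- Let q : [1, ∞) → ℝ be a continuous real-valued function with q(x) → 0 as x → +∞. Then there exists a completely multiplicative function χ : ℕ → {1, −1} such that the function s ↦ ∫_1^∞ q(x) x^{-s} dx − ∑_p χ(p) p^{-s} log p (the sum ranging over all primes p), initially defined and analytic in the half-plane Re s > 1, extends analytically to the half-plane Re s > 21/40. -/

import Mathlib

/-!
Put `z = s - 1` and `x = e^t`, so that the integral becomes the Laplace transform of
`g(t) = q(e^t)` and the prime sum becomes `∑ χ(p) (log p / p) e^{-z log p}`. The proof first finds
real coefficients `r(p) ∈ [-1, 1]` for which the difference continues to `Re z > -1/2`, and then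
rounds them to signs.

**Primes.** The only arithmetic input is that, for fixed `ε > 0`, every window `|log p - t| ≤ ε`
carries a weight `∑ log p / p ≥ c(ε) > 0` once `t` is large (`exists_window_mass`). It follows by
a Wiener–Ikehara argument with the Fejér kernel from the non-vanishing of the zeta function on
`Re s = 1`.

**One compactly supported piece.** Let `|f| ≤ δ` be supported in `[1, B]`, and fix a height `T`.
The kernel `phi` has a trapezoid as Fourier transform, so by Poisson summation an exponential
`e^{-ζu}` is reproduced from its samples on the full lattice. On the half-lattice `n ≥ 0` the error
`R` continues analytically across `Re ζ = 0` and is `O(u^{-2})` in the strip `|Im ζ| < π/4`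
(`hasSum_sampling`). With lattice spacing `h` small in terms of `T`, the Laplace transform of `f`
becomes `∑ a_m e^{-zhm}` up to such an error. Averages of `e^{-z log p}` over narrow windows about
the points `nh` have sampling coefficients close to those of the lattice exponentials, so the
sampling matrix `smat` is within `1/2` of the identity and can be inverted on bounded sequences by
a contraction (`exists_neumann`). This yields coefficients `r(p) = O(δ)` for which the difference
of transforms is holomorphic and `O(δ)` for `Re z > -1`, `|Im z| < T`; the constant depends on `T`
but not on `B` (`exists_density`).

**Damping.** To have the difference holomorphic at all heights, multiply the density by
`e^{-t/2} ∑_{j<k} (t/2)^j / j!`, which is at least `1/2` on `[1, B]` for `k` large. The prime sum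
then converges absolutely for `Re z > -1/2`. On transforms this multiplication is
`∑_j (-1/2)^j / j! (d/dw)^j` at `w = z + 1/2`, and Cauchy's estimate on a disc of radius `3/4` keeps
the bound `O(δ)` for `|Im z| < T` (`exists_damped`).

**Gluing.** Cut `g` into pieces supported so far out that the `N`-th, treated at height `T = N + 1`,
contributes at most `2^{-N-1}`. The sum of the differences converges locally uniformly on
`Re z > -1/2`, and the coefficients sum to a sequence bounded by `1` (`exists_coefficients`).

**Rounding.** Greedy choice of signs keeps `|∑_{p ≤ x} (r(p) - χ(p)) log p| ≤ 2 log x`, so by Abel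
summation the difference of the two prime sums continues far enough (`exists_rounding`). The signs
at primes extend to a completely multiplicative function.
-/

open Complex Filter Set MeasureTheory

/-- A completely multiplicative function: `χ 1 = 1` and `χ (m*n) = χ m * χ n`. -/
def CompletelyMultiplicative (χ : ℕ → ℂ) : Prop :=
  χ 1 = 1 ∧ ∀ m n : ℕ, χ (m * n) = χ m * χ n

namespace PrimeSign

open scoped Topology

/-! ### The triangle function and the Fejér kernel -/

/-- The triangle function of half-width `α` and height `α`. -/
noncomputable def tri (α y : ℝ) : ℝ := max (α - |y|) 0

/-- The (unnormalised) Fejér kernel, the Fourier transform of `tri α`. -/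
noncomputable def fejer (α t : ℝ) : ℝ := α ^ 2 * Real.sinc (α * t / 2) ^ 2

lemma continuous_tri (α : ℝ) : Continuous (tri α) := by
  unfold tri; fun_prop

lemma tri_nonneg (α y : ℝ) : 0 ≤ tri α y := le_max_right _ _

lemma tri_of_le {α y : ℝ} (h : α ≤ |y|) : tri α y = 0 := by
  unfold tri; exact max_eq_right (by linarith)

lemma tri_of_ge {α y : ℝ} (h : |y| ≤ α) : tri α y = α - |y| := by
  unfold tri; exact max_eq_left (by linarith)

lemma tri_neg (α y : ℝ) : tri α (-y) = tri α y := by simp [tri]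

lemma tri_le {α y : ℝ} (hα : 0 ≤ α) : tri α y ≤ α := by
  unfold tri; exact max_le (by linarith [abs_nonneg y]) hα

lemma hasCompactSupport_tri (α : ℝ) : HasCompactSupport (tri α) := by
  apply HasCompactSupport.of_support_subset_isCompact (isCompact_Icc (a := -α) (b := α))
  intro y hy
  by_contra h
  apply hy
  apply tri_of_le
  by_contra h2
  push Not at h2
  exact h ⟨by linarith [neg_abs_le y], by linarith [le_abs_self y]⟩

lemma integrable_tri (α : ℝ) : Integrable (tri α) :=
  (continuous_tri α).integrable_of_hasCompactSupport (hasCompactSupport_tri α)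

lemma fejer_nonneg (α t : ℝ) : 0 ≤ fejer α t := by unfold fejer; positivity

lemma continuous_fejer (α : ℝ) : Continuous (fejer α) := by
  unfold fejer
  have := Real.continuous_sinc
  fun_prop

lemma fejer_zero (α : ℝ) : fejer α 0 = α ^ 2 := by simp [fejer]

lemma fejer_neg (α t : ℝ) : fejer α (-t) = fejer α t := by
  simp only [fejer]
  rw [show α * -t / 2 = -(α * t / 2) by ring, Real.sinc_neg]

lemma fejer_le (α t : ℝ) : fejer α t ≤ α ^ 2 := by
  unfold fejer
  have h : Real.sinc (α * t / 2) ^ 2 ≤ 1 := by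
    rw [sq_le_one_iff_abs_le_one]; exact Real.abs_sinc_le_one _
  nlinarith [sq_nonneg α]

lemma fejer_mul_sq (α t : ℝ) : fejer α t * t ^ 2 = 4 * Real.sin (α * t / 2) ^ 2 := by
  unfold fejer
  by_cases h : α * t / 2 = 0
  · have : α * t = 0 := by linarith
    rw [h, Real.sinc_zero, Real.sin_zero]
    linear_combination (α * t) * this
  · rw [Real.sinc_of_ne_zero h]
    have h1 : α ≠ 0 := by rintro rfl; simp at h
    have h2 : t ≠ 0 := by rintro rfl; simp at h
    field_simp
    ring

lemma fejer_mul_sq' (α t : ℝ) : fejer α t * t ^ 2 = 2 * (1 - Real.cos (α * t)) := by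
  rw [fejer_mul_sq, Real.sin_sq_eq_half_sub]
  rw [show 2 * (α * t / 2) = α * t by ring]; ring

lemma fejer_le_div (α t : ℝ) (ht : t ≠ 0) : fejer α t ≤ 4 / t ^ 2 := by
  rw [le_div_iff₀ (by positivity), fejer_mul_sq]
  nlinarith [Real.sin_sq_le_one (α * t / 2)]

lemma fejer_bound (α t : ℝ) : fejer α t ≤ (α ^ 2 + 4) / (1 + t ^ 2) := by
  rw [le_div_iff₀ (by positivity)]
  have := fejer_le α t
  have h2 := fejer_mul_sq α t
  nlinarith [Real.sin_sq_le_one (α * t / 2)]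

lemma integrable_inv_one_add_sq' (K : ℝ) : Integrable (fun t : ℝ => K / (1 + t ^ 2)) := by
  simpa [div_eq_mul_inv] using integrable_inv_one_add_sq.const_mul K

lemma integrable_fejer (α : ℝ) : Integrable (fejer α) := by
  refine (integrable_inv_one_add_sq' (α ^ 2 + 4)).mono'
    (continuous_fejer α).aestronglyMeasurable (ae_of_all _ fun t => ?_)
  rw [Real.norm_of_nonneg (fejer_nonneg _ _)]
  exact fejer_bound α t

lemma hasDerivAt_E (t y : ℝ) :
    HasDerivAt (fun y : ℝ => cexp (I * y * t)) (I * t * cexp (I * y * t)) y := by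
  have h1 : HasDerivAt (fun y : ℝ => I * (y : ℂ) * t) (I * t) y := by
    simpa using ((Complex.ofRealCLM.hasDerivAt (x := y)).const_mul I).mul_const (t : ℂ)
  simpa [mul_comm] using h1.cexp

/-- The Fourier transform of the triangle function is the Fejér kernel. -/
lemma integral_tri (α : ℝ) (hα : 0 < α) (t : ℝ) :
    ∫ y : ℝ, (tri α y : ℂ) * cexp (I * y * t) = (fejer α t : ℂ) := by
  have hsupp : Function.support (fun y : ℝ => (tri α y : ℂ) * cexp (I * y * t)) ⊆ Ioc (-α) α := by
    intro y hy
    by_contra h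
    apply hy
    have : α ≤ |y| := by
      by_contra h2
      push Not at h2
      exact h ⟨by linarith [neg_abs_le y], by linarith [le_abs_self y]⟩
    simp [tri_of_le this]
  have hcont : Continuous (fun y : ℝ => (tri α y : ℂ) * cexp (I * y * t)) := by
    have := continuous_tri α
    fun_prop
  rw [← intervalIntegral.integral_eq_integral_of_support_subset hsupp,
    ← intervalIntegral.integral_add_adjacent_intervals (b := 0)
      (hcont.intervalIntegrable _ _) (hcont.intervalIntegrable _ _)]
  have e1 : ∫ y in (-α)..0, (tri α y : ℂ) * cexp (I * y * t) =
      ∫ y in (-α)..0, ((α : ℂ) + y) * cexp (I * y * t) := by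
    apply intervalIntegral.integral_congr
    intro y hy
    rw [uIcc_of_le (by linarith)] at hy
    have : tri α y = α + y := by
      rw [tri_of_ge (by rw [abs_of_nonpos hy.2]; linarith [hy.1]), abs_of_nonpos hy.2]; ring
    simp [this]
  have e2 : ∫ y in 0..α, (tri α y : ℂ) * cexp (I * y * t) =
      ∫ y in 0..α, ((α : ℂ) - y) * cexp (I * y * t) := by
    apply intervalIntegral.integral_congr
    intro y hy
    rw [uIcc_of_le (by linarith)] at hy
    have : tri α y = α - y := by
      rw [tri_of_ge (by rw [abs_of_nonneg hy.1]; linarith [hy.2]), abs_of_nonneg hy.1]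
    simp [this]
  rw [e1, e2]
  by_cases ht : t = 0
  · subst ht
    have d1 : ∀ y ∈ uIcc (-α) 0, HasDerivAt (fun y : ℝ => ((α : ℂ) + y) ^ 2 / 2)
        (((α : ℂ) + y) * cexp (I * y * (0 : ℝ))) y := by
      intro y _
      have h := (((Complex.ofRealCLM.hasDerivAt (x := y)).const_add (α : ℂ)).pow 2).div_const 2
      refine h.congr_deriv ?_
      simp
    have d2 : ∀ y ∈ uIcc 0 α, HasDerivAt (fun y : ℝ => -((α : ℂ) - y) ^ 2 / 2)
        (((α : ℂ) - y) * cexp (I * y * (0 : ℝ))) y := by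
      intro y _
      have h := ((((Complex.ofRealCLM.hasDerivAt (x := y)).const_sub (α : ℂ)).pow 2).neg).div_const 2
      refine h.congr_deriv ?_
      simp
    rw [intervalIntegral.integral_eq_sub_of_hasDerivAt d1
        ((Continuous.intervalIntegrable (by fun_prop) _ _)),
      intervalIntegral.integral_eq_sub_of_hasDerivAt d2
        ((Continuous.intervalIntegrable (by fun_prop) _ _)), fejer_zero]
    push_cast
    ring
  · have htc : (t : ℂ) ≠ 0 := by exact_mod_cast ht
    have d1 : ∀ y ∈ uIcc (-α) 0, HasDerivAt
        (fun y : ℝ => ((α : ℂ) + y) * cexp (I * y * t) / (I * t) + cexp (I * y * t) / t ^ 2)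
        (((α : ℂ) + y) * cexp (I * y * t)) y := by
      intro y _
      have h := ((((Complex.ofRealCLM.hasDerivAt (x := y)).const_add (α : ℂ)).mul
        (hasDerivAt_E t y)).div_const (I * t)).add ((hasDerivAt_E t y).div_const ((t : ℂ) ^ 2))
      refine h.congr_deriv ?_
      simp only [Complex.ofRealCLM_apply, ofReal_one]
      field_simp
      ring_nf
      simp only [I_sq]
      ring
    have d2 : ∀ y ∈ uIcc 0 α, HasDerivAt
        (fun y : ℝ => ((α : ℂ) - y) * cexp (I * y * t) / (I * t) - cexp (I * y * t) / t ^ 2)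
        (((α : ℂ) - y) * cexp (I * y * t)) y := by
      intro y _
      have h := ((((Complex.ofRealCLM.hasDerivAt (x := y)).const_sub (α : ℂ)).mul
        (hasDerivAt_E t y)).div_const (I * t)).sub ((hasDerivAt_E t y).div_const ((t : ℂ) ^ 2))
      refine h.congr_deriv ?_
      simp only [Complex.ofRealCLM_apply, ofReal_one]
      field_simp
      ring_nf
      simp only [I_sq]
      ring
    rw [intervalIntegral.integral_eq_sub_of_hasDerivAt d1
        ((Continuous.intervalIntegrable (by fun_prop) _ _)),
      intervalIntegral.integral_eq_sub_of_hasDerivAt d2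
        ((Continuous.intervalIntegrable (by fun_prop) _ _))]
    have hf : fejer α t = 2 * (1 - Real.cos (α * t)) / t ^ 2 := by
      rw [eq_div_iff (by positivity), fejer_mul_sq']
    rw [hf]
    push_cast
    rw [Complex.cos, show I * (α : ℂ) * t = α * t * I by ring,
      show I * (-α : ℂ) * t = -(α * t) * I by ring]
    simp only [mul_zero, zero_mul, Complex.exp_zero]
    field_simp
    ring

/-! ### The prime sum near the line of absolute convergence -/

/-- The real logarithm of a natural number; a separate name keeps the simplifier from rewriting
its complex cast. -/
noncomputable def lg (n : ℕ) : ℝ := Real.log n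

/-- The weight `Λ(n)/n`. -/
noncomputable def vw (n : ℕ) : ℝ := ArithmeticFunction.vonMangoldt n / n

lemma vw_nonneg (n : ℕ) : 0 ≤ vw n :=
  div_nonneg ArithmeticFunction.vonMangoldt_nonneg n.cast_nonneg

lemma term_eq_vw (n : ℕ) (z : ℂ) :
    LSeries.term (fun n => (ArithmeticFunction.vonMangoldt n : ℂ)) (1 + z) n =
      vw n * cexp (-(z * lg n)) := by
  rcases Nat.eq_zero_or_pos n with rfl | hn
  · simp [vw]
  · have hn' : (n : ℂ) ≠ 0 := by exact_mod_cast hn.ne'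
    rw [LSeries.term_of_ne_zero hn.ne', cpow_add _ _ hn', cpow_one, cpow_def_of_ne_zero hn',
      ← Complex.natCast_log, Complex.exp_neg, vw, lg, mul_comm z]
    push_cast
    field_simp

/-- `∑ Λ(n) n^{-1-z}` equals `1/z` plus a function continuous up to the line `Re z = 0`; this
is the non-vanishing of the zeta function on `Re s = 1`. -/
lemma exists_zeta_remainder : ∃ A : ℂ → ℂ, ContinuousOn A {z | 0 ≤ z.re} ∧ ∀ z : ℂ, 0 < z.re →
    HasSum (fun n : ℕ => (vw n : ℂ) * cexp (-(z * lg n))) (A z + 1 / z) := by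
  refine ⟨fun z => ArithmeticFunction.vonMangoldt.LFunctionResidueClassAux (0 : ZMod 1) (1 + z),
    ?_, ?_⟩
  · refine (ArithmeticFunction.vonMangoldt.continuousOn_LFunctionResidueClassAux
      (0 : ZMod 1)).comp (by fun_prop) ?_
    intro z hz
    simpa using hz
  · intro z hz
    have hz1 : 1 < (1 + z).re := by simpa using hz
    have h := ArithmeticFunction.vonMangoldt.eqOn_LFunctionResidueClassAux (a := (0 : ZMod 1))
      (isUnit_of_subsingleton _) hz1
    have e : (fun n => (ArithmeticFunction.vonMangoldt.residueClass (0 : ZMod 1) n : ℂ)) =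
        fun n => (ArithmeticFunction.vonMangoldt n : ℂ) := by
      ext n
      rw [ArithmeticFunction.vonMangoldt.residueClass, Set.indicator_of_mem]
      exact Subsingleton.elim _ _
    simp only [e] at h
    have hs : Summable fun n : ℕ => (vw n : ℂ) * cexp (-(z * lg n)) :=
      (ArithmeticFunction.LSeriesSummable_vonMangoldt hz1).congr fun n => term_eq_vw n z
    have e2 : ArithmeticFunction.vonMangoldt.LFunctionResidueClassAux (0 : ZMod 1) (1 + z) + 1 / z
        = ∑' n : ℕ, (vw n : ℂ) * cexp (-(z * lg n)) := by
      rw [h]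
      simp only [Nat.totient_one, Nat.cast_one, inv_one, add_sub_cancel_left]
      rw [sub_add_cancel, LSeries]
      simp only [term_eq_vw]
    simp only [e2]
    exact hs.hasSum

lemma summable_vw_exp {σ : ℝ} (hσ : 0 < σ) :
    Summable (fun n : ℕ => vw n * Real.exp (-(σ * lg n))) := by
  obtain ⟨A, -, h⟩ := exists_zeta_remainder
  have := (h σ (by simpa using hσ)).summable.norm
  refine this.congr fun n => ?_
  rw [norm_mul, Complex.norm_of_nonneg (vw_nonneg n), Complex.norm_exp]
  congr 2
  simp

/-- The Fejér-weighted prime sum at abscissa `1 + σ` as a Fourier integral. -/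
lemma fejer_sum_eq {A : ℂ → ℂ} (hA : ContinuousOn A {z | 0 ≤ z.re})
    (hsum : ∀ z : ℂ, 0 < z.re →
      HasSum (fun n : ℕ => (vw n : ℂ) * cexp (-(z * lg n))) (A z + 1 / z))
    {l : ℝ} (hl : 0 < l) {σ : ℝ} (hσ : 0 < σ) (t : ℝ) :
    HasSum (fun n : ℕ => vw n * Real.exp (-(σ * lg n)) * fejer l (t - lg n))
      ((∫ v in Ioi (0 : ℝ), Real.exp (-(σ * v)) * fejer l (t - v)) +
        (∫ y : ℝ, (tri l y : ℂ) * cexp (I * y * t) * A (σ + I * y)).re) := by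
  have hre : ∀ y : ℝ, ((σ : ℂ) + I * y).re = σ := by intro y; simp
  have hcA : Continuous fun y : ℝ => A (σ + I * y) := by
    refine hA.comp_continuous (by fun_prop) fun y => ?_
    simp only [mem_ofPred_eq, hre]; exact hσ.le
  have hct := continuous_tri l
  have hne : ∀ y : ℝ, (σ : ℂ) + I * y ≠ 0 := by
    intro y h
    have := congrArg Complex.re h
    rw [hre] at this
    exact hσ.ne' this
  -- integrate the Dirichlet series termwise against the triangle function
  have h1 : HasSum (fun n : ℕ => ∫ y : ℝ, (tri l y : ℂ) * cexp (I * y * t) *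
      ((vw n : ℂ) * cexp (-((σ + I * y) * lg n))))
      (∫ y : ℝ, ∑' n : ℕ, (tri l y : ℂ) * cexp (I * y * t) *
      ((vw n : ℂ) * cexp (-((σ + I * y) * lg n)))) := by
    have hn : ∀ (n : ℕ) (y : ℝ), ‖(tri l y : ℂ) * cexp (I * y * t) *
        ((vw n : ℂ) * cexp (-((σ + I * y) * lg n)))‖ =
        (vw n * Real.exp (-(σ * lg n))) * tri l y := by
      intro n y
      rw [norm_mul, norm_mul, norm_mul, Complex.norm_of_nonneg (vw_nonneg n),
        Complex.norm_of_nonneg (tri_nonneg l y), Complex.norm_exp, Complex.norm_exp]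
      simp
      ring
    apply hasSum_integral_of_summable_integral_norm
    · intro n
      have hc : Continuous (fun y : ℝ => (tri l y : ℂ) * cexp (I * y * t) *
        ((vw n : ℂ) * cexp (-((σ + I * y) * lg n)))) := by fun_prop
      refine ((integrable_tri l).const_mul (vw n * Real.exp (-(σ * lg n)))).mono'
        hc.aestronglyMeasurable (ae_of_all _ fun y => (hn n y).le)
    · simp only [hn]
      simp only [integral_const_mul]
      exact (summable_vw_exp hσ).mul_right _
  have h2 : ∀ y : ℝ, ∑' n : ℕ, (tri l y : ℂ) * cexp (I * y * t) *
      ((vw n : ℂ) * cexp (-((σ + I * y) * lg n))) =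
      (tri l y : ℂ) * cexp (I * y * t) * A (σ + I * y) +
        (tri l y : ℂ) * cexp (I * y * t) * (1 / (σ + I * y)) := by
    intro y
    rw [tsum_mul_left, (hsum _ (by rw [hre]; exact hσ)).tsum_eq, mul_add]
  have h3 : ∀ n : ℕ, ∫ y : ℝ, (tri l y : ℂ) * cexp (I * y * t) *
      ((vw n : ℂ) * cexp (-((σ + I * y) * lg n))) =
      ((vw n * Real.exp (-(σ * lg n)) * fejer l (t - lg n) : ℝ) : ℂ) := by
    intro n
    rw [ofReal_mul, ← integral_tri l hl, ← integral_const_mul]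
    congr 1
    ext y
    push_cast
    have : cexp (I * y * t) * cexp (-((σ + I * y) * lg n)) =
      cexp (-(σ * lg n)) * cexp (I * y * (t - lg n)) := by
      rw [← Complex.exp_add, ← Complex.exp_add]; congr 1; ring
    linear_combination (tri l y : ℂ) * vw n * this
  have cb1 : Continuous (fun y : ℝ => (tri l y : ℂ) * cexp (I * y * t) * A (σ + I * y)) :=
    Continuous.mul (by fun_prop) hcA
  have cb2 : Continuous (fun y : ℝ => (tri l y : ℂ) * cexp (I * y * t) * (1 / (σ + I * y))) := by
    have : Continuous fun y : ℝ => 1 / ((σ : ℂ) + I * y) :=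
      Continuous.div continuous_const (by fun_prop) hne
    fun_prop
  have hcs : HasCompactSupport (fun y : ℝ => (tri l y : ℂ)) :=
    (hasCompactSupport_tri l).comp_left (g := fun x : ℝ => (x : ℂ)) (by simp)
  have i1 : Integrable (fun y : ℝ => (tri l y : ℂ) * cexp (I * y * t) * A (σ + I * y)) :=
    cb1.integrable_of_hasCompactSupport (hcs.mul_right.mul_right)
  have i2 : Integrable (fun y : ℝ => (tri l y : ℂ) * cexp (I * y * t) * (1 / (σ + I * y))) :=
    cb2.integrable_of_hasCompactSupport (hcs.mul_right.mul_right)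
  have h4 : ∫ y : ℝ, (tri l y : ℂ) * cexp (I * y * t) * (1 / (σ + I * y)) =
      ((∫ v in Ioi (0 : ℝ), Real.exp (-(σ * v)) * fejer l (t - v) : ℝ) : ℂ) := by
    have e1 : ∀ y : ℝ, (tri l y : ℂ) * cexp (I * y * t) * (1 / (σ + I * y)) =
        ∫ v in Ioi (0 : ℝ), (tri l y : ℂ) * cexp (I * y * t) * cexp (-(σ + I * y) * v) := by
      intro y
      rw [integral_const_mul, integral_exp_mul_complex_Ioi (by simpa using hσ)]
      congr 1
      have := hne y
      rw [ofReal_zero, mul_zero, Complex.exp_zero, neg_div_neg_eq]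
    simp only [e1]
    rw [integral_integral_swap]
    · rw [← integral_complex_ofReal]
      refine setIntegral_congr_fun measurableSet_Ioi fun v _ => ?_
      rw [ofReal_mul, ← integral_tri l hl, ← integral_const_mul]
      congr 1
      ext y
      push_cast
      have : cexp (I * y * t) * cexp (-(σ + I * y) * v) =
        cexp (-(σ * v)) * cexp (I * y * (t - v)) := by
        rw [← Complex.exp_add, ← Complex.exp_add]; congr 1; ring
      linear_combination (tri l y : ℂ) * this
    · have hi : Integrable (fun p : ℝ × ℝ => tri l p.1 * Real.exp (-σ * p.2))
          (volume.prod (volume.restrict (Ioi 0))) := by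
        exact Integrable.mul_prod (f := tri l) (g := fun v => Real.exp (-σ * v))
          (integrable_tri l) (exp_neg_integrableOn_Ioi 0 hσ)
      refine hi.mono' ?_ (ae_of_all _ ?_)
      · apply Continuous.aestronglyMeasurable
        simp only [Function.uncurry_def]
        fun_prop
      · rintro ⟨y, v⟩
        simp only [Function.uncurry_apply_pair]
        rw [norm_mul, norm_mul, Complex.norm_of_nonneg (tri_nonneg l y), Complex.norm_exp,
          Complex.norm_exp]
        simp
  simp only [h2, h3] at h1
  rw [integral_add i1 i2, h4] at h1
  have := Complex.hasSum_re h1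
  simp only [ofReal_re, add_re] at this
  rwa [add_comm] at this

/-! ### Fejér averages of the prime weights -/

lemma lg_nonneg (n : ℕ) : 0 ≤ lg n := Real.log_natCast_nonneg n

lemma integrable_fejer_sub (l t : ℝ) : Integrable (fun v => fejer l (t - v)) :=
  (integrable_fejer l).comp_sub_left t

/-- The Wiener–Ikehara limit: Fejér averages of the prime weights converge to the total mass of
the kernel. -/
lemma exists_fejer_limit {l : ℝ} (hl : 0 < l) : ∃ S : ℝ → ℝ,
    (∀ t, HasSum (fun n : ℕ => vw n * fejer l (t - lg n)) (S t)) ∧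
      Tendsto S atTop (𝓝 (∫ v, fejer l v)) := by
  obtain ⟨A, hA, hsum⟩ := exists_zeta_remainder
  have key := fun σ (hσ : 0 < σ) t => fejer_sum_eq hA hsum hl (σ := σ) hσ t
  set Is : ℝ → ℝ → ℝ := fun σ t => ∫ v in Ioi (0 : ℝ), Real.exp (-(σ * v)) * fejer l (t - v)
    with hIs
  set Es : ℝ → ℝ → ℂ := fun σ t => ∫ y : ℝ, (tri l y : ℂ) * cexp (I * y * t) * A (σ + I * y)
    with hEs
  have hct := continuous_tri l
  have hcf := continuous_fejer l
  -- the limit `σ → 0` of both integrals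
  have limI : ∀ t, Tendsto (fun σ => Is σ t) (𝓝[>] 0) (𝓝 (Is 0 t)) := by
    intro t
    apply tendsto_integral_filter_of_dominated_convergence (fun v => fejer l (t - v))
    · exact Eventually.of_forall fun σ => Continuous.aestronglyMeasurable (by fun_prop)
    · filter_upwards [self_mem_nhdsWithin] with σ hσ
      filter_upwards [ae_restrict_mem measurableSet_Ioi] with v hv
      rw [Real.norm_of_nonneg (mul_nonneg (Real.exp_nonneg _) (fejer_nonneg _ _))]
      have : Real.exp (-(σ * v)) ≤ 1 := by
        apply Real.exp_le_one_iff.2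
        have : 0 ≤ σ * v := mul_nonneg (le_of_lt hσ) (le_of_lt hv)
        linarith
      exact mul_le_of_le_one_left (fejer_nonneg _ _) this
    · exact (integrable_fejer_sub l t).integrableOn
    · refine ae_of_all _ fun v => ?_
      have : Continuous fun σ : ℝ => Real.exp (-(σ * v)) * fejer l (t - v) := by fun_prop
      exact (this.tendsto 0).mono_left nhdsWithin_le_nhds
  have limE : ∀ t, Tendsto (fun σ => (Es σ t).re) (𝓝[>] 0) (𝓝 (Es 0 t).re) := by
    intro t
    refine (Complex.continuous_re.tendsto _).comp ?_
    have hcomp : IsCompact ((fun p : ℝ × ℝ => (p.1 : ℂ) + I * p.2) '' (Icc 0 1 ×ˢ Icc (-l) l)) :=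
      (isCompact_Icc.prod isCompact_Icc).image (by fun_prop)
    obtain ⟨M, hM⟩ := hcomp.exists_bound_of_continuousOn (f := A) (hA.mono (by
      rintro _ ⟨⟨σ, y⟩, ⟨h1, -⟩, rfl⟩
      simpa using h1.1))
    apply tendsto_integral_filter_of_dominated_convergence (fun y => tri l y * M)
    · filter_upwards [self_mem_nhdsWithin] with σ hσ
      apply Continuous.aestronglyMeasurable
      refine Continuous.mul (by fun_prop) (hA.comp_continuous (by fun_prop) fun y => ?_)
      simpa using le_of_lt hσ
    · have : ∀ᶠ σ : ℝ in 𝓝[>] 0, σ ∈ Icc (0 : ℝ) 1 :=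
        mem_of_superset (Ioc_mem_nhdsGT one_pos) (fun x hx => ⟨hx.1.le, hx.2⟩)
      filter_upwards [this] with σ hσ
      refine ae_of_all _ fun y => ?_
      rw [norm_mul, norm_mul, Complex.norm_of_nonneg (tri_nonneg l y), Complex.norm_exp]
      have e1 : (I * (y : ℂ) * t).re = 0 := by simp
      rw [e1, Real.exp_zero, mul_one]
      by_cases hy : l ≤ |y|
      · simp [tri_of_le hy]
      · push Not at hy
        refine mul_le_mul_of_nonneg_left (hM _ ⟨(σ, y), ⟨hσ, ?_⟩, rfl⟩) (tri_nonneg l y)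
        exact abs_le.1 hy.le
    · exact (integrable_tri l).mul_const M
    · refine ae_of_all _ fun y => ?_
      refine Tendsto.const_mul _ ?_
      have h0 : ((0 : ℝ) : ℂ) + I * y ∈ {z : ℂ | 0 ≤ z.re} := by simp
      refine (hA _ h0).tendsto.comp ?_
      refine tendsto_nhdsWithin_iff.2 ⟨?_, ?_⟩
      · have : Continuous fun σ : ℝ => (σ : ℂ) + I * y := by fun_prop
        exact (this.tendsto 0).mono_left nhdsWithin_le_nhds
      · filter_upwards [self_mem_nhdsWithin] with σ hσ
        simpa using le_of_lt hσ
  have hexp : ∀ σ : ℝ, 0 < σ → ∀ n : ℕ, Real.exp (-(σ * lg n)) ≤ 1 := by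
    intro σ hσ n
    apply Real.exp_le_one_iff.2
    have := mul_nonneg hσ.le (lg_nonneg n)
    linarith
  have hnn : ∀ t (n : ℕ), 0 ≤ vw n * fejer l (t - lg n) := fun t n =>
    mul_nonneg (vw_nonneg n) (fejer_nonneg _ _)
  have hpart : ∀ t (F : Finset ℕ), ∑ n ∈ F, vw n * fejer l (t - lg n) ≤ Is 0 t + (Es 0 t).re := by
    intro t F
    have l1 : Tendsto (fun σ : ℝ => ∑ n ∈ F, vw n * Real.exp (-(σ * lg n)) * fejer l (t - lg n))
        (𝓝[>] 0) (𝓝 (∑ n ∈ F, vw n * fejer l (t - lg n))) := by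
      have : Continuous fun σ : ℝ =>
        ∑ n ∈ F, vw n * Real.exp (-(σ * lg n)) * fejer l (t - lg n) := by fun_prop
      have h := (this.tendsto 0).mono_left (nhdsWithin_le_nhds (s := Ioi 0))
      simpa using h
    refine le_of_tendsto_of_tendsto l1 ((limI t).add (limE t)) ?_
    filter_upwards [self_mem_nhdsWithin] with σ hσ
    refine sum_le_hasSum F (fun n _ => ?_) (key σ hσ t)
    exact mul_nonneg (mul_nonneg (vw_nonneg n) (Real.exp_nonneg _)) (fejer_nonneg _ _)
  have hs : ∀ t, HasSum (fun n : ℕ => vw n * fejer l (t - lg n)) (Is 0 t + (Es 0 t).re) := by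
    intro t
    have hsm := summable_of_sum_le (hnn t) (hpart t)
    have hle := hsm.tsum_le_of_sum_le (hpart t)
    have hge : Is 0 t + (Es 0 t).re ≤ ∑' n : ℕ, vw n * fejer l (t - lg n) := by
      refine le_of_tendsto ((limI t).add (limE t)) ?_
      filter_upwards [self_mem_nhdsWithin] with σ hσ
      refine hasSum_le (fun n => ?_) (key σ hσ t) hsm.hasSum
      have := hexp σ hσ n
      have h1 := vw_nonneg n
      have h2 := fejer_nonneg l (t - lg n)
      refine mul_le_mul_of_nonneg_right ?_ h2
      exact mul_le_of_le_one_right h1 this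
    have := le_antisymm hle hge
    rw [← this]
    exact hsm.hasSum
  refine ⟨_, hs, ?_⟩
  have t1 : Tendsto (fun t => Is 0 t) atTop (𝓝 (∫ v, fejer l v)) := by
    have e : ∀ t, Is 0 t = ∫ v in Iio t, fejer l v := by
      intro t
      simp only [hIs, zero_mul, neg_zero, Real.exp_zero, one_mul]
      rw [← integral_indicator measurableSet_Ioi, ← integral_indicator measurableSet_Iio,
        ← integral_sub_left_eq_self (fun v => (Iio t).indicator (fejer l) v) volume t]
      congr 1
      ext v
      simp only [indicator, mem_Ioi, mem_Iio, sub_lt_self_iff]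
    simp only [e]
    have h := (aecover_Iio (μ := (volume : Measure ℝ)) (l := atTop)
      (b := fun t : ℝ => t) tendsto_id).integral_tendsto_of_countably_generated
      (integrable_fejer l)
    exact h
  have t2 : Tendsto (fun t => (Es 0 t).re) atTop (𝓝 0) := by
    have h := Real.tendsto_integral_exp_smul_cocompact
      (fun y : ℝ => (tri l y : ℂ) * A (((0 : ℝ) : ℂ) + I * y))
    have h2 : Tendsto (fun t : ℝ => -(t / (2 * Real.pi))) atTop (cocompact ℝ) := by
      rw [cocompact_eq_atBot_atTop]
      refine Tendsto.mono_right ?_ le_sup_left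
      exact tendsto_neg_atTop_atBot.comp (tendsto_id.atTop_div_const (by positivity))
    have h3 := (Complex.continuous_re.tendsto _).comp (h.comp h2)
    simp only [zero_re] at h3
    refine h3.congr fun t => ?_
    simp only [Function.comp_apply, hEs]
    congr 2
    ext y
    rw [Circle.smul_def, Real.fourierChar_apply, smul_eq_mul]
    have : (2 * Real.pi * -(y * -(t / (2 * Real.pi))) : ℝ) = y * t := by
      have := Real.pi_pos.ne'
      field_simp
    rw [this]
    push_cast
    rw [show (y : ℂ) * t * I = I * y * t by ring]
    ring
  simpa using t1.add t2

/-! ### Prime mass in short logarithmic windows -/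

/-- The weight `log p / p` on primes, extended by zero. -/
noncomputable def pw (n : ℕ) : ℝ := if n.Prime then lg n / n else 0

lemma pw_nonneg (n : ℕ) : 0 ≤ pw n := by
  unfold pw; split_ifs
  · exact div_nonneg (lg_nonneg n) n.cast_nonneg
  · exact le_rfl

/-- The primes whose logarithm lies within `ε` of `t`. -/
noncomputable def win (t ε : ℝ) : Finset ℕ := by
  classical
  exact (Finset.range (⌊Real.exp (t + ε)⌋₊ + 1)).filter fun n => n.Prime ∧ |lg n - t| ≤ ε

lemma le_floor_of_lg {n : ℕ} {t ε : ℝ} (h : |lg n - t| ≤ ε) : n ≤ ⌊Real.exp (t + ε)⌋₊ := by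
  rcases Nat.eq_zero_or_pos n with rfl | hn
  · exact Nat.zero_le _
  · apply Nat.le_floor
    have hn' : (0 : ℝ) < n := by exact_mod_cast hn
    rw [← Real.log_le_iff_le_exp hn']
    have := (abs_le.1 h).2
    unfold lg at this
    linarith

lemma mem_win {n : ℕ} {t ε : ℝ} : n ∈ win t ε ↔ n.Prime ∧ |lg n - t| ≤ ε := by
  unfold win
  rw [Finset.mem_filter, Finset.mem_range]
  exact ⟨fun h => h.2, fun h => ⟨Nat.lt_succ_of_le (le_floor_of_lg h.2), h⟩⟩

lemma fejer_scale (l t : ℝ) : fejer l t = l ^ 2 * fejer 1 (l * t) := by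
  simp [fejer]

lemma integral_fejer {l : ℝ} (hl : 0 < l) : ∫ v, fejer l v = l * ∫ v, fejer 1 v := by
  simp only [fejer_scale l]
  rw [integral_const_mul, Measure.integral_comp_mul_left, abs_of_pos (inv_pos.2 hl), smul_eq_mul]
  field_simp

/-- Two translates of the Fejér kernel dominate the Cauchy kernel, because their zeros
interlace. -/
lemma cauchy_le_fejer (v : ℝ) : 4 / (1 + v ^ 2) ≤ fejer 1 v + 20 * fejer 1 (v + Real.pi) := by
  rw [div_le_iff₀ (by positivity)]
  have h1 := fejer_mul_sq 1 v
  have h2 := fejer_mul_sq 1 (v + Real.pi)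
  have e : Real.sin (1 * (v + Real.pi) / 2) = Real.cos (1 * v / 2) := by
    rw [show 1 * (v + Real.pi) / 2 = 1 * v / 2 + Real.pi / 2 by ring, Real.sin_add_pi_div_two]
  rw [e] at h2
  have n1 := fejer_nonneg 1 v
  have n2 := fejer_nonneg 1 (v + Real.pi)
  have h3 := Real.sin_sq_add_cos_sq (1 * v / 2)
  have hpi : Real.pi ^ 2 ≤ 10 := by nlinarith [Real.pi_lt_d2, Real.pi_pos]
  have h4 : (v + Real.pi) ^ 2 ≤ 20 * (1 + v ^ 2) := by nlinarith [sq_nonneg (v - Real.pi)]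
  have h5 := mul_le_mul_of_nonneg_left h4 n2
  nlinarith

lemma integral_fejer_one_pos : 0 < ∫ v, fejer 1 v := by
  have h : ∫ v : ℝ, 4 / (1 + v ^ 2) ≤ ∫ v, (fejer 1 v + 20 * fejer 1 (v + Real.pi)) :=
    integral_mono (integrable_inv_one_add_sq' 4)
      ((integrable_fejer 1).add (((integrable_fejer 1).comp_add_right Real.pi).const_mul 20))
      cauchy_le_fejer
  rw [integral_add (integrable_fejer 1)
    (((integrable_fejer 1).comp_add_right Real.pi).const_mul 20), integral_const_mul,
    integral_add_right_eq_self (fejer 1)] at h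
  have e : ∫ v : ℝ, 4 / (1 + v ^ 2) = 4 * Real.pi := by
    simp only [div_eq_mul_inv]
    rw [integral_const_mul, integral_univ_inv_one_add_sq]
  rw [e] at h
  linarith [Real.pi_pos]

/-- The prime weights have bounded mass against every translate of the Cauchy kernel. -/
lemma exists_cauchy_bound : ∃ C : ℝ, 0 < C ∧ ∀ᶠ t in atTop,
    Summable (fun n : ℕ => vw n * (1 / (1 + (t - lg n) ^ 2))) ∧
      ∑' n : ℕ, vw n * (1 / (1 + (t - lg n) ^ 2)) ≤ C := by
  obtain ⟨S, hS, hlim⟩ := exists_fejer_limit one_pos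
  set M := ∫ v, fejer 1 v
  have hM : 0 < M := integral_fejer_one_pos
  have h1 : ∀ᶠ t in atTop, S t ≤ M + 1 := hlim.eventually_le_const (by linarith)
  have h2 : ∀ᶠ t in atTop, S (t + Real.pi) ≤ M + 1 :=
    (tendsto_atTop_add_const_right _ Real.pi tendsto_id).eventually h1
  refine ⟨21 * (M + 1), by linarith, ?_⟩
  filter_upwards [h1, h2] with t ht1 ht2
  have hle : ∀ n : ℕ, vw n * (1 / (1 + (t - lg n) ^ 2)) ≤
      vw n * fejer 1 (t - lg n) + 20 * (vw n * fejer 1 (t + Real.pi - lg n)) := by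
    intro n
    have h := cauchy_le_fejer (t - lg n)
    have hp : 0 ≤ 1 / (1 + (t - lg n) ^ 2) := by positivity
    have e : 4 / (1 + (t - lg n) ^ 2) = 4 * (1 / (1 + (t - lg n) ^ 2)) := by ring
    rw [e, show t - lg n + Real.pi = t + Real.pi - lg n by ring] at h
    have h' : 1 / (1 + (t - lg n) ^ 2) ≤ fejer 1 (t - lg n) + 20 * fejer 1 (t + Real.pi - lg n) := by
      linarith
    have := mul_le_mul_of_nonneg_left h' (vw_nonneg n)
    linarith
  have hs := (hS t).add ((hS (t + Real.pi)).mul_left 20)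
  have hsm : Summable (fun n : ℕ => vw n * (1 / (1 + (t - lg n) ^ 2))) :=
    Summable.of_nonneg_of_le (fun n => mul_nonneg (vw_nonneg n) (by positivity)) hle hs.summable
  refine ⟨hsm, (hasSum_le hle hsm.hasSum hs).trans ?_⟩
  linarith

lemma summable_nonprime : Summable fun n : ℕ => vw n - pw n := by
  have h := ArithmeticFunction.vonMangoldt.summable_residueClass_non_primes_div (0 : ZMod 1)
  refine h.congr fun n => ?_
  have e : ArithmeticFunction.vonMangoldt.residueClass (0 : ZMod 1) n =
      ArithmeticFunction.vonMangoldt n := by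
    rw [ArithmeticFunction.vonMangoldt.residueClass, Set.indicator_of_mem]
    exact Subsingleton.elim _ _
  rw [e]
  unfold vw pw lg
  split_ifs with hp
  · rw [ArithmeticFunction.vonMangoldt_apply_prime hp]; simp
  · simp

lemma pw_le_vw (n : ℕ) : pw n ≤ vw n := by
  unfold vw pw lg
  split_ifs with hp
  · rw [ArithmeticFunction.vonMangoldt_apply_prime hp]
  · exact vw_nonneg n

/-- Every logarithmic window of fixed width carries, far enough out, a fixed amount of prime
mass. This is the only information on the distribution of primes that is used. -/
theorem exists_window_mass {ε : ℝ} (hε : 0 < ε) : ∃ c : ℝ, 0 < c ∧ ∀ᶠ t in atTop,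
    c ≤ ∑ n ∈ win t ε, pw n := by
  classical
  obtain ⟨C, hC, hCt⟩ := exists_cauchy_bound
  set M := ∫ v, fejer 1 v
  have hM : 0 < M := integral_fejer_one_pos
  set D := 4 * (1 + 1 / ε ^ 2) with hD
  have hD0 : 0 < D := by positivity
  -- `l` is chosen so that the kernel's mass `l * M` exceeds what the tails can carry
  set l := (D * C + 2) / M with hl
  have hl0 : 0 < l := by positivity
  obtain ⟨S, hS, hlim⟩ := exists_fejer_limit hl0
  rw [integral_fejer hl0] at hlim
  have hlM : l * M = D * C + 2 := by rw [hl]; field_simp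
  change Tendsto S atTop (𝓝 (l * M)) at hlim
  rw [hlM] at hlim
  have h1 : ∀ᶠ t in atTop, D * C + 1 ≤ S t := hlim.eventually_const_le (by linarith)
  set c := 1 / (2 * l ^ 2) with hc
  have hc0 : 0 < c := by positivity
  -- the contribution of proper prime powers is a tail of a convergent series
  have h2 : ∀ᶠ t : ℝ in atTop, ∀ F : Finset ℕ, (∀ n ∈ F, t - ε ≤ lg n) →
      ∑ n ∈ F, (vw n - pw n) ≤ c := by
    obtain ⟨s, hs⟩ := (summable_iff_vanishing_norm.1 summable_nonprime) c hc0
    have : ∀ᶠ t : ℝ in atTop, ∀ n ∈ s, lg n < t - ε := by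
      rw [Filter.eventually_all_finset]
      intro n _
      filter_upwards [eventually_gt_atTop (lg n + ε)] with t ht
      linarith
    filter_upwards [this] with t ht F hF
    have hd : Disjoint F s := by
      rw [Finset.disjoint_left]
      intro n hn hns
      linarith [ht n hns, hF n hn]
    exact (le_abs_self _).trans (hs F hd).le
  refine ⟨c, hc0, ?_⟩
  filter_upwards [hCt, h1, h2] with t ⟨hsm, hCt⟩ ht1 ht2
  set W : Finset ℕ := (Finset.range (⌊Real.exp (t + ε)⌋₊ + 1)).filter fun n => |lg n - t| ≤ ε
    with hW
  have memW : ∀ n, n ∈ W ↔ |lg n - t| ≤ ε := by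
    intro n
    rw [hW, Finset.mem_filter, Finset.mem_range]
    exact ⟨fun h => h.2, fun h => ⟨Nat.lt_succ_of_le (le_floor_of_lg h), h⟩⟩
  have hpt : ∀ n : ℕ, vw n * fejer l (t - lg n) ≤
      (if n ∈ W then l ^ 2 * vw n else 0) + D * (vw n * (1 / (1 + (t - lg n) ^ 2))) := by
    intro n
    have hv := vw_nonneg n
    by_cases hn : n ∈ W
    · rw [if_pos hn]
      have := mul_le_mul_of_nonneg_left (fejer_le l (t - lg n)) hv
      have h0 : 0 ≤ D * (vw n * (1 / (1 + (t - lg n) ^ 2))) := by positivity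
      nlinarith
    · rw [if_neg hn, zero_add]
      rw [memW, abs_sub_comm] at hn
      push Not at hn
      have hne : t - lg n ≠ 0 := by
        intro h; rw [h, abs_zero] at hn; linarith
      have hsq : ε ^ 2 ≤ (t - lg n) ^ 2 := by
        rw [← sq_abs (t - lg n)]; gcongr
      have : 4 / (t - lg n) ^ 2 ≤ D * (1 / (1 + (t - lg n) ^ 2)) := by
        rw [hD, mul_one_div, div_le_div_iff₀ (by positivity) (by positivity)]
        have : 1 ≤ (1 / ε ^ 2) * (t - lg n) ^ 2 := by
          rw [one_div_mul_eq_div, le_div_iff₀ (by positivity)]; linarith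
        nlinarith
      calc _ ≤ vw n * (D * (1 / (1 + (t - lg n) ^ 2))) :=
            mul_le_mul_of_nonneg_left ((fejer_le_div l _ hne).trans this) hv
        _ = _ := by ring
  have hfin : HasSum (fun n => if n ∈ W then l ^ 2 * vw n else 0) (∑ n ∈ W, l ^ 2 * vw n) := by
    have e : ∑ n ∈ W, l ^ 2 * vw n = ∑ n ∈ W, (if n ∈ W then l ^ 2 * vw n else 0) :=
      Finset.sum_congr rfl fun n hn => by rw [if_pos hn]
    rw [e]
    exact hasSum_sum_of_ne_finset_zero (fun n hn => if_neg hn)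
  have htot := hasSum_le hpt (hS t) (hfin.add (hsm.hasSum.mul_left D))
  rw [← Finset.mul_sum] at htot
  have hDC : D * ∑' n : ℕ, vw n * (1 / (1 + (t - lg n) ^ 2)) ≤ D * C :=
    mul_le_mul_of_nonneg_left hCt hD0.le
  have hmass : 1 ≤ l ^ 2 * ∑ n ∈ W, vw n := by linarith
  have hmass' : 2 * c ≤ ∑ n ∈ W, vw n := by
    rw [hc]
    rw [show 2 * (1 / (2 * l ^ 2)) = 1 / l ^ 2 by field_simp, div_le_iff₀ (by positivity)]
    linarith
  have hnp := ht2 W (fun n hn => by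
    rw [memW, abs_le] at hn; linarith [hn.1])
  rw [Finset.sum_sub_distrib] at hnp
  have heq : ∑ n ∈ win t ε, pw n = ∑ n ∈ W, pw n := by
    apply Finset.sum_subset
    · intro n hn
      rw [mem_win] at hn
      exact (memW n).2 hn.2
    · intro n hn hn2
      rw [mem_win] at hn2
      rw [memW] at hn
      have : ¬ n.Prime := fun h => hn2 ⟨h, hn⟩
      simp [pw, this]
  rw [heq]
  linarith

/-! ### Parametric integrals and boundary uniqueness -/

/-- Holomorphy of a parametric integral under an integrable bound. -/
lemma differentiableOn_integral {X : Type*} [MeasurableSpace X] {ν : Measure X}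
    {f : X → ℂ → ℂ} {U : Set ℂ} (hU : IsOpen U)
    (hm : ∀ w ∈ U, AEStronglyMeasurable (fun x => f x w) ν)
    (hd : ∀ᵐ x ∂ν, DifferentiableOn ℂ (f x) U) {g : X → ℝ} (hg : Integrable g ν)
    (hb : ∀ᵐ x ∂ν, ∀ w ∈ U, ‖f x w‖ ≤ g x) :
    DifferentiableOn ℂ (fun w => ∫ x, f x w ∂ν) U := by
  intro w₀ hw₀
  apply DifferentiableAt.differentiableWithinAt
  obtain ⟨r, hr, hball⟩ := Metric.isOpen_iff.1 hU w₀ hw₀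
  have hr2 : 0 < r / 2 := by positivity
  have hsub : ∀ x ∈ Metric.ball w₀ (r / 2), Metric.closedBall x (r / 4) ⊆ U := by
    intro x hx y hy
    apply hball
    rw [Metric.mem_ball] at *
    rw [Metric.mem_closedBall] at hy
    have := dist_triangle y x w₀
    linarith
  have hda : ∀ᵐ a ∂ν, ∀ x ∈ Metric.ball w₀ (r / 2), HasDerivAt (f a) (deriv (f a) x) x := by
    filter_upwards [hd] with a ha x hx
    have hx' : x ∈ U := hsub x hx (Metric.mem_closedBall_self (by positivity))
    exact ((ha x hx').differentiableAt (hU.mem_nhds hx')).hasDerivAt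
  refine (hasDerivAt_integral_of_dominated_loc_of_deriv_le (μ := ν) (F := fun w x => f x w)
    (F' := fun w x => deriv (f x) w) (bound := fun x => g x / (r / 4))
    (Metric.ball_mem_nhds w₀ hr2) ?_ ?_ ?_ ?_ (hg.div_const _) hda).2.differentiableAt
  · filter_upwards [hU.mem_nhds hw₀] with w hw using hm w hw
  · refine hg.mono' (hm w₀ hw₀) ?_
    filter_upwards [hb] with x hx using hx w₀ hw₀
  -- the derivative is a limit of difference quotients along a sequence
  · have hseq : Tendsto (fun n : ℕ => w₀ + (((r / 2) / (n + 1) : ℝ) : ℂ)) atTop (𝓝[≠] w₀) := by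
      refine tendsto_nhdsWithin_iff.2 ⟨?_, ?_⟩
      · have : Tendsto (fun n : ℕ => (r / 2) / ((n : ℝ) + 1)) atTop (𝓝 0) :=
          tendsto_const_nhds.div_atTop
            (tendsto_atTop_add_const_right _ _ tendsto_natCast_atTop_atTop)
        have h2 := (Complex.continuous_ofReal.tendsto 0).comp this
        simpa using h2.const_add w₀
      · refine Eventually.of_forall fun n => ?_
        simp only [mem_compl_iff, mem_singleton_iff, add_eq_left, ofReal_eq_zero]
        positivity
    have hin : ∀ n : ℕ, w₀ + (((r / 2) / (n + 1) : ℝ) : ℂ) ∈ U := by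
      intro n
      apply hball
      rw [Metric.mem_ball, dist_eq_norm, add_sub_cancel_left, Complex.norm_of_nonneg (by positivity)]
      rw [div_lt_iff₀ (by positivity)]
      have : (0 : ℝ) ≤ n := n.cast_nonneg
      nlinarith
    refine aestronglyMeasurable_of_tendsto_ae (u := atTop) (f := fun (n : ℕ) x =>
      slope (f x) w₀ (w₀ + (((r / 2) / (n + 1) : ℝ) : ℂ))) (fun n => ?_) ?_
    · simp only [slope_def_field, div_eq_mul_inv]
      exact ((hm _ (hin n)).sub (hm _ hw₀)).mul_const _
    · filter_upwards [hda] with a ha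
      exact (hasDerivAt_iff_tendsto_slope.1 (ha w₀ (Metric.mem_ball_self hr2))).comp hseq
  · filter_upwards [hd, hb] with a ha hba x hx
    have hs := hsub x hx
    apply Complex.norm_deriv_le_of_forall_mem_sphere_norm_le (by positivity)
    · refine DifferentiableOn.diffContOnCl ?_
      rw [closure_ball _ (by positivity)]
      exact ha.mono hs
    · intro z hz
      exact hba z (hs (Metric.sphere_subset_closedBall hz))

/-- A function continuous on a closed square, holomorphic inside and zero on the left side
vanishes at the centre: the product of its four rotations is zero on the whole boundary. -/
lemma square_centre {f : ℂ → ℂ} {c : ℂ} {a : ℝ} (ha : 0 < a) (hca : c.re = a)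
    (hc : ContinuousOn f {z | 0 ≤ z.re ∧ z.re ≤ 2 * a ∧ |z.im - c.im| ≤ a})
    (hd : DifferentiableOn ℂ f {z | 0 < z.re ∧ z.re < 2 * a ∧ |z.im - c.im| < a})
    (h0 : ∀ z : ℂ, z.re = 0 → |z.im - c.im| ≤ a → f z = 0) : f c = 0 := by
  set U : Set ℂ := {v | (-a < v.re ∧ v.re < a) ∧ (-a < v.im ∧ v.im < a)} with hU
  set K : Set ℂ := {v | (-a ≤ v.re ∧ v.re ≤ a) ∧ (-a ≤ v.im ∧ v.im ≤ a)} with hK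
  have hUo : IsOpen U :=
    ((isOpen_lt continuous_const continuous_re).inter (isOpen_lt continuous_re continuous_const)).inter
    ((isOpen_lt continuous_const continuous_im).inter (isOpen_lt continuous_im continuous_const))
  have hKc : IsClosed K :=
    ((isClosed_le continuous_const continuous_re).inter
      (isClosed_le continuous_re continuous_const)).inter
    ((isClosed_le continuous_const continuous_im).inter
      (isClosed_le continuous_im continuous_const))
  have hUK : closure U ⊆ K := closure_minimal
    (fun v hv => ⟨⟨hv.1.1.le, hv.1.2.le⟩, ⟨hv.2.1.le, hv.2.2.le⟩⟩) hKc
  set g : ℂ → ℂ := fun v => f (c + v) * f (c - v) * (f (c + I * v) * f (c - I * v)) with hg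
  have hb : Bornology.IsBounded U := by
    refine (Metric.isBounded_closedBall (x := (0 : ℂ)) (r := a + a)).subset fun v hv => ?_
    rw [mem_closedBall_zero_iff]
    refine (Complex.norm_le_abs_re_add_abs_im v).trans (add_le_add ?_ ?_)
    · exact abs_le.2 ⟨hv.1.1.le, hv.1.2.le⟩
    · exact abs_le.2 ⟨hv.2.1.le, hv.2.2.le⟩
  have hdc : DiffContOnCl ℂ g U := by
    refine ⟨?_, ?_⟩
    · refine DifferentiableOn.mul (DifferentiableOn.mul ?_ ?_) (DifferentiableOn.mul ?_ ?_) <;>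
      · refine hd.comp (by fun_prop) fun v hv => ?_
        obtain ⟨⟨h1, h2⟩, h3, h4⟩ := hv
        simp only [mem_ofPred_eq, add_re, sub_re, add_im, sub_im, mul_re, mul_im, I_re, I_im, hca,
          abs_lt]
        refine ⟨?_, ?_, ?_, ?_⟩ <;> linarith
    · refine ContinuousOn.mono ?_ hUK
      refine ContinuousOn.mul (ContinuousOn.mul ?_ ?_) (ContinuousOn.mul ?_ ?_) <;>
      · refine hc.comp (by fun_prop) fun v hv => ?_
        obtain ⟨⟨h1, h2⟩, h3, h4⟩ := hv
        simp only [mem_ofPred_eq, add_re, sub_re, add_im, sub_im, mul_re, mul_im, I_re, I_im, hca,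
          abs_le]
        refine ⟨?_, ?_, ?_, ?_⟩ <;> linarith
  have hfr : ∀ v ∈ frontier U, ‖g v‖ ≤ 0 := by
    intro v hv
    rw [hUo.frontier_eq] at hv
    obtain ⟨⟨h1, h2⟩, h3, h4⟩ := hUK hv.1
    have hn := hv.2
    have hz : ∀ w : ℂ, w.re = 0 → -a ≤ w.im - c.im → w.im - c.im ≤ a → f w = 0 :=
      fun w hw hw1 hw2 => h0 w hw (abs_le.2 ⟨hw1, hw2⟩)
    suffices g v = 0 by rw [this, norm_zero]
    simp only [hg, mul_eq_zero]
    have : v.re = -a ∨ v.re = a ∨ v.im = a ∨ v.im = -a := by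
      by_contra hcon
      push Not at hcon
      obtain ⟨c1, c2, c3, c4⟩ := hcon
      exact hn ⟨⟨lt_of_le_of_ne h1 (Ne.symm c1), lt_of_le_of_ne h2 c2⟩,
        ⟨lt_of_le_of_ne h3 (Ne.symm c4), lt_of_le_of_ne h4 c3⟩⟩
    rcases this with h | h | h | h
    · refine Or.inl (Or.inl (hz _ ?_ ?_ ?_)) <;> simp [hca] <;> linarith
    · refine Or.inl (Or.inr (hz _ ?_ ?_ ?_)) <;> simp [hca] <;> linarith
    · refine Or.inr (Or.inl (hz _ ?_ ?_ ?_)) <;> simp [hca] <;> linarith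
    · refine Or.inr (Or.inr (hz _ ?_ ?_ ?_)) <;> simp [hca] <;> linarith
  have h00 : (0 : ℂ) ∈ closure U := subset_closure (by simp [hU, ha])
  have := Complex.norm_le_of_forall_mem_frontier_norm_le hb hdc hfr h00
  have hg0 : g 0 = 0 := by simpa using this
  simpa [hg] using hg0

/-- Uniqueness for holomorphic functions on a half strip with zero boundary values on the
short side. -/
lemma eq_zero_of_boundary {D : ℂ → ℂ} {K : ℝ} (hK : 0 < K)
    (hc : ContinuousOn D {z | 0 ≤ z.re ∧ |z.im| < K})
    (hd : DifferentiableOn ℂ D {z | 0 < z.re ∧ |z.im| < K})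
    (h0 : ∀ z : ℂ, z.re = 0 → |z.im| < K → D z = 0) :
    ∀ z : ℂ, 0 < z.re → |z.im| < K → D z = 0 := by
  set V : Set ℂ := {z | 0 < z.re ∧ |z.im| < K}
  have hVo : IsOpen V := (isOpen_lt continuous_const continuous_re).inter
    (isOpen_lt continuous_im.abs continuous_const)
  have hVc : IsPreconnected V := by
    apply Convex.isPreconnected
    intro x hx y hy s t hs ht hst
    obtain ⟨hx1, hx2⟩ := hx
    obtain ⟨hy1, hy2⟩ := hy
    rw [abs_lt] at hx2 hy2
    have ht' : t = 1 - s := by linarith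
    refine ⟨?_, ?_⟩
    · simp only [add_re, real_smul, mul_re, ofReal_re, ofReal_im, zero_mul, sub_zero]
      rcases hs.eq_or_lt with rfl | hs
      · simp at ht'; subst ht'; simpa using hy1
      · have := mul_pos hs hx1
        have := mul_nonneg ht hy1.le
        linarith
    · simp only [add_im, real_smul, mul_im, ofReal_re, ofReal_im, zero_mul, add_zero]
      rw [abs_lt]
      rcases hs.eq_or_lt with rfl | hs
      · simp at ht'; subst ht'; simpa using hy2
      · subst ht'
        constructor <;> nlinarith
  have hA : AnalyticOnNhd ℂ D V := hd.analyticOnNhd hVo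
  have hp : ((K / 4 : ℝ) : ℂ) ∈ V := by
    refine ⟨by rw [ofReal_re]; positivity, by rw [ofReal_im, abs_zero]; exact hK⟩
  have hev : D =ᶠ[𝓝 ((K / 4 : ℝ) : ℂ)] 0 := by
    have hO : IsOpen {z : ℂ | (0 < z.re ∧ z.re < K / 2) ∧ |z.im| < K / 2} :=
      ((isOpen_lt continuous_const continuous_re).inter
        (isOpen_lt continuous_re continuous_const)).inter
      (isOpen_lt continuous_im.abs continuous_const)
    have hmem : ((K / 4 : ℝ) : ℂ) ∈ {z : ℂ | (0 < z.re ∧ z.re < K / 2) ∧ |z.im| < K / 2} := by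
      refine ⟨⟨?_, ?_⟩, ?_⟩
      · rw [ofReal_re]; positivity
      · rw [ofReal_re]; linarith
      · rw [ofReal_im, abs_zero]; positivity
    filter_upwards [hO.mem_nhds hmem] with c hcc
    obtain ⟨⟨c1, c2⟩, c3⟩ := hcc
    have hin : ∀ z : ℂ, |z.im - c.im| ≤ c.re → |z.im| < K := by
      intro z hz
      have := abs_add_le (z.im - c.im) c.im
      rw [sub_add_cancel] at this
      linarith
    refine square_centre c1 rfl (hc.mono fun z hz => ⟨hz.1, hin z hz.2.2⟩)
      (hd.mono fun z hz => ⟨hz.1, hin z hz.2.2.le⟩) fun z hz hz2 => h0 z hz (hin z hz2)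
  intro z hz1 hz2
  exact hA.eqOn_zero_of_preconnected_of_eventuallyEq_zero hVc hp hev ⟨hz1, hz2⟩

/-! ### The interpolation kernel -/

section

open scoped FourierTransform

/-- The interpolation kernel: its Fourier transform is a trapezoid equal to one on
`[-3π/4, 3π/4]` and supported in `[-5π/4, 5π/4]`. -/
noncomputable def phi (t : ℝ) : ℝ :=
  (fejer (5 * Real.pi / 4) t - fejer (3 * Real.pi / 4) t) / Real.pi ^ 2

lemma phi_neg (t : ℝ) : phi (-t) = phi t := by simp [phi, fejer_neg]

lemma continuous_phi : Continuous phi := by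
  have h1 := continuous_fejer (5 * Real.pi / 4)
  have h2 := continuous_fejer (3 * Real.pi / 4)
  unfold phi
  fun_prop

lemma phi_zero : phi 0 = 1 := by
  have := Real.pi_pos.ne'
  simp only [phi, fejer_zero]
  field_simp
  norm_num

lemma phi_mul_sq (t : ℝ) : phi t * t ^ 2 =
    2 / Real.pi ^ 2 * (Real.cos (3 * Real.pi / 4 * t) - Real.cos (5 * Real.pi / 4 * t)) := by
  have h1 := fejer_mul_sq' (5 * Real.pi / 4) t
  have h2 := fejer_mul_sq' (3 * Real.pi / 4) t
  unfold phi
  linear_combination (h1 - h2) / Real.pi ^ 2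

lemma abs_phi_le (t : ℝ) : |phi t| ≤ 2 / (1 + t ^ 2) := by
  have hpi := Real.pi_pos
  have h3 := Real.pi_gt_d2
  have a1 := fejer_bound (5 * Real.pi / 4) t
  have a2 := fejer_bound (3 * Real.pi / 4) t
  have n1 := fejer_nonneg (5 * Real.pi / 4) t
  have n2 := fejer_nonneg (3 * Real.pi / 4) t
  have hp : 0 < 1 + t ^ 2 := by positivity
  rw [le_div_iff₀ hp] at a1 a2
  unfold phi
  rw [abs_div, abs_of_pos (show (0 : ℝ) < Real.pi ^ 2 by positivity),
    div_le_div_iff₀ (by positivity) hp]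
  have : |fejer (5 * Real.pi / 4) t - fejer (3 * Real.pi / 4) t| * (1 + t ^ 2) =
      |fejer (5 * Real.pi / 4) t * (1 + t ^ 2) - fejer (3 * Real.pi / 4) t * (1 + t ^ 2)| := by
    rw [← sub_mul, abs_mul, abs_of_pos hp]
  rw [this, abs_le]
  have m1 := mul_nonneg n1 hp.le
  have m2 := mul_nonneg n2 hp.le
  constructor <;> nlinarith

lemma summable_int_inv (u : ℝ) : Summable fun n : ℤ => 1 / (1 + (u + n) ^ 2) := by
  have h0 : Summable fun n : ℤ => 1 / ((n : ℝ) ^ 2) + (if n = 0 then (1 : ℝ) else 0) :=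
    (Real.summable_one_div_int_pow.2 (by norm_num)).add
      (summable_of_hasFiniteSupport ((Set.finite_singleton (0 : ℤ)).subset (fun n hn => by
        by_contra h; simp at h; simp [h] at hn)))
  have h1 := h0.mul_left (2 * (1 + u ^ 2))
  refine Summable.of_nonneg_of_le (fun n => by positivity) (fun n => ?_) h1
  have e : 1 / (1 + (n : ℝ) ^ 2) ≤ 1 / ((n : ℝ) ^ 2) + (if n = 0 then (1 : ℝ) else 0) := by
    by_cases hn : n = 0
    · simp [hn]
    · have : (n : ℝ) ≠ 0 := by exact_mod_cast hn
      simp only [hn, if_false, add_zero]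
      apply one_div_le_one_div_of_le (by positivity)
      linarith
  refine le_trans ?_ (mul_le_mul_of_nonneg_left e (by positivity))
  rw [mul_one_div, div_le_div_iff₀ (by positivity) (by positivity)]
  nlinarith [sq_nonneg (u + n + u), sq_nonneg (u * (u + n))]

/-- Sampling on the whole lattice: Poisson summation for the trapezoid. -/
lemma tsum_phi_int (u y : ℝ) (hy : |y| ≤ 3 * Real.pi / 4) :
    HasSum (fun n : ℤ => (phi (u + n) : ℂ) * cexp (I * y * n)) (cexp (-(I * y * u))) := by
  have hpi := Real.pi_pos
  set κ : ℝ → ℝ := fun y => 2 / Real.pi * (tri (5 * Real.pi / 4) y - tri (3 * Real.pi / 4) y)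
    with hκ
  have hκc : Continuous κ := by
    have h1 := continuous_tri (5 * Real.pi / 4)
    have h2 := continuous_tri (3 * Real.pi / 4)
    fun_prop
  have hκ1 : ∀ y, |y| ≤ 3 * Real.pi / 4 → κ y = 1 := by
    intro y hy
    simp only [hκ]
    rw [tri_of_ge hy, tri_of_ge (by linarith)]
    field_simp
    ring
  have hκ0 : ∀ y, 5 * Real.pi / 4 ≤ |y| → κ y = 0 := by
    intro y hy
    simp only [hκ]
    rw [tri_of_le hy, tri_of_le (by linarith)]
    simp
  set f : ℝ → ℂ := fun x => (κ (2 * Real.pi * x) : ℂ) * cexp (-(I * (2 * Real.pi * x) * u)) with hf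
  have hfc : Continuous f := by fun_prop
  have hf0 : ∀ x : ℝ, 5 / 8 ≤ |x| → f x = 0 := by
    intro x hx
    simp only [hf]
    rw [hκ0 _ (by rw [abs_mul, abs_of_pos (by positivity : 0 < 2 * Real.pi)]; nlinarith)]
    simp
  have hF : ∀ n : ℤ, 𝓕 f (n : ℝ) = (phi (u + n) : ℂ) := by
    intro n
    rw [Real.fourier_real_eq_integral_exp_smul]
    have e : ∀ v : ℝ, cexp (((-2 * Real.pi * v * (n : ℝ) : ℝ) : ℂ) * I) • f v =
        (fun y : ℝ => (κ y : ℂ) * cexp (I * y * ((-(u + n) : ℝ) : ℂ))) (2 * Real.pi * v) := by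
      intro v
      simp only [hf, smul_eq_mul]
      rw [mul_left_comm, ← Complex.exp_add]
      congr 2
      push_cast
      ring
    simp only [e]
    rw [Measure.integral_comp_mul_left (fun y : ℝ => (κ y : ℂ) * cexp (I * y * ((-(u + n) : ℝ) : ℂ)))]
    have e2 : ∀ y : ℝ, (κ y : ℂ) * cexp (I * y * ((-(u + n) : ℝ) : ℂ)) =
        (2 / Real.pi : ℂ) * ((tri (5 * Real.pi / 4) y : ℂ) * cexp (I * y * ((-(u + n) : ℝ) : ℂ)) -
        (tri (3 * Real.pi / 4) y : ℂ) * cexp (I * y * ((-(u + n) : ℝ) : ℂ))) := by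
      intro y; simp only [hκ]; push_cast; ring
    have hIntg : ∀ α : ℝ, Integrable
        (fun y : ℝ => (tri α y : ℂ) * cexp (I * y * ((-(u + n) : ℝ) : ℂ))) := by
      intro α
      have hc := continuous_tri α
      refine Continuous.integrable_of_hasCompactSupport (by fun_prop) ?_
      exact ((hasCompactSupport_tri α).comp_left (g := fun x : ℝ => (x : ℂ)) (by simp)).mul_right
    simp only [e2]
    rw [integral_const_mul, integral_sub (hIntg _) (hIntg _), integral_tri _ (by positivity),
      integral_tri _ (by positivity), abs_of_pos (by positivity), fejer_neg, fejer_neg]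
    simp only [phi, real_smul]
    push_cast
    have : (Real.pi : ℂ) ≠ 0 := by exact_mod_cast hpi.ne'
    field_simp
  have hsumm : Summable fun n : ℤ => phi (u + n) :=
    Summable.of_norm_bounded (g := fun n : ℤ => 2 * (1 / (1 + (u + n) ^ 2)))
      ((summable_int_inv u).mul_left 2) fun n => by
        rw [Real.norm_eq_abs, mul_one_div]; exact abs_phi_le _
  have hsummF : Summable fun n : ℤ => 𝓕 f (n : ℝ) := by
    simp only [hF]
    exact_mod_cast hsumm
  have hO : f =O[cocompact ℝ] fun x : ℝ => |x| ^ (-2 : ℝ) := by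
    have : f =ᶠ[cocompact ℝ] fun _ => 0 := by
      have hev : ∀ᶠ x : ℝ in cocompact ℝ, 5 / 8 ≤ ‖x‖ :=
        (tendsto_norm_cocompact_atTop (E := ℝ)).eventually_ge_atTop _
      filter_upwards [hev] with x hx
      exact hf0 x hx
    exact this.trans_isBigO (Asymptotics.isBigO_zero _ _)
  have hP := Real.tsum_eq_tsum_fourier_of_rpow_decay_of_summable hfc (by norm_num) hO hsummF
    (y / (2 * Real.pi))
  simp only [hF] at hP
  have hyx : |y / (2 * Real.pi)| ≤ 3 / 8 := by
    rw [abs_div, abs_of_pos (show 0 < 2 * Real.pi by positivity), div_le_iff₀ (by positivity)]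
    linarith
  have hL : ∑' n : ℤ, f (y / (2 * Real.pi) + n) = cexp (-(I * y * u)) := by
    rw [tsum_eq_single 0]
    · simp only [Int.cast_zero, add_zero, hf]
      rw [hκ1]
      · push_cast
        have : (Real.pi : ℂ) ≠ 0 := by exact_mod_cast hpi.ne'
        rw [one_mul]
        congr 1
        field_simp
      · rw [mul_div_cancel₀ y (by positivity)]; exact hy
    · intro n hn
      apply hf0
      have h1 : (1 : ℝ) ≤ |(n : ℝ)| := by
        rw [← Int.cast_abs]; exact_mod_cast Int.one_le_abs hn
      have h2 := abs_sub_abs_le_abs_sub (n : ℝ) (-(y / (2 * Real.pi)))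
      rw [abs_neg, sub_neg_eq_add, add_comm] at h2
      rw [add_comm] at h2 ⊢
      linarith
  rw [hL] at hP
  have e3 : ∀ n : ℤ, (phi (u + n) : ℂ) * fourier n ((y / (2 * Real.pi) : ℝ) : UnitAddCircle) =
      (phi (u + n) : ℂ) * cexp (I * y * n) := by
    intro n
    rw [fourier_coe_apply]
    congr 2
    have : (Real.pi : ℂ) ≠ 0 := by exact_mod_cast hpi.ne'
    push_cast
    field_simp
  simp only [e3] at hP
  rw [hP]
  apply Summable.hasSum
  refine Summable.of_norm_bounded (g := fun n : ℤ => |phi (u + n)|) hsumm.abs fun n => ?_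
  rw [norm_mul, Complex.norm_real, Complex.norm_exp]
  simp

end

/-! ### One-sided sampling of exponentials -/

/-- The integrand of `J`. -/
noncomputable def jker (u : ℝ) (w : ℂ) (l : ℝ) : ℂ :=
  ((l * Real.exp (-(u * l)) : ℝ) : ℂ) / (cexp (l - w) - 1)

/-- For `Re w ≤ 0` this is `∑_{m ≥ 1} e^{wm} / (u + m)^2`; the integral continues that sum
to all `w` with `cos (Im w) ≤ 0`. -/
noncomputable def J (u : ℝ) (w : ℂ) : ℂ := ∫ l in Ioi (0 : ℝ), jker u w l

lemma one_le_norm_exp_sub_one {l : ℝ} {w : ℂ} (hw : Real.cos w.im ≤ 0) :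
    1 ≤ ‖cexp (l - w) - 1‖ := by
  have h : |(cexp (l - w) - 1).re| ≤ ‖cexp (l - w) - 1‖ := Complex.abs_re_le_norm _
  refine le_trans ?_ h
  have : (cexp (l - w) - 1).re ≤ -1 := by
    simp only [sub_re, exp_re, sub_im, ofReal_im, one_re, ofReal_re, zero_sub, Real.cos_neg]
    have := mul_nonpos_of_nonneg_of_nonpos (Real.exp_pos (l - w.re)).le hw
    linarith
  rw [abs_of_nonpos (by linarith)]
  linarith

lemma integral_mul_exp {u : ℝ} (hu : 0 < u) :
    ∫ l in Ioi (0 : ℝ), l * Real.exp (-(u * l)) = 1 / u ^ 2 := by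
  have h := Real.integral_rpow_mul_exp_neg_mul_Ioi (a := 2) (r := u) (by norm_num) hu
  have e : Real.Gamma 2 = 1 := Real.Gamma_two
  rw [e, mul_one] at h
  norm_num at h
  rw [h]
  simp

lemma integrable_mul_exp {u : ℝ} (hu : 0 < u) :
    IntegrableOn (fun l : ℝ => l * Real.exp (-(u * l))) (Ioi 0) := by
  refine not_imp_comm.1 (fun h => integral_undef h) ?_
  rw [integral_mul_exp hu]
  positivity

lemma norm_jker_le {u : ℝ} {w : ℂ} (hw : Real.cos w.im ≤ 0) {l : ℝ} (hl : 0 < l) :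
    ‖jker u w l‖ ≤ l * Real.exp (-(u * l)) := by
  unfold jker
  rw [norm_div, Complex.norm_real, Real.norm_of_nonneg (by positivity)]
  exact div_le_self (by positivity) (one_le_norm_exp_sub_one hw)

lemma measurable_jker (w : ℂ) : Measurable (fun x : ℝ × ℝ => jker x.1 w x.2) := by
  unfold jker
  fun_prop

lemma norm_J_le {u : ℝ} (hu : 0 < u) {w : ℂ} (hw : Real.cos w.im ≤ 0) :
    ‖J u w‖ ≤ 1 / u ^ 2 := by
  rw [← integral_mul_exp hu]
  refine norm_integral_le_of_norm_le (integrable_mul_exp hu) ?_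
  filter_upwards [ae_restrict_mem measurableSet_Ioi] with l hl
  exact norm_jker_le hw hl

lemma measurable_J (w : ℂ) : Measurable (fun u => J u w) := by
  have := (measurable_jker w).stronglyMeasurable.integral_prod_right'
    (ν := volume.restrict (Ioi (0 : ℝ)))
  exact this.measurable

lemma differentiableOn_J {u : ℝ} (hu : 0 < u) :
    DifferentiableOn ℂ (J u) {w : ℂ | Real.cos w.im < 0} := by
  refine differentiableOn_integral (f := fun l w => jker u w l) ?_ ?_ ?_ (integrable_mul_exp hu) ?_
  · exact isOpen_lt (by fun_prop) continuous_const
  · intro w _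
    exact ((measurable_jker w).comp (measurable_const.prodMk measurable_id)).aestronglyMeasurable
  · refine Eventually.of_forall fun l w hw => ?_
    have h1 := one_le_norm_exp_sub_one (l := l) (w := w) (le_of_lt hw)
    have h2 : cexp (l - w) - 1 ≠ 0 := by
      intro h; rw [h] at h1; simp at h1; linarith
    have : DifferentiableAt ℂ (fun w => jker u w l) w := by
      unfold jker
      refine DifferentiableAt.div (by fun_prop) (by fun_prop) h2
    exact this.differentiableWithinAt
  · filter_upwards [ae_restrict_mem measurableSet_Ioi] with l hl w hw
    exact norm_jker_le (le_of_lt hw) hl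

lemma hasSum_J {u : ℝ} (hu : 0 < u) {w : ℂ} (hw : w.re = 0) :
    HasSum (fun m : ℕ => cexp (w * (m + 1)) / ((u : ℂ) + (m + 1)) ^ 2) (J u w) := by
  have hI : ∀ m : ℕ, 0 < u + (m + 1) := fun m => by positivity
  have hn : ∀ m : ℕ, ‖cexp (w * (m + 1))‖ = 1 := by
    intro m
    rw [Complex.norm_exp]
    simp [hw]
  set F : ℕ → ℝ → ℂ := fun m l => cexp (w * (m + 1)) *
    ((l * Real.exp (-((u + (m + 1)) * l)) : ℝ) : ℂ) with hF
  have hFi : ∀ m, ∫ l in Ioi (0 : ℝ), F m l = cexp (w * (m + 1)) / ((u : ℂ) + (m + 1)) ^ 2 := by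
    intro m
    simp only [hF]
    rw [integral_const_mul, integral_complex_ofReal, integral_mul_exp (hI m)]
    push_cast
    ring
  have h := hasSum_integral_of_summable_integral_norm (μ := volume.restrict (Ioi (0 : ℝ)))
    (F := F) ?_ ?_
  · simp only [hFi] at h
    have hJ : J u w = ∫ l in Ioi (0 : ℝ), ∑' m, F m l := ?_
    · rw [hJ]; exact h
    refine setIntegral_congr_fun measurableSet_Ioi fun l hl => ?_
    simp only [hF, jker]
    have hr : ‖cexp (w - l)‖ < 1 := by
      rw [Complex.norm_exp]
      simp only [sub_re, hw, ofReal_re, zero_sub, Real.exp_lt_one_iff]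
      have : 0 < l := hl
      linarith
    have hg := (hasSum_geometric_of_norm_lt_one hr).mul_left
      (((l * Real.exp (-(u * l)) : ℝ) : ℂ) * cexp (w - l))
    have e1 : ∀ m : ℕ, cexp (w * (m + 1)) * ((l * Real.exp (-((u + (m + 1)) * l)) : ℝ) : ℂ) =
        ((l * Real.exp (-(u * l)) : ℝ) : ℂ) * cexp (w - l) * cexp (w - l) ^ m := by
      intro m
      rw [mul_assoc, ← pow_succ', ← Complex.exp_nat_mul]
      push_cast
      rw [mul_left_comm, ← Complex.exp_add, mul_assoc, ← Complex.exp_add]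
      congr 2
      ring
    simp only [e1]
    rw [hg.tsum_eq]
    have h1 : (1 : ℂ) - cexp (w - l) ≠ 0 := by
      intro h0
      rw [← sub_eq_zero.1 h0] at hr
      simp at hr
    have e2 : cexp (l - w) = (cexp (w - l))⁻¹ := by rw [← Complex.exp_neg]; congr 1; ring
    have h3 := Complex.exp_ne_zero (w - l)
    rw [e2]
    have h4 : (cexp (w - l))⁻¹ - 1 ≠ 0 := by
      intro h0
      apply h1
      field_simp at h0
      simpa using h0
    rw [div_eq_iff h4]
    field_simp
  · intro m
    exact ((integrable_mul_exp (hI m)).ofReal).const_mul _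
  · have e : ∀ m, ∫ l in Ioi (0 : ℝ), ‖F m l‖ = 1 / (u + (m + 1)) ^ 2 := by
      intro m
      rw [← integral_mul_exp (hI m)]
      refine setIntegral_congr_fun measurableSet_Ioi fun l hl => ?_
      simp only [hF]
      have : (0 : ℝ) < l := hl
      rw [norm_mul, hn, one_mul, Complex.norm_real, Real.norm_of_nonneg (by positivity)]
    simp only [e]
    refine Summable.of_nonneg_of_le (fun m => by positivity) (fun m => ?_)
      ((summable_nat_add_iff 1).2 (Real.summable_one_div_nat_pow.2 (by norm_num : 1 < 2)))
    apply one_div_le_one_div_of_le (by positivity)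
    push_cast
    exact pow_le_pow_left₀ (by positivity) (by linarith) 2

/-- The analytic continuation in `ζ` of the sampling error
`e^{-ζu} - ∑_{n ≥ 0} φ(u - n) e^{-ζn}`. -/
noncomputable def R (u : ℝ) (ζ : ℂ) : ℂ :=
  1 / (Real.pi : ℂ) ^ 2 *
    (cexp (I * (3 * Real.pi / 4 : ℝ) * u) * J u (ζ + I * (3 * Real.pi / 4 : ℝ)) +
      cexp (-(I * (3 * Real.pi / 4 : ℝ) * u)) * J u (ζ - I * (3 * Real.pi / 4 : ℝ)) -
      (cexp (I * (5 * Real.pi / 4 : ℝ) * u) * J u (ζ + I * (5 * Real.pi / 4 : ℝ)) +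
      cexp (-(I * (5 * Real.pi / 4 : ℝ) * u)) * J u (ζ - I * (5 * Real.pi / 4 : ℝ))))

lemma cos_neg_aux {y : ℝ} (hy : |y| < Real.pi / 4) :
    Real.cos (y + 3 * Real.pi / 4) < 0 ∧ Real.cos (y - 3 * Real.pi / 4) < 0 ∧
    Real.cos (y + 5 * Real.pi / 4) < 0 ∧ Real.cos (y - 5 * Real.pi / 4) < 0 := by
  have hp := Real.pi_pos
  rw [abs_lt] at hy
  refine ⟨?_, ?_, ?_, ?_⟩
  · exact Real.cos_neg_of_pi_div_two_lt_of_lt (by linarith) (by linarith)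
  · rw [← Real.cos_neg]
    exact Real.cos_neg_of_pi_div_two_lt_of_lt (by linarith) (by linarith)
  · exact Real.cos_neg_of_pi_div_two_lt_of_lt (by linarith) (by linarith)
  · rw [← Real.cos_neg]
    exact Real.cos_neg_of_pi_div_two_lt_of_lt (by linarith) (by linarith)

lemma norm_exp_I_mul (a u : ℝ) : ‖cexp (I * a * u)‖ = 1 ∧ ‖cexp (-(I * a * u))‖ = 1 := by
  constructor <;> rw [Complex.norm_exp] <;> simp

lemma norm_R_le {u : ℝ} (hu : 0 < u) {ζ : ℂ} (hζ : |ζ.im| < Real.pi / 4) :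
    ‖R u ζ‖ ≤ 1 / u ^ 2 := by
  obtain ⟨c1, c2, c3, c4⟩ := cos_neg_aux hζ
  have j1 := norm_J_le hu (w := ζ + I * (3 * Real.pi / 4 : ℝ)) (by
    simpa only [add_im, mul_im, I_re, I_im, ofReal_re, ofReal_im, zero_mul, one_mul, zero_add]
      using c1.le)
  have j2 := norm_J_le hu (w := ζ - I * (3 * Real.pi / 4 : ℝ)) (by
    simpa only [sub_im, mul_im, I_re, I_im, ofReal_re, ofReal_im, zero_mul, one_mul, zero_add]
      using c2.le)
  have j3 := norm_J_le hu (w := ζ + I * (5 * Real.pi / 4 : ℝ)) (by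
    simpa only [add_im, mul_im, I_re, I_im, ofReal_re, ofReal_im, zero_mul, one_mul, zero_add]
      using c3.le)
  have j4 := norm_J_le hu (w := ζ - I * (5 * Real.pi / 4 : ℝ)) (by
    simpa only [sub_im, mul_im, I_re, I_im, ofReal_re, ofReal_im, zero_mul, one_mul, zero_add]
      using c4.le)
  unfold R
  have hp := Real.pi_gt_three
  rw [norm_mul, norm_div, norm_one, norm_pow, Complex.norm_real,
    Real.norm_of_nonneg Real.pi_pos.le]
  have hsum := (norm_sub_le
    (cexp (I * (3 * Real.pi / 4 : ℝ) * u) * J u (ζ + I * (3 * Real.pi / 4 : ℝ)) +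
      cexp (-(I * (3 * Real.pi / 4 : ℝ) * u)) * J u (ζ - I * (3 * Real.pi / 4 : ℝ)))
    (cexp (I * (5 * Real.pi / 4 : ℝ) * u) * J u (ζ + I * (5 * Real.pi / 4 : ℝ)) +
      cexp (-(I * (5 * Real.pi / 4 : ℝ) * u)) * J u (ζ - I * (5 * Real.pi / 4 : ℝ)))).trans
    (add_le_add (norm_add_le _ _) (norm_add_le _ _))
  rw [norm_mul, norm_mul, norm_mul, norm_mul, (norm_exp_I_mul _ _).1, (norm_exp_I_mul _ _).2,
    (norm_exp_I_mul _ _).1, (norm_exp_I_mul _ _).2] at hsum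
  have hb := hsum.trans (show _ ≤ 4 * (1 / u ^ 2) by linarith)
  calc _ ≤ 1 / Real.pi ^ 2 * (4 * (1 / u ^ 2)) := by gcongr
    _ = 4 / Real.pi ^ 2 * (1 / u ^ 2) := by ring
    _ ≤ 1 * (1 / u ^ 2) := by
      gcongr
      rw [div_le_one (by positivity)]
      nlinarith
    _ = _ := one_mul _

lemma measurable_R (ζ : ℂ) : Measurable (fun u => R u ζ) := by
  unfold R
  have := measurable_J
  fun_prop

lemma differentiableOn_R {u : ℝ} (hu : 0 < u) :
    DifferentiableOn ℂ (R u) {ζ : ℂ | |ζ.im| < Real.pi / 4} := by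
  have hJ := differentiableOn_J hu
  have key : ∀ a : ℝ, (∀ y : ℝ, |y| < Real.pi / 4 → Real.cos (y + a) < 0) →
      DifferentiableOn ℂ (fun ζ : ℂ => J u (ζ + I * a)) {ζ : ℂ | |ζ.im| < Real.pi / 4} := by
    intro a ha
    refine hJ.comp (by fun_prop) fun ζ hζ => ?_
    have := ha ζ.im hζ
    simpa using this
  have k1 := key (3 * Real.pi / 4) fun y hy => (cos_neg_aux hy).1
  have k2 := key (-(3 * Real.pi / 4)) fun y hy => by
    rw [← sub_eq_add_neg]; exact (cos_neg_aux hy).2.1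
  have k3 := key (5 * Real.pi / 4) fun y hy => (cos_neg_aux hy).2.2.1
  have k4 := key (-(5 * Real.pi / 4)) fun y hy => by
    rw [← sub_eq_add_neg]; exact (cos_neg_aux hy).2.2.2
  simp only [ofReal_neg, mul_neg, ← sub_eq_add_neg] at k2 k4
  unfold R
  exact (((k1.const_mul _).add (k2.const_mul _)).sub
    ((k3.const_mul _).add (k4.const_mul _))).const_mul _

lemma hasSum_R {u : ℝ} (hu : 0 < u) {ζ : ℂ} (hζ : ζ.re = 0) :
    HasSum (fun m : ℕ => (phi (u + (m + 1)) : ℂ) * cexp (ζ * (m + 1))) (R u ζ) := by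
  have h1 := (hasSum_J hu (w := ζ + I * (3 * Real.pi / 4 : ℝ)) (by simp [hζ])).mul_left
    (cexp (I * (3 * Real.pi / 4 : ℝ) * u))
  have h2 := (hasSum_J hu (w := ζ - I * (3 * Real.pi / 4 : ℝ)) (by simp [hζ])).mul_left
    (cexp (-(I * (3 * Real.pi / 4 : ℝ) * u)))
  have h3 := (hasSum_J hu (w := ζ + I * (5 * Real.pi / 4 : ℝ)) (by simp [hζ])).mul_left
    (cexp (I * (5 * Real.pi / 4 : ℝ) * u))
  have h4 := (hasSum_J hu (w := ζ - I * (5 * Real.pi / 4 : ℝ)) (by simp [hζ])).mul_left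
    (cexp (-(I * (5 * Real.pi / 4 : ℝ) * u)))
  have h := (((h1.add h2).sub (h3.add h4)).mul_left (1 / (Real.pi : ℂ) ^ 2))
  refine h.congr_fun ?_
  intro m
  have hp : (0 : ℝ) < u + (m + 1) := by positivity
  have hphi : phi (u + (m + 1)) = 2 / Real.pi ^ 2 *
      (Real.cos (3 * Real.pi / 4 * (u + (m + 1))) - Real.cos (5 * Real.pi / 4 * (u + (m + 1)))) /
      (u + (m + 1)) ^ 2 := by
    rw [eq_div_iff (by positivity)]; exact phi_mul_sq _
  have hcos : ∀ a x : ℝ, ((Real.cos (a * x) : ℝ) : ℂ) =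
      (cexp (I * a * x) + cexp (-(I * a * x))) / 2 := by
    intro a x
    rw [Complex.ofReal_cos, Complex.cos]
    push_cast
    congr 3 <;> ring_nf
  rw [hphi]
  rw [ofReal_div, ofReal_mul, ofReal_sub, hcos, hcos]
  have hpc : ((u : ℂ) + (m + 1)) ≠ 0 := by exact_mod_cast hp.ne'
  have hpi : (Real.pi : ℂ) ≠ 0 := by exact_mod_cast Real.pi_pos.ne'
  have e : ∀ a : ℝ, cexp (I * a * u) * (cexp ((ζ + I * a) * (m + 1)) / ((u : ℂ) + (m + 1)) ^ 2) =
      cexp (I * a * ((u + (m + 1) : ℝ) : ℂ)) * cexp (ζ * (m + 1)) / ((u : ℂ) + (m + 1)) ^ 2 := by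
    intro a
    rw [← mul_div_assoc, ← Complex.exp_add, ← Complex.exp_add]
    congr 2; push_cast; ring
  have e' : ∀ a : ℝ, cexp (-(I * a * u)) *
      (cexp ((ζ - I * a) * (m + 1)) / ((u : ℂ) + (m + 1)) ^ 2) =
      cexp (-(I * a * ((u + (m + 1) : ℝ) : ℂ))) * cexp (ζ * (m + 1)) /
        ((u : ℂ) + (m + 1)) ^ 2 := by
    intro a
    rw [← mul_div_assoc, ← Complex.exp_add, ← Complex.exp_add]
    congr 2; push_cast; ring
  rw [e, e', e, e']
  generalize cexp (I * (3 * Real.pi / 4 : ℝ) * ((u + (m + 1) : ℝ) : ℂ)) = A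
  generalize cexp (-(I * (3 * Real.pi / 4 : ℝ) * ((u + (m + 1) : ℝ) : ℂ))) = B
  generalize cexp (I * (5 * Real.pi / 4 : ℝ) * ((u + (m + 1) : ℝ) : ℂ)) = C
  generalize cexp (-(I * (5 * Real.pi / 4 : ℝ) * ((u + (m + 1) : ℝ) : ℂ))) = D
  push_cast
  field_simp

lemma summable_abs_phi (u : ℝ) : Summable fun n : ℤ => |phi (u + n)| :=
  Summable.of_nonneg_of_le (fun _ => abs_nonneg _) (fun n => by
    rw [mul_one_div]; exact abs_phi_le _) ((summable_int_inv u).mul_left 2)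

lemma summable_abs_phi_sub (u : ℝ) : Summable fun n : ℕ => |phi (u - n)| := by
  have h := (Equiv.neg ℤ).summable_iff.2 (summable_abs_phi u)
  have := h.comp_injective (Nat.cast_injective (R := ℤ))
  refine this.congr fun n => ?_
  simp [sub_eq_add_neg]

/-- One-sided sampling: on the half-lattice the exponential is reproduced up to `R`, which
is analytic across `Re ζ = 0`. -/
lemma hasSum_sampling {u : ℝ} (hu : 0 < u) {ζ : ℂ} (hre : 0 < ζ.re)
    (him : |ζ.im| < Real.pi / 4) :
    HasSum (fun n : ℕ => (phi (u - n) : ℂ) * cexp (-(ζ * n))) (cexp (-(ζ * u)) - R u ζ) := by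
  have hpi := Real.pi_pos
  have hbd : ∀ (n : ℕ) (z : ℂ), 0 ≤ z.re → ‖(phi (u - n) : ℂ) * cexp (-(z * n))‖ ≤ |phi (u - n)| := by
    intro n z hz
    rw [norm_mul, Complex.norm_real, Complex.norm_exp]
    have : Real.exp (-(z * n)).re ≤ 1 := by
      rw [Real.exp_le_one_iff]
      simp only [neg_re, mul_re, natCast_re, natCast_im, mul_zero, sub_zero]
      have : 0 ≤ z.re * n := by positivity
      linarith
    exact mul_le_of_le_one_right (norm_nonneg _) this
  have hs : ∀ z : ℂ, 0 ≤ z.re → Summable fun n : ℕ => (phi (u - n) : ℂ) * cexp (-(z * n)) :=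
    fun z hz => Summable.of_norm_bounded (summable_abs_phi_sub u) fun n => hbd n z hz
  have key := eq_zero_of_boundary (K := Real.pi / 4) (by positivity)
    (D := fun z => (∑' n : ℕ, (phi (u - n) : ℂ) * cexp (-(z * n))) - cexp (-(z * u)) + R u z)
    ?_ ?_ ?_ ζ hre him
  · have := (hs ζ hre.le).hasSum
    convert this using 1
    linear_combination -key
  · refine ContinuousOn.add (ContinuousOn.sub ?_ (by fun_prop)) ?_
    · refine continuousOn_tsum (u := fun n : ℕ => |phi (u - n)|) (fun n => by fun_prop)
        (summable_abs_phi_sub u) fun n z hz => hbd n z hz.1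
    · exact (differentiableOn_R hu).continuousOn.mono fun z hz => hz.2
  · refine DifferentiableOn.add (DifferentiableOn.sub ?_ (by fun_prop)) ?_
    · refine differentiableOn_tsum_of_summable_norm (u := fun n : ℕ => |phi (u - n)|)
        (summable_abs_phi_sub u) (fun n => by fun_prop) ?_ fun n z hz => hbd n z hz.1.le
      exact (isOpen_lt continuous_const Complex.continuous_re).inter
        (isOpen_lt (continuous_abs.comp Complex.continuous_im) continuous_const)
    · exact (differentiableOn_R hu).mono fun z hz => hz.2
  · intro z hz0 hzi
    have hz : z = I * (z.im : ℂ) := by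
      apply Complex.ext <;> simp [hz0]
    have hT := (Equiv.neg ℤ).hasSum_iff.2 (tsum_phi_int u z.im (by linarith))
    rw [← hz] at hT
    have hR := hasSum_R hu hz0
    have hN := (hs z hz0.ge).hasSum
    have hsplit := HasSum.of_nat_of_neg_add_one
      (f := (fun n : ℤ => (phi (u + n) : ℂ) * cexp (z * n)) ∘ (Equiv.neg ℤ))
      (m := ∑' n : ℕ, (phi (u - n) : ℂ) * cexp (-(z * n))) (m' := R u z) ?_ ?_
    · have := hT.unique hsplit
      linear_combination -this
    · refine hN.congr_fun fun n => ?_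
      simp [sub_eq_add_neg]
    · refine hR.congr_fun fun n => ?_
      simp

/-! ### Perturbed lattice values and matrix inversion -/

section

open scoped BoundedContinuousFunction

/-- At points close to an integer the kernel is close to its lattice values `δ_{j0}`, with a
summable error. -/
lemma exists_phi_near {η : ℝ} (hη : 0 < η) : ∃ ε : ℝ, 0 < ε ∧ ε ≤ 1 / 4 ∧ ∀ (j : ℤ) (τ : ℝ),
    |τ| ≤ ε → |(if j = 0 then (1 : ℝ) else 0) - phi (j + τ)| ≤ η / (1 + (j : ℝ) ^ 2) := by
  have hc : Tendsto phi (𝓝 0) (𝓝 1) := by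
    have := continuous_phi.tendsto 0
    rwa [phi_zero] at this
  obtain ⟨ε₁, h1, h2⟩ := Metric.tendsto_nhds_nhds.1 hc η hη
  refine ⟨min (1 / 4) (min (ε₁ / 2) (η / 16)), by positivity, min_le_left _ _, ?_⟩
  intro j τ hτ
  have t1 : |τ| ≤ 1 / 4 := hτ.trans (min_le_left _ _)
  have t2 : |τ| ≤ ε₁ / 2 := hτ.trans ((min_le_right _ _).trans (min_le_left _ _))
  have t3 : |τ| ≤ η / 16 := hτ.trans ((min_le_right _ _).trans (min_le_right _ _))
  by_cases hj : j = 0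
  · subst hj
    have := h2 (x := τ) (by rw [Real.dist_eq, sub_zero]; linarith)
    rw [Real.dist_eq] at this
    simp only [if_true, Int.cast_zero, zero_add]
    rw [abs_sub_comm]
    norm_num
    exact this.le
  · simp only [hj, if_false, zero_sub, abs_neg]
    set t : ℝ := j + τ with ht
    have hj1 : (1 : ℝ) ≤ |(j : ℝ)| := by
      rw [← Int.cast_abs]; exact_mod_cast Int.one_le_abs hj
    have hlip : ∀ x y : ℝ, |Real.cos x - Real.cos y| ≤ |x - y| := fun x y => by
      have := Real.abs_cos_sub_cos_le x y
      exact this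
    have hjj : Real.cos (3 * Real.pi / 4 * j) = Real.cos (5 * Real.pi / 4 * j) := by
      rw [← Real.cos_int_mul_two_pi_sub _ j]
      congr 1; ring
    have ha := hlip (3 * Real.pi / 4 * t) (3 * Real.pi / 4 * j)
    have hb := hlip (5 * Real.pi / 4 * j) (5 * Real.pi / 4 * t)
    have e1 : |3 * Real.pi / 4 * t - 3 * Real.pi / 4 * j| = 3 * Real.pi / 4 * |τ| := by
      rw [← mul_sub, abs_mul, abs_of_pos (by positivity), ht, add_sub_cancel_left]
    have e2 : |5 * Real.pi / 4 * j - 5 * Real.pi / 4 * t| = 5 * Real.pi / 4 * |τ| := by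
      rw [← mul_sub, abs_mul, abs_of_pos (by positivity), ht, sub_add_cancel_left, abs_neg]
    have hcc : |Real.cos (3 * Real.pi / 4 * t) - Real.cos (5 * Real.pi / 4 * t)| ≤
        2 * Real.pi * |τ| := by
      have := abs_add_le (Real.cos (3 * Real.pi / 4 * t) - Real.cos (3 * Real.pi / 4 * j))
        (Real.cos (5 * Real.pi / 4 * j) - Real.cos (5 * Real.pi / 4 * t))
      rw [hjj, sub_add_sub_cancel, ← hjj] at this
      rw [e1] at ha
      rw [e2] at hb
      rw [hjj] at ha
      rw [hjj] at this
      linarith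
    have hm := congrArg abs (phi_mul_sq t)
    rw [abs_mul, abs_mul, abs_of_nonneg (sq_nonneg t),
      abs_of_pos (show (0 : ℝ) < 2 / Real.pi ^ 2 by positivity)] at hm
    have hpi := Real.pi_gt_three
    have hm2 : |phi t| * t ^ 2 ≤ 2 * |τ| := by
      rw [hm]
      calc _ ≤ 2 / Real.pi ^ 2 * (2 * Real.pi * |τ|) := by gcongr
        _ = 4 / Real.pi * |τ| := by field_simp; ring
        _ ≤ 2 * |τ| := by
          gcongr
          rw [div_le_iff₀ (by positivity)]
          linarith
    have ht2 : (1 + (j : ℝ) ^ 2) / 8 ≤ t ^ 2 := by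
      have h5 : |(j : ℝ)| / 2 ≤ |t| := by
        have := abs_sub_abs_le_abs_sub (j : ℝ) (-τ)
        rw [abs_neg, sub_neg_eq_add] at this
        linarith
      rw [← sq_abs t, ← sq_abs (j : ℝ)]
      nlinarith [abs_nonneg (j : ℝ)]
    rw [le_div_iff₀ (by positivity)]
    nlinarith [abs_nonneg (phi t), mul_le_mul_of_nonneg_left ht2 (abs_nonneg (phi t))]

/-- Inversion of a matrix at distance at most `1/2` from the identity, on bounded sequences. -/
lemma exists_neumann {β : ℕ → ℕ → ℝ} (hs : ∀ m, Summable fun n => |β m n|)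
    (hβ : ∀ m, ∑' n, |β m n| ≤ 1 / 2) {a : ℕ → ℝ} {M : ℝ} (ha : ∀ m, |a m| ≤ M) :
    ∃ b : ℕ → ℝ, (∀ m, |b m| ≤ 2 * M) ∧ ∀ m, b m = a m + ∑' n, β m n * b n := by
  have hM : 0 ≤ M := (abs_nonneg _).trans (ha 0)
  have hsb : ∀ (m : ℕ) (b : ℕ → ℝ) (L : ℝ), (∀ n, |b n| ≤ L) →
      Summable (fun n => β m n * b n) ∧ |∑' n, β m n * b n| ≤ L / 2 := by
    intro m b L hb
    have hL : 0 ≤ L := (abs_nonneg _).trans (hb 0)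
    have hle : ∀ n, ‖β m n * b n‖ ≤ |β m n| * L := fun n => by
      rw [Real.norm_eq_abs, abs_mul]
      exact mul_le_mul_of_nonneg_left (hb n) (abs_nonneg _)
    refine ⟨Summable.of_norm_bounded ((hs m).mul_right L) hle, ?_⟩
    have := tsum_of_norm_bounded ((hs m).mul_right L).hasSum hle
    rw [Real.norm_eq_abs, tsum_mul_right] at this
    nlinarith [hβ m]
  let Φ : (ℕ →ᵇ ℝ) → (ℕ →ᵇ ℝ) := fun b =>
    BoundedContinuousFunction.ofNormedAddCommGroupDiscrete
      (fun m => a m + ∑' n, β m n * b n) (M + ‖b‖ / 2) (fun m => by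
        have h1 := (hsb m b ‖b‖ (fun n => b.norm_coe_le_norm n)).2
        refine (norm_add_le _ _).trans (add_le_add (ha m) h1))
  have hΦ : ∀ b m, Φ b m = a m + ∑' n, β m n * b n := fun b m => rfl
  have hc : ContractingWith (1 / 2) Φ := by
    refine ⟨by norm_num [← NNReal.coe_lt_coe], LipschitzWith.of_dist_le_mul fun x y => ?_⟩
    rw [BoundedContinuousFunction.dist_le (by positivity)]
    intro m
    rw [Real.dist_eq, hΦ, hΦ, add_sub_add_left_eq_sub]
    have hx := (hsb m x ‖x‖ (fun n => x.norm_coe_le_norm n)).1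
    have hy := (hsb m y ‖y‖ (fun n => y.norm_coe_le_norm n)).1
    rw [← hx.tsum_sub hy]
    have := (hsb m (fun n => x n - y n) (dist x y) (fun n => by
      rw [← Real.dist_eq]; exact BoundedContinuousFunction.dist_coe_le_dist n)).2
    simp only [mul_sub] at this
    refine this.trans ?_
    norm_num
    linarith
  obtain ⟨b, hb, -⟩ := hc.exists_fixedPoint 0 (edist_ne_top _ _)
  have hbe : ∀ m, b m = a m + ∑' n, β m n * b n := fun m => by
    conv_lhs => rw [← hb.eq]
    exact hΦ b m
  have hn : ‖b‖ ≤ 2 * M := by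
    have : ‖b‖ ≤ M + ‖b‖ / 2 := by
      rw [BoundedContinuousFunction.norm_le (by positivity)]
      intro m
      rw [hbe]
      exact (norm_add_le _ _).trans (add_le_add (ha m) (hsb m b ‖b‖ (fun n => b.norm_coe_le_norm n)).2)
    linarith
  exact ⟨b, fun m => (b.norm_coe_le_norm m).trans hn, hbe⟩

end

/-! ### Averages over windows of primes -/

/-- Total weight of the primes in the window of radius `ε h` about the lattice point `n h`. -/
noncomputable def mass (h ε : ℝ) (n : ℕ) : ℝ := ∑ p ∈ win (n * h) (ε * h), pw p

/-- Weighted average of `g` over the primes in the window about `n h`. -/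
noncomputable def avg (h ε : ℝ) (n : ℕ) (g : ℕ → ℂ) : ℂ :=
  ∑ p ∈ win (n * h) (ε * h), ((pw p / mass h ε n : ℝ) : ℂ) * g p

lemma sum_weights {h ε : ℝ} {n : ℕ} (hm : 0 < mass h ε n) :
    ∑ p ∈ win (n * h) (ε * h), pw p / mass h ε n = 1 := by
  rw [← Finset.sum_div]; exact div_self hm.ne'

lemma norm_avg_le {h ε : ℝ} {n : ℕ} (hm : 0 < mass h ε n) {g : ℕ → ℂ} {K : ℝ}
    (hg : ∀ p ∈ win (n * h) (ε * h), ‖g p‖ ≤ K) : ‖avg h ε n g‖ ≤ K := by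
  unfold avg
  refine (norm_sum_le _ _).trans ?_
  calc _ ≤ ∑ p ∈ win (n * h) (ε * h), pw p / mass h ε n * K := by
        refine Finset.sum_le_sum fun p hp => ?_
        have := div_nonneg (pw_nonneg p) hm.le
        rw [norm_mul, Complex.norm_real, Real.norm_of_nonneg this]
        exact mul_le_mul_of_nonneg_left (hg p hp) this
    _ = K := by rw [← Finset.sum_mul, sum_weights hm, one_mul]

lemma norm_exp_neg_mul (z : ℂ) (t : ℝ) : ‖cexp (-(z * t))‖ = Real.exp (-(z.re * t)) := by
  rw [Complex.norm_exp]; simp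

/-- Spreading the value `b n` over the primes of the `n`-th window. -/
lemma exists_spread {h ε c : ℝ} (hh : 0 < h) (hε : 0 < ε) (hε' : ε ≤ 1 / 4) (hc : 0 < c) {n₀ : ℕ}
    (hm : ∀ n, n₀ ≤ n → c ≤ mass h ε n) {b : ℕ → ℝ} {L : ℝ} (hb : ∀ n, |b n| ≤ L) :
    ∃ r : ℕ → ℝ, (∀ p, |r p| ≤ L / c) ∧ ∀ z : ℂ, 0 < z.re →
      Summable (fun n : ℕ => if n₀ ≤ n then (b n : ℂ) * avg h ε n (fun p => cexp (-(z * lg p)))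
        else 0) ∧
      ∑' n : ℕ, (if n₀ ≤ n then (b n : ℂ) * avg h ε n (fun p => cexp (-(z * lg p))) else 0) =
        ∑' p : ℕ, (r p : ℂ) * pw p * cexp (-(z * lg p)) := by
  classical
  have hL : 0 ≤ L := (abs_nonneg _).trans (hb 0)
  -- the lattice index of the only window that can contain `p`
  set N : ℕ → ℕ := fun p => ⌊lg p / h + 1 / 2⌋₊ with hN
  have hNu : ∀ n p : ℕ, p ∈ win (n * h) (ε * h) → N p = n := by
    intro n p hp
    have h1 := (mem_win.1 hp).2
    rw [abs_le] at h1
    have h2 : (n : ℝ) - 1 / 4 ≤ lg p / h := by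
      rw [le_div_iff₀ hh]; nlinarith
    have h3 : lg p / h ≤ (n : ℝ) + 1 / 4 := by
      rw [div_le_iff₀ hh]; nlinarith
    simp only [hN]
    rw [Nat.floor_eq_iff (by have := lg_nonneg p; positivity)]
    constructor <;> linarith
  set r : ℕ → ℝ := fun p =>
    if n₀ ≤ N p ∧ p ∈ win (N p * h) (ε * h) then b (N p) / mass h ε (N p) else 0 with hr
  refine ⟨r, fun p => ?_, fun z hz => ?_⟩
  · simp only [hr]
    split_ifs with hp
    · have hmp := hm _ hp.1
      rw [abs_div, abs_of_pos (hc.trans_le hmp)]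
      gcongr
      exact hb _
    · rw [abs_zero]; positivity
  · set Y : ℕ × ℕ → ℂ := fun x =>
      if n₀ ≤ x.1 ∧ x.2 ∈ win (x.1 * h) (ε * h) then
        ((b x.1 : ℝ) : ℂ) * (((pw x.2 / mass h ε x.1 : ℝ) : ℂ) * cexp (-(z * lg x.2))) else 0 with hY
    have hY1 : ∀ n, HasSum (fun p => Y (n, p)) (if n₀ ≤ n then
        (b n : ℂ) * avg h ε n (fun p => cexp (-(z * lg p))) else 0) := by
      intro n
      have : (if n₀ ≤ n then (b n : ℂ) * avg h ε n (fun p => cexp (-(z * lg p))) else 0) =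
          ∑ p ∈ win (n * h) (ε * h), Y (n, p) := by
        split_ifs with hn
        · unfold avg
          rw [Finset.mul_sum]
          refine Finset.sum_congr rfl fun p hp => ?_
          simp only [hY]
          rw [if_pos ⟨hn, hp⟩]
        · refine (Finset.sum_eq_zero fun p hp => ?_).symm
          simp only [hY]
          rw [if_neg (fun h => hn h.1)]
      rw [this]
      refine hasSum_sum_of_ne_finset_zero fun p hp => ?_
      simp only [hY]
      rw [if_neg (fun h => hp h.2)]
    have hY2 : ∀ p, ∑' n, Y (n, p) = (r p : ℂ) * pw p * cexp (-(z * lg p)) := by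
      intro p
      rw [tsum_eq_single (N p)]
      · simp only [hY, hr]
        split_ifs with hp
        · push_cast; ring
        · simp
      · intro n hn
        simp only [hY]
        rw [if_neg]
        rintro ⟨-, h2⟩
        exact hn (hNu n p h2).symm
    have hYn : ∀ n p, ‖Y (n, p)‖ ≤ if p ∈ win (n * h) (ε * h) ∧ n₀ ≤ n then
        pw p / mass h ε n * (L * Real.exp (-(z.re * ((n - 1 / 4) * h)))) else 0 := by
      intro n p
      simp only [hY]
      by_cases hp : n₀ ≤ n ∧ p ∈ win (n * h) (ε * h)
      · rw [if_pos hp, if_pos hp.symm]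
        have hmp := hc.trans_le (hm _ hp.1)
        rw [norm_mul, norm_mul, norm_exp_neg_mul, Complex.norm_real, Complex.norm_real,
          Real.norm_eq_abs, Real.norm_of_nonneg (div_nonneg (pw_nonneg p) hmp.le), mul_left_comm]
        have h1 := (mem_win.1 hp.2).2
        rw [abs_le] at h1
        have h2 : ((n : ℝ) - 1 / 4) * h ≤ lg p := by nlinarith
        refine mul_le_mul_of_nonneg_left ?_ (div_nonneg (pw_nonneg p) hmp.le)
        refine mul_le_mul (hb n) ?_ (Real.exp_pos _).le hL
        rw [Real.exp_le_exp]
        nlinarith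
      · rw [if_neg hp, if_neg (fun h => hp h.symm), norm_zero]
    have hYs1 : ∀ n, Summable fun p => ‖Y (n, p)‖ := by
      intro n
      refine summable_of_hasFiniteSupport ((win (n * h) (ε * h)).finite_toSet.subset fun p hp => ?_)
      by_contra hq
      apply hp
      simp only [hY]
      rw [if_neg (fun h => hq h.2), norm_zero]
    have hYb : ∀ n, ∑' p, ‖Y (n, p)‖ ≤ L * Real.exp (-(z.re * ((n - 1 / 4) * h))) := by
      intro n
      by_cases hn : n₀ ≤ n
      · have hmp := hc.trans_le (hm _ hn)
        rw [tsum_eq_sum (s := win (n * h) (ε * h))]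
        · calc _ ≤ ∑ p ∈ win (n * h) (ε * h),
                pw p / mass h ε n * (L * Real.exp (-(z.re * ((n - 1 / 4) * h)))) := by
                refine Finset.sum_le_sum fun p hp => ?_
                have := hYn n p
                rwa [if_pos ⟨hp, hn⟩] at this
            _ = _ := by rw [← Finset.sum_mul, sum_weights hmp, one_mul]
        · intro p hp
          simp only [hY]
          rw [if_neg (fun h => hp h.2), norm_zero]
      · have : ∀ p, ‖Y (n, p)‖ = 0 := fun p => by
          simp only [hY]
          rw [if_neg (fun h => hn h.1), norm_zero]
        simp only [this, tsum_zero]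
        positivity
    have hgeo : Summable fun n : ℕ => L * Real.exp (-(z.re * ((n - 1 / 4) * h))) := by
      have h1 : Summable fun n : ℕ => Real.exp (n * (-(z.re * h))) :=
        Real.summable_exp_nat_mul_iff.2 (by have := mul_pos hz hh; linarith)
      refine (h1.mul_left (L * Real.exp (z.re * h / 4))).congr fun n => ?_
      rw [mul_assoc, ← Real.exp_add]
      congr 2; ring
    have hsum : Summable Y := by
      refine Summable.of_norm ?_
      rw [summable_prod_of_nonneg (fun _ => norm_nonneg _)]
      refine ⟨hYs1, Summable.of_nonneg_of_le (fun n => tsum_nonneg fun _ => norm_nonneg _) hYb hgeo⟩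
    have h1 := hsum.hasSum.prod_fiberwise hY1
    refine ⟨h1.summable, ?_⟩
    rw [h1.tsum_eq]
    simp only [← hY2]
    rw [hsum.tsum_prod]
    exact (Summable.tsum_comm (f := fun n p => Y (n, p)) hsum).symm

/-! ### The sampling matrix and its columns -/

/-- The half-strip `Re z > -1`, `|Im z| < T`. -/
def Om (T : ℝ) : Set ℂ := {z : ℂ | -1 < z.re ∧ |z.im| < T}

lemma isOpen_Om (T : ℝ) : IsOpen (Om T) :=
  (isOpen_lt continuous_const Complex.continuous_re).inter
    (isOpen_lt (continuous_abs.comp Complex.continuous_im) continuous_const)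

lemma summable_lattice (m : ℕ) : Summable (fun n : ℕ => 1 / (1 + ((n : ℝ) - m) ^ 2)) ∧
    ∑' n : ℕ, 1 / (1 + ((n : ℝ) - m) ^ 2) ≤ ∑' j : ℤ, 1 / (1 + (j : ℝ) ^ 2) := by
  have h0 : Summable fun j : ℤ => 1 / (1 + (j : ℝ) ^ 2) := by
    simpa using summable_int_inv 0
  have hinj : Function.Injective fun n : ℕ => (n : ℤ) - m := fun a b hab => by
    simpa using hab
  have hs := h0.comp_injective hinj
  have he : ((fun j : ℤ => 1 / (1 + (j : ℝ) ^ 2)) ∘ fun n : ℕ => (n : ℤ) - m) =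
      fun n : ℕ => 1 / (1 + ((n : ℝ) - m) ^ 2) := by
    funext n; simp
  refine ⟨he ▸ hs, ?_⟩
  rw [← he]
  exact tsum_comp_le_tsum_of_inj h0 (fun j => by positivity) hinj

/-- Sampling coefficients of a bounded function are bounded. -/
lemma integral_phi_le {h : ℝ} (hh : 0 < h) (x : ℝ) :
    Integrable (fun t : ℝ => phi (t / h - x)) ∧
    ∫ t : ℝ, |phi (t / h - x)| ≤ h * (2 * Real.pi) := by
  have hi : Integrable (fun t : ℝ => 2 / (1 + (t / h - x) ^ 2)) := by
    have := (integrable_inv_one_add_sq' 2).comp_sub_right x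
    exact this.comp_div hh.ne'
  have hc : Continuous (fun t : ℝ => phi (t / h - x)) := by
    have := continuous_phi
    fun_prop
  have hi2 : Integrable (fun t : ℝ => phi (t / h - x)) :=
    hi.mono' hc.aestronglyMeasurable (ae_of_all _ fun t => abs_phi_le _)
  refine ⟨hi2, ?_⟩
  refine (integral_mono hi2.abs hi fun t => abs_phi_le _).trans ?_
  rw [Measure.integral_comp_div (fun t => 2 / (1 + (t - x) ^ 2)), integral_sub_right_eq_self
    (fun t => 2 / (1 + t ^ 2)), abs_of_pos hh, smul_eq_mul]
  have : ∫ t : ℝ, 2 / (1 + t ^ 2) = 2 * Real.pi := by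
    simp only [div_eq_mul_inv]
    rw [integral_const_mul, integral_univ_inv_one_add_sq]
  rw [this]

/-- The sampling matrix: the value at the `m`-th lattice point of the kernel averaged over the
`n`-th window, with the identity in the finitely many columns `n < n₀` whose windows may be
empty. -/
noncomputable def smat (h ε : ℝ) (n₀ m n : ℕ) : ℝ :=
  if n₀ ≤ n then ∑ p ∈ win (n * h) (ε * h), pw p / mass h ε n * phi (lg p / h - m)
  else if n = m then 1 else 0

lemma smat_near {h ε c η : ℝ} (hh : 0 < h) (hc : 0 < c) {n₀ : ℕ} (hη : 0 < η)
    (hm : ∀ n, n₀ ≤ n → c ≤ mass h ε n)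
    (hε : ∀ (j : ℤ) (τ : ℝ), |τ| ≤ ε →
      |(if j = 0 then (1 : ℝ) else 0) - phi (j + τ)| ≤ η / (1 + (j : ℝ) ^ 2)) (m n : ℕ) :
    |(if n = m then (1 : ℝ) else 0) - smat h ε n₀ m n| ≤ η * (1 / (1 + ((n : ℝ) - m) ^ 2)) := by
  unfold smat
  split_ifs with h1
  all_goals first
    | (simp; positivity)
    | skip
  all_goals
    have hmp := hc.trans_le (hm n ‹_›)
    have key : ∀ p ∈ win (n * h) (ε * h),
        |(if n = m then (1 : ℝ) else 0) - phi (lg p / h - m)| ≤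
          η * (1 / (1 + ((n : ℝ) - m) ^ 2)) := by
      intro p hp
      have h2 := (mem_win.1 hp).2
      have := hε ((n : ℤ) - m) (lg p / h - n) (by
        rw [div_sub' hh.ne', abs_div, abs_of_pos hh, div_le_iff₀ hh]
        rwa [mul_comm h])
      simp only [sub_eq_zero, Nat.cast_inj] at this
      push_cast at this
      rw [show (n : ℝ) - m + (lg p / h - n) = lg p / h - m by ring] at this
      rwa [mul_one_div]
    have e : (if n = m then (1 : ℝ) else 0) -
        ∑ p ∈ win (n * h) (ε * h), pw p / mass h ε n * phi (lg p / h - m) =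
        ∑ p ∈ win (n * h) (ε * h), pw p / mass h ε n *
          ((if n = m then (1 : ℝ) else 0) - phi (lg p / h - m)) := by
      simp only [mul_sub]
      rw [Finset.sum_sub_distrib, ← Finset.sum_mul, sum_weights hmp, one_mul]
    have bound : |(if n = m then (1 : ℝ) else 0) -
        ∑ p ∈ win (n * h) (ε * h), pw p / mass h ε n * phi (lg p / h - m)| ≤
        η * (1 / (1 + ((n : ℝ) - m) ^ 2)) := by
      rw [e]
      refine (Finset.abs_sum_le_sum_abs _ _).trans ?_
      calc _ ≤ ∑ p ∈ win (n * h) (ε * h), pw p / mass h ε n *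
            (η * (1 / (1 + ((n : ℝ) - m) ^ 2))) := by
            refine Finset.sum_le_sum fun p hp => ?_
            have hw := div_nonneg (pw_nonneg p) hmp.le
            rw [abs_mul, abs_of_nonneg hw]
            exact mul_le_mul_of_nonneg_left (key p hp) hw
        _ = _ := by rw [← Finset.sum_mul, sum_weights hmp, one_mul]
    simpa [*] using bound

/-- The exponential attached to the `n`-th column: an average over primes, or the lattice
exponential when `n < n₀`. -/
noncomputable def colExp (h ε : ℝ) (n₀ n : ℕ) (z : ℂ) : ℂ :=
  if n₀ ≤ n then avg h ε n (fun p => cexp (-(z * lg p))) else cexp (-(h * z * n))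

/-- Sampling error of the `n`-th column. -/
noncomputable def colErr (h ε : ℝ) (n₀ n : ℕ) (z : ℂ) : ℂ :=
  if n₀ ≤ n then avg h ε n (fun p => R (lg p / h) (h * z)) else 0

lemma win_lower {h ε : ℝ} (hh : 0 < h) (hε' : ε ≤ 1 / 4) {n p : ℕ} (hn : 1 ≤ n)
    (hp : p ∈ win (n * h) (ε * h)) : (n : ℝ) / 2 ≤ lg p / h := by
  have h1 := (mem_win.1 hp).2
  rw [abs_le] at h1
  have : (1 : ℝ) ≤ n := by exact_mod_cast hn
  rw [le_div_iff₀ hh]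
  nlinarith

lemma hasSum_column {h ε : ℝ} (hh : 0 < h) (hε' : ε ≤ 1 / 4) {n₀ : ℕ} (hn₀ : 1 ≤ n₀)
    {z : ℂ} (hz : 0 < z.re) (hzi : h * |z.im| < Real.pi / 4) (n : ℕ) :
    HasSum (fun m : ℕ => (smat h ε n₀ m n : ℂ) * cexp (-(h * z * m)))
      (colExp h ε n₀ n z - colErr h ε n₀ n z) := by
  unfold smat colExp colErr
  by_cases hn : n₀ ≤ n
  · simp only [hn, if_true]
    unfold avg
    rw [← Finset.sum_sub_distrib]
    have e : ∀ m : ℕ, ((∑ p ∈ win (n * h) (ε * h), pw p / mass h ε n * phi (lg p / h - m) : ℝ) : ℂ) *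
        cexp (-(h * z * m)) = ∑ p ∈ win (n * h) (ε * h), ((pw p / mass h ε n : ℝ) : ℂ) *
          ((phi (lg p / h - m) : ℂ) * cexp (-(h * z * m))) := by
      intro m
      rw [ofReal_sum, Finset.sum_mul]
      refine Finset.sum_congr rfl fun p _ => ?_
      push_cast; ring
    simp only [e]
    refine hasSum_sum fun p hp => ?_
    rw [← mul_sub]
    refine HasSum.mul_left _ ?_
    have hu := win_lower hh hε' (hn₀.trans hn) hp
    have hn1 : (1 : ℝ) ≤ n := by exact_mod_cast hn₀.trans hn
    have := hasSum_sampling (u := lg p / h) (ζ := h * z) (by linarith)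
      (by rw [re_ofReal_mul]; positivity) (by rw [im_ofReal_mul, abs_mul, abs_of_pos hh]; exact hzi)
    have hhc : (h : ℂ) ≠ 0 := by exact_mod_cast hh.ne'
    have e2 : (h : ℂ) * z * ((lg p / h : ℝ) : ℂ) = z * lg p := by
      push_cast
      field_simp
    rwa [e2] at this
  · simp only [hn, if_false, sub_zero]
    have := hasSum_ite_eq n (cexp (-(h * z * n)))
    refine this.congr_fun fun m => ?_
    by_cases hmn : n = m
    · subst hmn; simp
    · simp [hmn, Ne.symm hmn]

lemma norm_colErr_le {h ε c : ℝ} (hh : 0 < h) (hε' : ε ≤ 1 / 4) (hc : 0 < c) {n₀ : ℕ}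
    (hn₀ : 1 ≤ n₀) (hm : ∀ n, n₀ ≤ n → c ≤ mass h ε n)
    {z : ℂ} (hzi : h * |z.im| < Real.pi / 4) (n : ℕ) :
    ‖colErr h ε n₀ n z‖ ≤ 4 * (1 / (n : ℝ) ^ 2) := by
  unfold colErr
  split_ifs with hn
  · refine norm_avg_le (hc.trans_le (hm n hn)) fun p hp => ?_
    have hu := win_lower hh hε' (hn₀.trans hn) hp
    have hn1 : (1 : ℝ) ≤ n := by exact_mod_cast hn₀.trans hn
    refine (norm_R_le (by linarith)
      (by rw [im_ofReal_mul, abs_mul, abs_of_pos hh]; exact hzi)).trans ?_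
    rw [mul_one_div, div_le_div_iff₀ (by have : 0 < lg p / h := by linarith
                                         positivity) (by positivity)]
    nlinarith
  · rw [norm_zero]; positivity

lemma differentiableOn_colErr {h ε T : ℝ} (hh : 0 < h) (hε' : ε ≤ 1 / 4)  {n₀ : ℕ}
    (hn₀ : 1 ≤ n₀) (hT : h * T ≤ Real.pi / 4) (n : ℕ) :
    DifferentiableOn ℂ (colErr h ε n₀ n) (Om T) := by
  unfold colErr
  split_ifs with hn
  · unfold avg
    refine DifferentiableOn.fun_sum fun p hp => DifferentiableOn.const_mul ?_ _
    have hu := win_lower hh hε' (hn₀.trans hn) hp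
    have hn1 : (1 : ℝ) ≤ n := by exact_mod_cast hn₀.trans hn
    refine (differentiableOn_R (u := lg p / h) (by linarith)).comp (by fun_prop) fun z hz => ?_
    change |((h : ℂ) * z).im| < _
    rw [im_ofReal_mul, abs_mul, abs_of_pos hh]
    exact (mul_lt_mul_of_pos_left hz.2 hh).trans_le hT
  · exact differentiableOn_const _

/-! ### Matching a compactly supported density -/

/-- The Laplace transform of `f` equals that of its samples up to the averaged sampling error. -/
lemma hasSum_samples {h δ B : ℝ} (hh : 0 < h) {f : ℝ → ℝ} (hf : Measurable f)
    (hfδ : ∀ t, |f t| ≤ δ) (hfB : ∀ t, t ∉ Icc 1 B → f t = 0)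
    {z : ℂ} (hz : 0 < z.re) (hzi : h * |z.im| < Real.pi / 4) :
    HasSum (fun m : ℕ => ((∫ t, f t * phi (t / h - m) : ℝ) : ℂ) * cexp (-(h * z * m)))
      ((∫ t, (f t : ℂ) * cexp (-(z * t))) - ∫ t, (f t : ℂ) * R (t / h) (h * z)) := by
  have hδ : 0 ≤ δ := (abs_nonneg _).trans (hfδ 0)
  have hfi : Integrable f := by
    have h1 : IntegrableOn f (Icc 1 B) :=
      Measure.integrableOn_of_bounded (M := δ) (by simp) hf.aestronglyMeasurable
        (ae_of_all _ fun t => hfδ t)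
    rwa [integrableOn_iff_integrable_of_support_subset] at h1
    intro t ht
    by_contra hn
    exact ht (hfB t hn)
  have hphi : ∀ m : ℕ, Integrable fun t => f t * phi (t / h - m) := fun m =>
    (integral_phi_le hh m).1.bdd_mul (c := δ) hf.aestronglyMeasurable (ae_of_all _ fun t => hfδ t)
  set F : ℕ → ℝ → ℂ := fun m t => ((f t * phi (t / h - m) : ℝ) : ℂ) * cexp (-(h * z * m)) with hF
  have hn : ∀ m : ℕ, ‖cexp (-(h * z * m))‖ = Real.exp (m * (-(h * z.re))) := by
    intro m
    have := norm_exp_neg_mul (h * z) m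
    rw [re_ofReal_mul] at this
    push_cast at this
    rw [this]; congr 1; ring
  have hsum := hasSum_integral_of_summable_integral_norm (μ := volume) (F := F)
    (fun m => (hphi m).ofReal.mul_const _) ?_
  · have e1 : ∀ m, ∫ t, F m t = ((∫ t, f t * phi (t / h - m) : ℝ) : ℂ) * cexp (-(h * z * m)) := by
      intro m
      simp only [hF]
      rw [integral_mul_const, integral_complex_ofReal]
    simp only [e1] at hsum
    have e2 : ∀ t, ∑' m, F m t = (f t : ℂ) * cexp (-(z * t)) - (f t : ℂ) * R (t / h) (h * z) := by
      intro t
      by_cases ht : t ∈ Icc 1 B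
      · have hu : 0 < t / h := div_pos (by linarith [ht.1]) hh
        have hs := (hasSum_sampling hu (ζ := h * z) (by rw [re_ofReal_mul]; positivity)
          (by rw [im_ofReal_mul, abs_mul, abs_of_pos hh]; exact hzi)).mul_left (f t : ℂ)
        have hhc : (h : ℂ) ≠ 0 := by exact_mod_cast hh.ne'
        have e3 : (h : ℂ) * z * ((t / h : ℝ) : ℂ) = z * t := by
          push_cast
          field_simp
        rw [e3] at hs
        rw [← mul_sub, ← hs.tsum_eq]
        refine tsum_congr fun m => ?_
        simp only [hF]; push_cast; ring
      · simp [hF, hfB t ht]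
    simp only [e2] at hsum
    rwa [integral_sub] at hsum
    · refine Integrable.mono' (g := fun t => |f t|) hfi.abs
        (by have := hf; exact (by fun_prop : Measurable _).aestronglyMeasurable)
        (ae_of_all _ fun t => ?_)
      rw [norm_mul, Complex.norm_real, norm_exp_neg_mul, Real.norm_eq_abs]
      by_cases ht : t ∈ Icc 1 B
      · refine mul_le_of_le_one_right (abs_nonneg _) ?_
        rw [Real.exp_le_one_iff]
        have : 0 ≤ z.re * t := mul_nonneg hz.le (by linarith [ht.1])
        linarith
      · simp [hfB t ht]
    · refine Integrable.mono' (g := fun t => |f t| * h ^ 2) (hfi.abs.mul_const _)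
        (by have := hf; have := measurable_R (h * z); exact (by fun_prop : Measurable _).aestronglyMeasurable)
        (ae_of_all _ fun t => ?_)
      rw [norm_mul, Complex.norm_real, Real.norm_eq_abs]
      by_cases ht : t ∈ Icc 1 B
      · have ht1 := ht.1
        refine mul_le_mul_of_nonneg_left ?_ (abs_nonneg _)
        refine (norm_R_le (div_pos (by linarith) hh)
          (by rw [im_ofReal_mul, abs_mul, abs_of_pos hh]; exact hzi)).trans ?_
        rw [div_pow, one_div_div]
        exact div_le_self (by positivity) (by nlinarith)
      · simp [hfB t ht]
  · have hg : Summable fun m : ℕ => δ * (h * (2 * Real.pi)) * Real.exp (m * (-(h * z.re))) :=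
      (Real.summable_exp_nat_mul_iff.2 (by have := mul_pos hh hz; linarith)).mul_left _
    refine Summable.of_nonneg_of_le (fun m => integral_nonneg fun t => norm_nonneg _) (fun m => ?_) hg
    simp only [hF, norm_mul, hn, Complex.norm_real, Real.norm_eq_abs]
    rw [integral_mul_const]
    refine mul_le_mul_of_nonneg_right ?_ (Real.exp_pos _).le
    calc _ ≤ ∫ t, δ * |phi (t / h - m)| := by
          refine integral_mono ?_ ((integral_phi_le hh m).1.abs.const_mul δ) fun t => ?_
          · simpa only [abs_mul] using (hphi m).abs
          · exact mul_le_mul_of_nonneg_right (hfδ t) (abs_nonneg _)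
      _ ≤ _ := by
        rw [integral_const_mul]
        exact mul_le_mul_of_nonneg_left (integral_phi_le hh m).2 hδ

/-- The core approximation: a bounded function of compact support is matched by a density on the
primes of comparable size, with an error that is analytic and small on a long half-strip. The
constant depends only on the height `T`. -/
lemma exists_density {T : ℝ} (hT : 0 < T) : ∃ C : ℝ, 0 < C ∧ ∀ (δ B : ℝ) (f : ℝ → ℝ),
    Measurable f → (∀ t, |f t| ≤ δ) → (∀ t, t ∉ Icc 1 B → f t = 0) →
    ∃ r : ℕ → ℝ, (∀ n, |r n| ≤ C * δ) ∧ ∃ G : ℂ → ℂ, DifferentiableOn ℂ G (Om T) ∧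
      (∀ z ∈ Om T, ‖G z‖ ≤ C * δ) ∧ ∀ z ∈ Om T, 0 < z.re →
        G z = (∫ t, (f t : ℂ) * cexp (-(z * t))) -
          ∑' n : ℕ, (r n : ℂ) * pw n * cexp (-(z * lg n)) := by
  have hpi := Real.pi_gt_three
  set K := ∑' j : ℤ, 1 / (1 + (j : ℝ) ^ 2) with hK
  have hKs : Summable fun j : ℤ => 1 / (1 + (j : ℝ) ^ 2) := by
    simpa using summable_int_inv 0
  have hK0 : 0 < K := hKs.tsum_pos (fun j => by positivity) 0 (by norm_num)
  obtain ⟨ε, hε0, hε', hε⟩ := exists_phi_near (η := 1 / (2 * K)) (by positivity)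
  -- lattice spacing: fine enough for the strip `|Im z| < T` to be within the band of the kernel
  set h : ℝ := min 1 (1 / (2 * T)) with hh'
  have hh : 0 < h := by positivity
  have hh1 : h ≤ 1 := min_le_left _ _
  have hhT : h * T ≤ Real.pi / 4 := by
    have : h ≤ 1 / (2 * T) := min_le_right _ _
    rw [le_div_iff₀ (by positivity)] at this
    linarith
  obtain ⟨c, hc, hev⟩ := exists_window_mass (ε := ε * h) (by positivity)
  have hev2 : ∀ᶠ n : ℕ in atTop, c ≤ mass h ε n :=
    (tendsto_natCast_atTop_atTop.atTop_mul_const hh).eventually hev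
  obtain ⟨n₁, hn₁⟩ := eventually_atTop.1 hev2
  set n₀ := n₁ + 1 with hn₀'
  have hn₀ : 1 ≤ n₀ := by omega
  have hm : ∀ n, n₀ ≤ n → c ≤ mass h ε n := fun n hn => hn₁ n (by omega)
  set Z : ℝ := ∑' n : ℕ, 1 / (n : ℝ) ^ 2 with hZ
  have hZs : Summable fun n : ℕ => 1 / (n : ℝ) ^ 2 := Real.summable_one_div_nat_pow.2 (by norm_num)
  have hZ0 : 0 ≤ Z := tsum_nonneg fun n => by positivity
  -- the matrix is within `1/2` of the identity
  set β : ℕ → ℕ → ℝ := fun m n => (if n = m then (1 : ℝ) else 0) - smat h ε n₀ m n with hβ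
  have hβb := smat_near hh hc (n₀ := n₀) (η := 1 / (2 * K)) (by positivity) hm hε
  have hβs : ∀ m, Summable fun n => |β m n| := fun m =>
    Summable.of_nonneg_of_le (fun _ => abs_nonneg _) (fun n => hβb m n)
      ((summable_lattice m).1.mul_left _)
  have hβt : ∀ m, ∑' n, |β m n| ≤ 1 / 2 := fun m => by
    refine ((hβs m).tsum_le_tsum (fun n => hβb m n) ((summable_lattice m).1.mul_left _)).trans ?_
    rw [tsum_mul_left]
    calc _ ≤ 1 / (2 * K) * K := mul_le_mul_of_nonneg_left (summable_lattice m).2 (by positivity)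
      _ = 1 / 2 := by field_simp
  have hA : ∀ m, Summable (fun n => |smat h ε n₀ m n|) ∧ ∑' n, |smat h ε n₀ m n| ≤ 2 := fun m => by
    have h1 := hasSum_ite_eq m (1 : ℝ)
    have hle : ∀ n, |smat h ε n₀ m n| ≤ (if n = m then (1 : ℝ) else 0) + |β m n| := fun n => by
      have : smat h ε n₀ m n = (if n = m then (1 : ℝ) else 0) - β m n := by simp only [hβ]; ring
      rw [this]
      refine (abs_sub _ _).trans ?_
      gcongr
      split_ifs <;> simp
    have hs := Summable.of_nonneg_of_le (fun _ => abs_nonneg _) hle (h1.summable.add (hβs m))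
    refine ⟨hs, (hs.tsum_le_tsum hle (h1.summable.add (hβs m))).trans ?_⟩
    rw [h1.summable.tsum_add (hβs m), h1.tsum_eq]
    linarith [hβt m]
  refine ⟨2 * Real.pi + 4 * Real.pi * (n₀ * Real.exp n₀) + 16 * Real.pi * Z + 4 * Real.pi / c,
    by positivity, ?_⟩
  intro δ B f hf hfδ hfB
  have hδ : 0 ≤ δ := (abs_nonneg _).trans (hfδ 0)
  set a : ℕ → ℝ := fun m => ∫ t, f t * phi (t / h - m) with ha
  have hab : ∀ m, |a m| ≤ 2 * Real.pi * δ := fun m => by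
    have := norm_integral_le_of_norm_le (f := fun t => f t * phi (t / h - m))
      ((integral_phi_le hh m).1.abs.const_mul δ)
      (ae_of_all _ fun t => by
        rw [norm_mul]; exact mul_le_mul_of_nonneg_right (hfδ t) (abs_nonneg _))
    rw [integral_const_mul] at this
    refine this.trans ?_
    calc _ ≤ δ * (h * (2 * Real.pi)) := mul_le_mul_of_nonneg_left (integral_phi_le hh m).2 hδ
      _ ≤ δ * (1 * (2 * Real.pi)) := by gcongr
      _ = _ := by ring
  obtain ⟨b, hb, hbe⟩ := exists_neumann hβs hβt hab
  have hL0 : 0 ≤ 2 * (2 * Real.pi * δ) := by positivity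
  -- `b` solves the sampling equations
  have hAb : ∀ m, HasSum (fun n => smat h ε n₀ m n * b n) (a m) := by
    intro m
    have h1 : Summable fun n => β m n * b n :=
      Summable.of_norm_bounded ((hβs m).mul_right (2 * (2 * Real.pi * δ))) fun n => by
        rw [norm_mul]; exact mul_le_mul_of_nonneg_left (hb n) (abs_nonneg _)
    have h2 : HasSum (fun n => if n = m then b m else 0) (b m) := hasSum_ite_eq m (b m)
    have h3 := h2.sub h1.hasSum
    have e : b m - ∑' n, β m n * b n = a m := by linarith [hbe m]
    rw [e] at h3
    refine h3.congr_fun fun n => ?_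
    simp only [hβ]
    by_cases hnm : n = m
    · subst hnm; simp; ring
    · simp [hnm]
  obtain ⟨r, hr, hrS⟩ := exists_spread hh hε0 hε' hc hm hb
  have hcerr : ∀ z ∈ Om T, ∀ n, ‖colErr h ε n₀ n z‖ ≤ 4 * (1 / (n : ℝ) ^ 2) := fun z hz n =>
    norm_colErr_le hh hε' hc hn₀ hm ((mul_lt_mul_of_pos_left hz.2 hh).trans_le hhT) n
  have hberr : ∀ z ∈ Om T, ∀ n, ‖(b n : ℂ) * colErr h ε n₀ n z‖ ≤
      16 * Real.pi * δ * (1 / (n : ℝ) ^ 2) := fun z hz n => by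
    rw [norm_mul, Complex.norm_real]
    calc _ ≤ 2 * (2 * Real.pi * δ) * (4 * (1 / (n : ℝ) ^ 2)) :=
          mul_le_mul (hb n) (hcerr z hz n) (norm_nonneg _) hL0
      _ = _ := by ring
  have hRb : ∀ t, ∀ z ∈ Om T, ‖(f t : ℂ) * R (t / h) (h * z)‖ ≤ (2 * δ) / (1 + t ^ 2) := by
    intro t z hz
    by_cases ht : t ∈ Icc 1 B
    · have ht1 := ht.1
      have hR := norm_R_le (u := t / h) (ζ := h * z) (div_pos (by linarith) hh) (by
        rw [im_ofReal_mul, abs_mul, abs_of_pos hh]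
        exact (mul_lt_mul_of_pos_left hz.2 hh).trans_le hhT)
      have h2 : 1 / (t / h) ^ 2 ≤ 2 / (1 + t ^ 2) := by
        rw [div_pow, one_div_div, div_le_div_iff₀ (by positivity) (by positivity)]
        have : h ^ 2 ≤ 1 := by nlinarith
        nlinarith
      rw [norm_mul, Complex.norm_real, mul_comm 2 δ, mul_div_assoc]
      exact mul_le_mul (hfδ t) (hR.trans h2) (norm_nonneg _) hδ
    · rw [hfB t ht]; simp; positivity
  refine ⟨r, fun n => ?_, fun z => (∫ t, (f t : ℂ) * R (t / h) (h * z)) +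
    (∑ n ∈ Finset.range n₀, (b n : ℂ) * cexp (-(h * z * n))) -
    ∑' n, (b n : ℂ) * colErr h ε n₀ n z, ?_, ?_, ?_⟩
  · refine (hr n).trans ?_
    have : 0 ≤ (2 * Real.pi + 4 * Real.pi * (n₀ * Real.exp n₀) + 16 * Real.pi * Z) * δ := by
      positivity
    calc _ = 4 * Real.pi / c * δ := by ring
      _ ≤ _ := by nlinarith
  · refine DifferentiableOn.sub (DifferentiableOn.add ?_ ?_) ?_
    · refine differentiableOn_integral (f := fun t z => (f t : ℂ) * R (t / h) (h * z)) (isOpen_Om T) ?_ ?_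
        (integrable_inv_one_add_sq' (2 * δ)) (ae_of_all _ hRb)
      · intro z _
        have := measurable_R (h * z)
        exact (by fun_prop : Measurable _).aestronglyMeasurable
      · refine ae_of_all _ fun t => ?_
        by_cases ht : t ∈ Icc 1 B
        · refine DifferentiableOn.const_mul ?_ _
          refine (differentiableOn_R (u := t / h) (div_pos (by linarith [ht.1]) hh)).comp
            (by fun_prop) fun z hz => ?_
          change |((h : ℂ) * z).im| < _
          rw [im_ofReal_mul, abs_mul, abs_of_pos hh]
          exact (mul_lt_mul_of_pos_left hz.2 hh).trans_le hhT
        · simp only [hfB t ht, ofReal_zero, zero_mul]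
          exact differentiableOn_const _
    · fun_prop
    · exact differentiableOn_tsum_of_summable_norm (hZs.mul_left (16 * Real.pi * δ))
        (fun n => (differentiableOn_colErr hh hε' hn₀ hhT n).const_mul _) (isOpen_Om T)
        fun n z hz => hberr z hz n
  · intro z hz
    have b1 : ‖∫ t, (f t : ℂ) * R (t / h) (h * z)‖ ≤ 2 * Real.pi * δ := by
      refine (norm_integral_le_of_norm_le (integrable_inv_one_add_sq' (2 * δ))
        (ae_of_all _ fun t => hRb t z hz)).trans ?_
      simp only [div_eq_mul_inv]
      rw [integral_const_mul, integral_univ_inv_one_add_sq]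
      linarith
    have b2 : ‖∑ n ∈ Finset.range n₀, (b n : ℂ) * cexp (-(h * z * n))‖ ≤
        4 * Real.pi * (n₀ * Real.exp n₀) * δ := by
      refine (norm_sum_le_of_le (f := fun n => (b n : ℂ) * cexp (-(h * z * n)))
        (n := fun _ => 4 * Real.pi * δ * Real.exp n₀) _ fun n hn => ?_).trans ?_
      · have hn' : (n : ℝ) ≤ n₀ := by exact_mod_cast (Finset.mem_range.1 hn).le
        have e := norm_exp_neg_mul (h * z) n
        rw [re_ofReal_mul] at e
        push_cast at e
        rw [norm_mul, Complex.norm_real, e]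
        refine mul_le_mul ((hb n).trans (by linarith)) ?_ (Real.exp_pos _).le (by positivity)
        rw [Real.exp_le_exp]
        have hz1 : -1 < z.re := hz.1
        have hn0 : (0 : ℝ) ≤ n := n.cast_nonneg
        have : 0 ≤ h * n * (z.re + 1) := by
          have : 0 ≤ z.re + 1 := by linarith
          positivity
        nlinarith
      · rw [Finset.sum_const, Finset.card_range, nsmul_eq_mul]
        apply le_of_eq; ring
    have b3 : ‖∑' n, (b n : ℂ) * colErr h ε n₀ n z‖ ≤ 16 * Real.pi * Z * δ := by
      refine (tsum_of_norm_bounded (hZs.mul_left (16 * Real.pi * δ)).hasSum (hberr z hz)).trans ?_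
      rw [tsum_mul_left]
      apply le_of_eq; ring
    refine (norm_sub_le _ _).trans ((add_le_add ((norm_add_le _ _).trans (add_le_add b1 b2)) b3).trans ?_)
    have : 0 ≤ 4 * Real.pi / c * δ := by positivity
    nlinarith
  · intro z hz hzr
    have hzi : h * |z.im| < Real.pi / 4 := (mul_lt_mul_of_pos_left hz.2 hh).trans_le hhT
    have hS := hasSum_samples hh hf hfδ hfB hzr hzi
    have hcol := hasSum_column hh hε' hn₀ hzr hzi
    have hn : ∀ m : ℕ, ‖cexp (-(h * z * m))‖ = Real.exp (m * (-(h * z.re))) := by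
      intro m
      have := norm_exp_neg_mul (h * z) m
      rw [re_ofReal_mul] at this
      push_cast at this
      rw [this]; congr 1; ring
    set X : ℕ × ℕ → ℂ := fun x =>
      ((smat h ε n₀ x.1 x.2 * b x.2 : ℝ) : ℂ) * cexp (-(h * z * x.1)) with hX
    have hXn : ∀ m n, ‖X (m, n)‖ ≤ |smat h ε n₀ m n| *
        (4 * Real.pi * δ * Real.exp (m * (-(h * z.re)))) := by
      intro m n
      simp only [hX]
      rw [norm_mul, hn, Complex.norm_real, norm_mul, Real.norm_eq_abs, Real.norm_eq_abs, mul_assoc]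
      refine mul_le_mul_of_nonneg_left (mul_le_mul_of_nonneg_right ?_ (Real.exp_pos _).le)
        (abs_nonneg _)
      linarith [hb n]
    have hXs : Summable X := by
      refine Summable.of_norm ?_
      rw [summable_prod_of_nonneg (fun _ => norm_nonneg _)]
      have h1 : ∀ m, Summable fun n => ‖X (m, n)‖ := fun m =>
        Summable.of_nonneg_of_le (fun _ => norm_nonneg _) (hXn m) ((hA m).1.mul_right _)
      refine ⟨h1, Summable.of_nonneg_of_le (fun n => tsum_nonneg fun _ => norm_nonneg _)
        (fun m => ((h1 m).tsum_le_tsum (hXn m) ((hA m).1.mul_right _)))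
        (Summable.of_nonneg_of_le (fun m => tsum_nonneg fun _ => by positivity) (fun m => ?_)
        ((Real.summable_exp_nat_mul_iff.2 (by have := mul_pos hh hzr; linarith :
          -(h * z.re) < 0)).mul_left (2 * (4 * Real.pi * δ))))⟩
      rw [tsum_mul_right]
      have := mul_le_mul_of_nonneg_right (hA m).2
        (show 0 ≤ 4 * Real.pi * δ * Real.exp (m * (-(h * z.re))) by positivity)
      linarith
    have hrow : ∀ m, HasSum (fun n => X (m, n)) ((a m : ℂ) * cexp (-(h * z * m))) := fun m =>
      (Complex.hasSum_ofReal.2 (hAb m)).mul_right _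
    have hcolX : ∀ n, HasSum (fun m => X (m, n))
        ((b n : ℂ) * (colExp h ε n₀ n z - colErr h ε n₀ n z)) := fun n => by
      refine ((hcol n).mul_left (b n : ℂ)).congr_fun fun m => ?_
      simp only [hX]; push_cast; ring
    have t1 := hXs.hasSum.prod_fiberwise hrow
    have t2 := ((Equiv.prodComm ℕ ℕ).hasSum_iff.2 hXs.hasSum).prod_fiberwise (f := X ∘ (Equiv.prodComm ℕ ℕ)) hcolX
    have hU := hS.unique t1
    have hErr : Summable fun n => (b n : ℂ) * colErr h ε n₀ n z :=
      Summable.of_norm_bounded (hZs.mul_left (16 * Real.pi * δ)) (hberr z hz)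
    have hE := t2.add hErr.hasSum
    have hfin : HasSum (fun n => if n ∈ Finset.range n₀ then (b n : ℂ) * cexp (-(h * z * n)) else 0)
        (∑ n ∈ Finset.range n₀, (b n : ℂ) * cexp (-(h * z * n))) := by
      have := hasSum_sum_of_ne_finset_zero (L := .unconditional ℕ) (s := Finset.range n₀)
        (f := fun n => if n ∈ Finset.range n₀ then (b n : ℂ) * cexp (-(h * z * n)) else 0)
        (fun n hn => by simp only [hn, if_false])
      convert this using 1
      exact Finset.sum_congr rfl fun n hn => by simp only [hn, if_true]
    obtain ⟨hs1, hs2⟩ := hrS z hzr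
    have hE2 := hfin.add hs1.hasSum
    rw [hs2] at hE2
    have hE3 := hE2.unique (hE.congr_fun fun n => ?_)
    · linear_combination hE3 - hU
    · unfold colExp
      by_cases hn : n₀ ≤ n
      · simp only [hn, if_true, Finset.mem_range, not_lt.2 hn, if_false]; ring
      · simp only [hn, if_false, Finset.mem_range, not_le.1 hn, if_true]; ring

/-! ### Damping -/

lemma pow_mul_exp_le {σ τ : ℝ} (hσ : 0 < σ) (hτ : 0 ≤ τ) (j : ℕ) :
    τ ^ j * Real.exp (-(σ * τ)) ≤ j.factorial * (2 / σ) ^ j * Real.exp (-(σ / 2 * τ)) := by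
  have h1 := Real.pow_div_factorial_le_exp (σ / 2 * τ) (by positivity) j
  rw [div_le_iff₀ (by positivity)] at h1
  have h2 : τ ^ j = (2 / σ) ^ j * (σ / 2 * τ) ^ j := by
    rw [← mul_pow]; congr 1; field_simp
  have h3 : Real.exp (-(σ * τ)) = Real.exp (-(σ / 2 * τ)) * Real.exp (-(σ / 2 * τ)) := by
    rw [← Real.exp_add]; congr 1; ring
  have h4 : Real.exp (σ / 2 * τ) * Real.exp (-(σ / 2 * τ)) = 1 := by
    rw [← Real.exp_add]; simp
  rw [h2, h3]
  calc (2 / σ) ^ j * (σ / 2 * τ) ^ j * (Real.exp (-(σ / 2 * τ)) * Real.exp (-(σ / 2 * τ)))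
      ≤ (2 / σ) ^ j * (Real.exp (σ / 2 * τ) * j.factorial) *
        (Real.exp (-(σ / 2 * τ)) * Real.exp (-(σ / 2 * τ))) := by gcongr
    _ = j.factorial * (2 / σ) ^ j * (Real.exp (σ / 2 * τ) * Real.exp (-(σ / 2 * τ))) *
        Real.exp (-(σ / 2 * τ)) := by ring
    _ = _ := by rw [h4]; ring

/-- Successive differentiation of a generalised Laplace transform `∫ h e^{-wτ}`, valid both for
integrals and (through counting measure) for Dirichlet series. -/
lemma laplace_deriv {X : Type*} [MeasurableSpace X] {ν : Measure X} {h : X → ℂ} {τ : X → ℝ}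
    (hm : AEStronglyMeasurable h ν) (hτ : Measurable τ) (h0 : ∀ᵐ x ∂ν, 0 ≤ τ x)
    (hi : ∀ σ : ℝ, 0 < σ → Integrable (fun x => ‖h x‖ * Real.exp (-(σ * τ x))) ν) (j : ℕ)
    {w : ℂ} (hw : 0 < w.re) :
    Integrable (fun x => h x * (-(τ x : ℂ)) ^ j * cexp (-(w * τ x))) ν ∧
    HasDerivAt (fun w => ∫ x, h x * (-(τ x : ℂ)) ^ j * cexp (-(w * τ x)) ∂ν)
      (∫ x, h x * (-(τ x : ℂ)) ^ (j + 1) * cexp (-(w * τ x)) ∂ν) w := by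
  have hmeas : ∀ (i : ℕ) (v : ℂ),
      AEStronglyMeasurable (fun x => h x * (-(τ x : ℂ)) ^ i * cexp (-(v * τ x))) ν := by
    intro i v
    have h1 : Measurable fun x => (-(τ x : ℂ)) ^ i := by fun_prop
    have h2 : Measurable fun x => cexp (-(v * τ x)) := by fun_prop
    exact (hm.mul h1.aestronglyMeasurable).mul h2.aestronglyMeasurable
  have hbd : ∀ i : ℕ, ∀ σ : ℝ, 0 < σ → ∀ᵐ x ∂ν, ∀ v : ℂ, σ ≤ v.re →
      ‖h x * (-(τ x : ℂ)) ^ i * cexp (-(v * τ x))‖ ≤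
        (i.factorial * (2 / σ) ^ i) * (‖h x‖ * Real.exp (-(σ / 2 * τ x))) := by
    intro i σ hσ
    filter_upwards [h0] with x hx v hv
    rw [norm_mul, norm_mul, norm_exp_neg_mul, norm_pow, norm_neg, Complex.norm_of_nonneg hx]
    have := pow_mul_exp_le hσ hx i
    have h2 : Real.exp (-(v.re * τ x)) ≤ Real.exp (-(σ * τ x)) := by
      rw [Real.exp_le_exp]; nlinarith
    calc ‖h x‖ * τ x ^ i * Real.exp (-(v.re * τ x))
        ≤ ‖h x‖ * (τ x ^ i * Real.exp (-(σ * τ x))) := by rw [mul_assoc]; gcongr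
      _ ≤ ‖h x‖ * (i.factorial * (2 / σ) ^ i * Real.exp (-(σ / 2 * τ x))) := by gcongr
      _ = _ := by ring
  have hIntg : Integrable (fun x => h x * (-(τ x : ℂ)) ^ j * cexp (-(w * τ x))) ν :=
    ((hi (w.re / 2) (by positivity)).const_mul _).mono' (hmeas j w)
      ((hbd j w.re hw).mono fun x hx => hx w le_rfl)
  refine ⟨hIntg, ?_⟩
  refine (hasDerivAt_integral_of_dominated_loc_of_deriv_le
    (s := {v : ℂ | w.re / 2 < v.re})
    (F := fun w x => h x * (-(τ x : ℂ)) ^ j * cexp (-(w * τ x)))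
    (F' := fun w x => h x * (-(τ x : ℂ)) ^ (j + 1) * cexp (-(w * τ x)))
    ((isOpen_lt continuous_const continuous_re).mem_nhds (by simpa using hw))
    (Eventually.of_forall fun v => hmeas j v) hIntg (hmeas (j + 1) w)
    ((hbd (j + 1) (w.re / 2) (by positivity)).mono fun x hx v hv => hx v (le_of_lt hv))
    ((hi (w.re / 2 / 2) (by positivity)).const_mul _) (ae_of_all _ fun x v _ => ?_)).2
  have h1 : HasDerivAt (fun w : ℂ => -(w * τ x)) (-(1 * (τ x : ℂ))) v :=
    ((hasDerivAt_id v).mul_const _).neg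
  have h2 := h1.cexp.const_mul (h x * (-(τ x : ℂ)) ^ j)
  have h3 : h x * (-(τ x : ℂ)) ^ (j + 1) * cexp (-(v * τ x)) =
      h x * (-(τ x : ℂ)) ^ j * (cexp (-(v * τ x)) * -(1 * (τ x : ℂ))) := by ring
  rw [h3]
  exact h2

lemma iteratedDeriv_eq_chain {U : Set ℂ} (hU : IsOpen U) {F : ℕ → ℂ → ℂ} {G : ℂ → ℂ}
    (hF : ∀ j, ∀ w ∈ U, HasDerivAt (F j) (F (j + 1) w) w) (hG : ∀ w ∈ U, G w = F 0 w) (j : ℕ) :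
    ∀ w ∈ U, iteratedDeriv j G w = F j w := by
  induction j with
  | zero => simpa using hG
  | succ j ih =>
    intro w hw
    rw [iteratedDeriv_succ]
    have : iteratedDeriv j G =ᶠ[𝓝 w] F j := by
      filter_upwards [hU.mem_nhds hw] with v hv using ih v hv
    rw [this.deriv_eq, (hF j w hw).deriv]

/-- The damping factor: `e^{-t/2}` times a Taylor polynomial of `e^{t/2}`. It lies in `[0, 1]`,
is close to `1` on any bounded interval when `k` is large, and multiplication by it acts on
Laplace transforms as a differential operator of finite order composed with a shift by `1/2`. -/
noncomputable def damp (k : ℕ) (t : ℝ) : ℝ :=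
  Real.exp (-(t / 2)) * ∑ j ∈ Finset.range k, (t / 2) ^ j / j.factorial

lemma damp_nonneg (k : ℕ) {t : ℝ} (ht : 0 ≤ t) : 0 ≤ damp k t := by
  unfold damp; positivity

lemma measurable_damp (k : ℕ) : Measurable (damp k) := by
  unfold damp; fun_prop

lemma hasSum_exp_real (x : ℝ) : HasSum (fun n : ℕ => x ^ n / n.factorial) (Real.exp x) := by
  rw [Real.exp_eq_exp_ℝ]; exact NormedSpace.expSeries_div_hasSum_exp x

lemma damp_le_one (k : ℕ) {t : ℝ} (ht : 0 ≤ t) : damp k t ≤ 1 := by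
  have h1 : ∑ j ∈ Finset.range k, (t / 2) ^ j / j.factorial ≤ Real.exp (t / 2) :=
    sum_le_hasSum _ (fun _ _ => by positivity) (hasSum_exp_real _)
  calc damp k t ≤ Real.exp (-(t / 2)) * Real.exp (t / 2) := by unfold damp; gcongr
    _ = 1 := by rw [← Real.exp_add]; simp

lemma exists_damp_ge (B : ℝ) : ∃ k, ∀ t, 0 ≤ t → t ≤ B → 1 / 2 ≤ damp k t := by
  by_cases hB : 0 ≤ B
  swap
  · exact ⟨0, fun t h1 h2 => absurd (h1.trans h2) hB⟩
  have h := (hasSum_exp_real (B / 2)).tendsto_sum_nat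
  obtain ⟨k, hk⟩ := (h.eventually (lt_mem_nhds
    (show Real.exp (B / 2) - 1 / 2 < Real.exp (B / 2) by linarith))).exists
  refine ⟨k, fun t ht htB => ?_⟩
  -- the Taylor remainder has nonnegative coefficients, hence increases with `t`
  have e1 := (hasSum_nat_add_iff' k).2 (hasSum_exp_real (t / 2))
  have e2 := (hasSum_nat_add_iff' k).2 (hasSum_exp_real (B / 2))
  have hle : Real.exp (t / 2) - ∑ j ∈ Finset.range k, (t / 2) ^ j / j.factorial ≤ 1 / 2 := by
    have := hasSum_le (fun n => ?_) e1 e2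
    · linarith
    · gcongr
  have h1 : 1 ≤ Real.exp (t / 2) := Real.one_le_exp (by positivity)
  have h2 : Real.exp (-(t / 2)) * Real.exp (t / 2) = 1 := by rw [← Real.exp_add]; simp
  have h3 : 0 < Real.exp (-(t / 2)) := Real.exp_pos _
  unfold damp
  nlinarith

lemma damp_mul_exp (k : ℕ) (t : ℝ) (z : ℂ) :
    (damp k t : ℂ) * cexp (-(z * t)) = ∑ j ∈ Finset.range k,
      ((-1 / 2) ^ j / j.factorial : ℂ) * ((-(t : ℂ)) ^ j * cexp (-((z + 1 / 2) * t))) := by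
  have h : cexp (-((z + 1 / 2) * t)) = cexp (-(t / 2)) * cexp (-(z * t)) := by
    rw [← Complex.exp_add]; congr 1; ring
  unfold damp
  push_cast
  rw [h, Finset.mul_sum, Finset.sum_mul]
  refine Finset.sum_congr rfl fun j _ => ?_
  rw [show (t / 2 : ℂ) = (-1 / 2) * (-t) by ring, mul_pow]
  ring

/-- The density lemma with analytic continuation of the difference past the imaginary axis at
all heights: the difference transform is holomorphic on `Re z > -1/2`, and of size `O(δ)` for
`|Im z| < T`. -/
lemma exists_damped {T : ℝ} (hT : 0 < T) : ∃ C : ℝ, 0 < C ∧ ∀ (δ B : ℝ) (f : ℝ → ℝ),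
    Measurable f → (∀ t, |f t| ≤ δ) → (∀ t, t ∉ Icc 1 B → f t = 0) →
    ∃ r : ℕ → ℝ, (∀ n, |r n| ≤ C * δ) ∧ ∃ D : ℂ → ℂ,
      DifferentiableOn ℂ D {z | -1 / 2 < z.re} ∧
      (∀ z : ℂ, -1 / 2 < z.re → |z.im| < T → ‖D z‖ ≤ C * δ) ∧
      ∀ z : ℂ, 0 < z.re → D z = (∫ t, (f t : ℂ) * cexp (-(z * t))) -
        ∑' n, (r n : ℂ) * pw n * cexp (-(z * lg n)) := by
  obtain ⟨C, hC, H⟩ := exists_density (show 0 < T + 1 by linarith)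
  refine ⟨6 * C, by positivity, fun δ B f hf hfδ hfB => ?_⟩
  have hδ : 0 ≤ δ := (abs_nonneg _).trans (hfδ 0)
  obtain ⟨k, hk⟩ := exists_damp_ge B
  set g : ℝ → ℝ := fun t => f t / damp k t with hg
  have hgm : Measurable g := hf.div (measurable_damp k)
  have hgB : ∀ t, t ∉ Icc 1 B → g t = 0 := fun t ht => by simp [hg, hfB t ht]
  have hgδ : ∀ t, |g t| ≤ 2 * δ := by
    intro t
    by_cases ht : t ∈ Icc 1 B
    · have h1 := hk t (by linarith [ht.1]) ht.2
      simp only [hg]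
      rw [abs_div, abs_of_pos (a := damp k t) (by linarith), div_le_iff₀ (by linarith)]
      nlinarith [hfδ t]
    · rw [hgB t ht, abs_zero]; positivity
  have hgf : ∀ t, g t * damp k t = f t := by
    intro t
    by_cases ht : t ∈ Icc 1 B
    · have h1 := hk t (by linarith [ht.1]) ht.2
      exact div_mul_cancel₀ _ (by linarith)
    · rw [hgB t ht, hfB t ht, zero_mul]
  obtain ⟨r, hr, G, hGd, hGb, hG⟩ := H (2 * δ) B g hgm hgδ hgB
  set A : ℕ → ℂ → ℂ := fun j w => ∫ t in Icc 1 B, (g t : ℂ) * (-(t : ℂ)) ^ j * cexp (-(w * t)) with hA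
  set S : ℕ → ℂ → ℂ := fun j w => ∑' n : ℕ, ((r n : ℂ) * pw n) * (-(lg n : ℂ)) ^ j *
    cexp (-(w * lg n)) with hS
  have hgi : ∀ σ : ℝ, 0 < σ → Integrable (fun t : ℝ => ‖(g t : ℂ)‖ * Real.exp (-(σ * t)))
      (volume.restrict (Icc 1 B)) := by
    intro σ hσ
    have : IntegrableOn (fun t : ℝ => 2 * δ) (Icc 1 B) :=
      continuousOn_const.integrableOn_compact isCompact_Icc
    refine Integrable.mono' this (by fun_prop) ?_
    filter_upwards [ae_restrict_mem measurableSet_Icc] with t ht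
    rw [norm_mul, norm_norm, Complex.norm_real, Real.norm_of_nonneg (Real.exp_pos _).le]
    have h1 : Real.exp (-(σ * t)) ≤ 1 := by
      rw [Real.exp_le_one_iff]; nlinarith [ht.1]
    have := hgδ t
    rw [← Real.norm_eq_abs] at this
    calc _ ≤ ‖g t‖ * 1 := by gcongr
      _ ≤ _ := by linarith
  have LA := fun (j : ℕ) (w : ℂ) (hw : 0 < w.re) => laplace_deriv (ν := volume.restrict (Icc 1 B))
    (h := fun t => (g t : ℂ)) (τ := fun t : ℝ => t) (by fun_prop) measurable_id
    ((ae_restrict_mem measurableSet_Icc).mono fun t ht => by linarith [ht.1]) hgi j hw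
  have LS := fun (j : ℕ) (w : ℂ) (hw : 0 < w.re) => laplace_deriv (ν := Measure.count)
    (h := fun n : ℕ => (r n : ℂ) * pw n) (τ := lg) (by fun_prop) (by fun_prop)
    (ae_of_all _ lg_nonneg) (fun σ hσ => by
      rw [integrable_count_iff]
      refine Summable.of_nonneg_of_le (fun _ => norm_nonneg _) (fun n => ?_)
        ((summable_vw_exp hσ).mul_left (C * (2 * δ)))
      rw [norm_mul, norm_norm, norm_mul, Complex.norm_real, Complex.norm_of_nonneg (pw_nonneg n),
        Real.norm_of_nonneg (Real.exp_pos _).le, mul_assoc]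
      have := pw_le_vw n
      have := pw_nonneg n
      exact mul_le_mul (hr n) (by gcongr) (by positivity) (by positivity)) j hw
  have hSs : ∀ j w, 0 < w.re → Summable fun n : ℕ => ((r n : ℂ) * pw n) * (-(lg n : ℂ)) ^ j *
      cexp (-(w * lg n)) := fun j w hw => (integrable_count_iff.1 (LS j w hw).1).of_norm
  have hSe : ∀ j w, 0 < w.re → ∫ n : ℕ, ((r n : ℂ) * pw n) * (-(lg n : ℂ)) ^ j *
      cexp (-(w * lg n)) ∂Measure.count = S j w := by
    intro j w hw
    rw [integral_countable (LS j w hw).1]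
    simp [hS]
  have hAd : ∀ j w, 0 < w.re → HasDerivAt (A j) (A (j + 1) w) w := fun j w hw => (LA j w hw).2
  have hopen : IsOpen {w : ℂ | 0 < w.re} := isOpen_lt continuous_const continuous_re
  have hSd : ∀ j w, 0 < w.re → HasDerivAt (S j) (S (j + 1) w) w := by
    intro j w hw
    have := (LS j w hw).2
    rw [hSe _ _ hw] at this
    refine this.congr_of_eventuallyEq ?_
    filter_upwards [hopen.mem_nhds hw] with v hv using (hSe j v hv).symm
  set c : ℕ → ℂ := fun j => (-1 / 2) ^ j / j.factorial with hc
  set D : ℂ → ℂ := fun z => ∑ j ∈ Finset.range k, c j * (A j (z + 1 / 2) - S j (z + 1 / 2)) with hD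
  refine ⟨fun n => r n * damp k (lg n), fun n => ?_, D, ?_, ?_, ?_⟩
  · rw [abs_mul, abs_of_nonneg (damp_nonneg k (lg_nonneg n))]
    have := mul_le_mul (hr n) (damp_le_one k (lg_nonneg n)) (damp_nonneg k (lg_nonneg n))
      (by positivity)
    nlinarith
  · intro z hz
    refine DifferentiableAt.differentiableWithinAt ?_
    have hz' : 0 < (z + 1 / 2).re := by
      have : -1 / 2 < z.re := hz
      simp only [add_re, one_div, inv_re, re_ofNat, normSq_ofNat]; linarith
    refine DifferentiableAt.fun_sum fun j _ => DifferentiableAt.const_mul ?_ _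
    have := ((hAd j _ hz').sub (hSd j _ hz')).differentiableAt
    exact this.comp z (differentiableAt_id.add_const _)
  · intro z hz hzT
    have hz' : 0 < (z + 1 / 2).re := by
      simp only [add_re, one_div, inv_re, re_ofNat, normSq_ofNat]; linarith
    have hzi : (z + 1 / 2).im = z.im := by simp
    set w := z + 1 / 2
    set U : Set ℂ := {w | 0 < w.re} ∩ Om (T + 1)
    have hU : IsOpen U := hopen.inter (isOpen_Om _)
    have hwU : w ∈ U := ⟨hz', by linarith, by rw [hzi]; linarith⟩
    have hit := fun j => iteratedDeriv_eq_chain hU (F := fun j w => A j w - S j w) (G := G)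
      (fun j w hw => (hAd j w hw.1).sub (hSd j w hw.1)) (fun w hw => by
        rw [hG w hw.2 hw.1]
        simp only [hA, hS, pow_zero, mul_one]
        congr 1
        refine (setIntegral_eq_integral_of_forall_compl_eq_zero fun t ht => ?_).symm
        rw [hgB t ht]; simp) j w hwU
    have hball : Metric.closedBall w (3 / 4) ⊆ Om (T + 1) := by
      intro v hv
      rw [Metric.mem_closedBall, dist_eq] at hv
      have h1 := (abs_re_le_norm (v - w)).trans hv
      have h2 := (abs_im_le_norm (v - w)).trans hv
      rw [sub_re, abs_le] at h1
      rw [sub_im] at h2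
      refine ⟨by linarith [h1.1], ?_⟩
      have := abs_sub_abs_le_abs_sub v.im w.im
      rw [hzi] at this h2
      linarith
    have hcau : ∀ j, ‖c j * (A j w - S j w)‖ ≤ C * (2 * δ) * (2 / 3) ^ j := by
      intro j
      have := Complex.norm_iteratedDeriv_le_of_forall_mem_sphere_norm_le j
        (show (0 : ℝ) < 3 / 4 by norm_num)
        ((hGd.mono hball).diffContOnCl_ball subset_rfl)
        (fun v hv => hGb v (hball (Metric.sphere_subset_closedBall hv)))
      rw [hit j] at this
      have hcj : ‖c j‖ = (1 / 2) ^ j / j.factorial := by simp [hc]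
      rw [norm_mul, hcj]
      calc (1 / 2) ^ j / (j.factorial : ℝ) * ‖A j w - S j w‖
          ≤ (1 / 2) ^ j / (j.factorial : ℝ) * (j.factorial * (C * (2 * δ)) / (3 / 4) ^ j) := by
            gcongr
        _ = C * (2 * δ) * ((1 / 2) ^ j / (3 / 4) ^ j) := by
            have : (j.factorial : ℝ) ≠ 0 := by positivity
            field_simp
        _ = _ := by rw [← div_pow]; norm_num
    refine (norm_sum_le_of_le _ fun j _ => hcau j).trans ?_
    rw [← Finset.mul_sum]
    have hgeo : ∑ j ∈ Finset.range k, (2 / 3 : ℝ) ^ j ≤ 3 :=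
      (sum_le_hasSum _ (fun _ _ => by positivity)
        (hasSum_geometric_of_lt_one (by norm_num) (by norm_num))).trans (by norm_num)
    calc C * (2 * δ) * ∑ j ∈ Finset.range k, (2 / 3 : ℝ) ^ j ≤ C * (2 * δ) * 3 := by gcongr
      _ = _ := by ring
  · intro z hz
    have hz' : 0 < (z + 1 / 2).re := by
      simp only [add_re, one_div, inv_re, re_ofNat, normSq_ofNat]; linarith
    have e1 : ∫ t, (f t : ℂ) * cexp (-(z * t)) = ∑ j ∈ Finset.range k, c j * A j (z + 1 / 2) := by
      rw [← setIntegral_eq_integral_of_forall_compl_eq_zero (s := Icc 1 B)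
        (fun t ht => by rw [hfB t ht]; simp)]
      simp only [hA, ← integral_const_mul]
      rw [← integral_finsetSum _ fun j _ => (LA j _ hz').1.const_mul _]
      refine integral_congr_ae (ae_of_all _ fun t => ?_)
      simp only
      rw [← hgf t, ofReal_mul, mul_assoc, damp_mul_exp, Finset.mul_sum]
      refine Finset.sum_congr rfl fun j _ => ?_
      simp only [hc]; ring
    have e2 : ∑' n, ((r n * damp k (lg n) : ℝ) : ℂ) * pw n * cexp (-(z * lg n)) =
        ∑ j ∈ Finset.range k, c j * S j (z + 1 / 2) := by
      simp only [hS, ← tsum_mul_left]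
      rw [← Summable.tsum_finsetSum fun j _ => (hSs j _ hz').mul_left _]
      refine tsum_congr fun n => ?_
      have : ((r n * damp k (lg n) : ℝ) : ℂ) * pw n * cexp (-(z * lg n)) =
        (r n : ℂ) * pw n * ((damp k (lg n) : ℂ) * cexp (-(z * lg n))) := by push_cast; ring
      rw [this, damp_mul_exp, Finset.mul_sum]
      refine Finset.sum_congr rfl fun j _ => ?_
      simp only [hc]; ring
    rw [e1, e2, ← Finset.sum_sub_distrib]
    simp only [hD, mul_sub]

/-! ### Gluing the pieces -/

lemma norm_pw_term {C : ℝ} {r : ℕ → ℝ} (hr : ∀ n, |r n| ≤ C) (z : ℂ) (n : ℕ) :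
    ‖(r n : ℂ) * pw n * cexp (-(z * lg n))‖ ≤ C * (vw n * Real.exp (-(z.re * lg n))) := by
  have hC : 0 ≤ C := (abs_nonneg _).trans (hr 0)
  rw [norm_mul, norm_mul, Complex.norm_real, Complex.norm_of_nonneg (pw_nonneg n),
    norm_exp_neg_mul, mul_assoc]
  have := pw_le_vw n
  have := pw_nonneg n
  exact mul_le_mul (hr n) (by gcongr) (by positivity) hC

lemma exists_abs_bound {g : ℝ → ℝ} (hg : Continuous g) (hg0 : Tendsto g atTop (𝓝 0)) :
    ∃ K, ∀ t, 0 ≤ t → |g t| ≤ K := by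
  have h1 : ∀ᶠ t in atTop, |g t| ≤ 1 := by
    have := hg0.abs
    rw [abs_zero] at this
    exact (this.eventually (gt_mem_nhds one_pos)).mono fun _ h => h.le
  obtain ⟨a, ha⟩ := eventually_atTop.1 h1
  obtain ⟨K, hK⟩ := isCompact_Icc.exists_bound_of_continuousOn (s := Icc 0 a) hg.continuousOn
  refine ⟨max K 1, fun t ht => ?_⟩
  rcases le_total t a with h | h
  · exact (hK t ⟨ht, h⟩).trans (le_max_left _ _)
  · exact (ha t h).trans (le_max_right _ _)

lemma integrableOn_laplace {g : ℝ → ℝ} (hg : Continuous g) (hg0 : Tendsto g atTop (𝓝 0))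
    {z : ℂ} (hz : 0 < z.re) :
    IntegrableOn (fun t => (g t : ℂ) * cexp (-(z * t))) (Ici 0) := by
  obtain ⟨K, hK⟩ := exists_abs_bound hg hg0
  rw [integrableOn_Ici_iff_integrableOn_Ioi]
  have h1 : IntegrableOn (fun t : ℝ => K * Real.exp (-z.re * t)) (Ioi 0) :=
    (integrableOn_exp_mul_Ioi (by linarith) 0).const_mul K
  refine Integrable.mono' h1 (by fun_prop) ?_
  filter_upwards [ae_restrict_mem measurableSet_Ioi] with t ht
  rw [norm_mul, Complex.norm_real, norm_exp_neg_mul, ← neg_mul]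
  exact mul_le_mul_of_nonneg_right (hK t (le_of_lt ht)) (Real.exp_pos _).le

/-- A continuous function tending to `0` has the same Laplace
transform, up to a function holomorphic on `Re z > -1/2`, as a prime sum with real coefficients
of modulus at most `1`. -/
lemma exists_coefficients {g : ℝ → ℝ} (hg : Continuous g) (hg0 : Tendsto g atTop (𝓝 0)) :
    ∃ r : ℕ → ℝ, (∀ n, |r n| ≤ 1) ∧ ∃ D : ℂ → ℂ, DifferentiableOn ℂ D {z | -1 / 2 < z.re} ∧
      ∀ z : ℂ, 0 < z.re → D z = (∫ t in Ici 0, (g t : ℂ) * cexp (-(z * t))) -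
        ∑' n, (r n : ℂ) * pw n * cexp (-(z * lg n)) := by
  choose C hC H using fun N : ℕ => exists_damped (show (0 : ℝ) < N + 1 by positivity)
  -- the pieces are cut so late that the `N`-th error is at most `2^{-N-1}`
  set δ : ℕ → ℝ := fun N => (1 / 2) ^ (N + 1) / C N with hδ
  have hδ0 : ∀ N, 0 < δ N := fun N => div_pos (by positivity) (hC N)
  have hCδ : ∀ N, C N * δ N = (1 / 2) ^ (N + 1) := fun N => mul_div_cancel₀ _ (hC N).ne'
  have hex : ∀ N, ∃ a : ℝ, ∀ t, a ≤ t → |g t| ≤ δ N := by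
    intro N
    have := hg0.abs
    rw [abs_zero] at this
    exact eventually_atTop.1 ((this.eventually (gt_mem_nhds (hδ0 N))).mono fun _ h => h.le)
  choose σ hσ using hex
  set τ : ℕ → ℝ := fun N => 1 + N + ∑ i ∈ Finset.range (N + 1), |σ i| with hτ
  have hτm : Monotone τ := monotone_nat_of_le_succ fun N => by
    simp only [hτ]
    rw [Finset.sum_range_succ _ (N + 1)]
    push_cast
    linarith [abs_nonneg (σ (N + 1))]
  have hτge : ∀ N : ℕ, 1 + (N : ℝ) ≤ τ N := fun N => by
    have : 0 ≤ ∑ i ∈ Finset.range (N + 1), |σ i| := Finset.sum_nonneg fun _ _ => abs_nonneg _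
    simp only [hτ]; linarith
  have hτσ : ∀ N, σ N ≤ τ N := fun N => by
    have h1 : |σ N| ≤ ∑ i ∈ Finset.range (N + 1), |σ i| :=
      Finset.single_le_sum (f := fun i => |σ i|) (fun _ _ => abs_nonneg _) (by simp)
    have := le_abs_self (σ N)
    have : (0 : ℝ) ≤ N := N.cast_nonneg
    simp only [hτ]; linarith
  have hτ1 : ∀ N, 1 ≤ τ N := fun N => by
    have : (0 : ℝ) ≤ N := N.cast_nonneg
    linarith [hτge N]
  have hτt : Tendsto τ atTop atTop := by
    refine tendsto_atTop_mono hτge ?_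
    exact tendsto_atTop_add_const_left _ _ tendsto_natCast_atTop_atTop
  set f : ℕ → ℝ → ℝ := fun N => (Ico (τ N) (τ (N + 1))).indicator g with hf
  have hfδ : ∀ N t, |f N t| ≤ δ N := by
    intro N t
    simp only [hf, indicator]
    split_ifs with h
    · exact hσ N t ((hτσ N).trans h.1)
    · rw [abs_zero]; exact (hδ0 N).le
  choose r hr D hDd hDb hD using fun N => H N (δ N) (τ (N + 1)) (f N)
    (hg.measurable.indicator measurableSet_Ico) (hfδ N) (fun t ht => by
      simp only [hf]
      exact indicator_of_notMem (fun h => ht ⟨(hτ1 N).trans h.1, h.2.le⟩) _)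
  simp only [hCδ] at hr hDb
  have hgeo : HasSum (fun N : ℕ => (1 / 2 : ℝ) ^ (N + 1)) 1 := by
    have := (hasSum_geometric_of_lt_one (r := (1 / 2 : ℝ)) (by norm_num) (by norm_num)).mul_left
      (1 / 2)
    norm_num at this
    refine this.congr_fun fun n => ?_
    rw [pow_succ]; ring
  have hrs : ∀ n, Summable fun N => r N n := fun n =>
    Summable.of_norm_bounded hgeo.summable fun N => hr N n
  -- at height below `M`, all pieces from the `M`-th on are uniformly small
  have hDM : ∀ (M N : ℕ) (z : ℂ), -1 / 2 < z.re → |z.im| < M →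
      ‖D (N + M) z‖ ≤ (1 / 2) ^ (N + 1) := by
    intro M N z hz hzM
    refine (hDb (N + M) z hz ?_).trans ?_
    · push_cast
      have : (0 : ℝ) ≤ N := N.cast_nonneg
      linarith
    · exact pow_le_pow_of_le_one (by norm_num) (by norm_num) (by omega)
  have hDs : ∀ z : ℂ, -1 / 2 < z.re → Summable fun N => D N z := by
    intro z hz
    obtain ⟨M, hM⟩ := exists_nat_gt |z.im|
    rw [← summable_nat_add_iff M]
    exact Summable.of_norm_bounded hgeo.summable fun N => hDM M N z hz hM
  refine ⟨fun n => ∑' N, r N n, fun n => ?_,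
    fun z => (∫ t in Ico 0 (τ 0), (g t : ℂ) * cexp (-(z * t))) + ∑' N, D N z, ?_, ?_⟩
  · exact tsum_of_norm_bounded (f := fun N => r N n) hgeo fun N => hr N n
  · have hopen : IsOpen {z : ℂ | -1 / 2 < z.re} := isOpen_lt continuous_const continuous_re
    refine DifferentiableOn.add ?_ ?_
    · obtain ⟨K, hK⟩ := exists_abs_bound hg hg0
      have hK0 : 0 ≤ K := (abs_nonneg _).trans (hK 0 le_rfl)
      have hIntg : IntegrableOn (fun t : ℝ => K * Real.exp (t / 2)) (Ico 0 (τ 0)) :=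
        ((by fun_prop : Continuous fun t : ℝ => K * Real.exp (t / 2)).integrableOn_Icc
          (a := 0) (b := τ 0)).mono_set Ico_subset_Icc_self
      refine differentiableOn_integral hopen (fun w _ => by fun_prop)
        (ae_of_all _ fun t => by fun_prop) hIntg ?_
      filter_upwards [ae_restrict_mem measurableSet_Ico] with t ht w hw
      rw [norm_mul, Complex.norm_real, norm_exp_neg_mul]
      refine mul_le_mul (hK t ht.1) ?_ (Real.exp_pos _).le hK0
      rw [Real.exp_le_exp]
      have : -1 / 2 < w.re := hw
      nlinarith [ht.1]
    · intro z hz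
      obtain ⟨M, hM⟩ := exists_nat_gt |z.im|
      set U : Set ℂ := {z | -1 / 2 < z.re} ∩ {z | |z.im| < M} with hU
      have hUo : IsOpen U := hopen.inter (isOpen_lt continuous_im.abs continuous_const)
      have hzU : z ∈ U := ⟨hz, hM⟩
      have h1 : DifferentiableOn ℂ (fun z => ∑ N ∈ Finset.range M, D N z + ∑' N, D (N + M) z) U := by
        refine DifferentiableOn.add ?_ ?_
        · exact DifferentiableOn.fun_sum fun N _ => (hDd N).mono inter_subset_left
        · exact differentiableOn_tsum_of_summable_norm hgeo.summable
            (fun N => (hDd (N + M)).mono inter_subset_left) hUo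
            fun N w hw => hDM M N w hw.1 hw.2
      have h2 := h1.differentiableAt (hUo.mem_nhds hzU)
      refine (h2.congr_of_eventuallyEq ?_).differentiableWithinAt
      filter_upwards [hUo.mem_nhds hzU] with w hw
      exact ((hDs w hw.1).sum_add_tsum_nat_add M).symm
  · intro z hz
    have hi := integrableOn_laplace hg hg0 hz
    have hdisj := hτm.pairwise_disjoint_on_Ico_succ
    have hun : ⋃ N, Ico (τ N) (τ (N + 1)) = Ici (τ 0) := by
      have := iUnion_Ico_map_succ_eq_Ici (fun a => hτm (bot_le : ⊥ ≤ a)) (not_bddAbove_of_tendsto_atTop hτt)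
      simpa using this
    have hsub : Ici (τ 0) ⊆ Ici 0 := Ici_subset_Ici.2 (by linarith [hτ1 0])
    have hS := hasSum_integral_iUnion (μ := volume) (f := fun t => (g t : ℂ) * cexp (-(z * t)))
      (s := fun N => Ico (τ N) (τ (N + 1))) (fun _ => measurableSet_Ico) hdisj
      (by rw [hun]; exact hi.mono_set hsub)
    rw [hun] at hS
    have hpiece : ∀ N, ∫ t in Ico (τ N) (τ (N + 1)), (g t : ℂ) * cexp (-(z * t)) =
        ∫ t, (f N t : ℂ) * cexp (-(z * t)) := by
      intro N
      rw [← integral_indicator measurableSet_Ico]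
      refine integral_congr_ae (ae_of_all _ fun t => ?_)
      simp only [hf, indicator]
      split_ifs <;> simp
    have hsplit : ∫ t in Ici 0, (g t : ℂ) * cexp (-(z * t)) =
        (∫ t in Ico 0 (τ 0), (g t : ℂ) * cexp (-(z * t))) +
          ∫ t in Ici (τ 0), (g t : ℂ) * cexp (-(z * t)) := by
      rw [← Ico_union_Ici_eq_Ici (show (0 : ℝ) ≤ τ 0 by linarith [hτ1 0])]
      refine setIntegral_union ?_ measurableSet_Ici (hi.mono_set Ico_subset_Ici_self)
        (hi.mono_set hsub)
      rw [Set.disjoint_left]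
      exact fun t h1 h2 => absurd h1.2 (not_lt.2 h2)
    have hv := summable_vw_exp hz
    have hdouble : Summable (Function.uncurry fun (N n : ℕ) =>
        (r N n : ℂ) * pw n * cexp (-(z * lg n))) := by
      refine Summable.of_norm_bounded (hgeo.summable.mul_of_nonneg hv (fun _ => by positivity)
        (fun n => mul_nonneg (vw_nonneg n) (Real.exp_pos _).le)) ?_
      rintro ⟨N, n⟩
      exact norm_pw_term (hr N) z n
    have hcomm := hdouble.tsum_comm
    have hrow : Summable fun N => ∑' n, (r N n : ℂ) * pw n * cexp (-(z * lg n)) := hdouble.prod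
    have hcol : ∀ n, ∑' N, (r N n : ℂ) * pw n * cexp (-(z * lg n)) =
        ((∑' N, r N n : ℝ) : ℂ) * pw n * cexp (-(z * lg n)) := by
      intro n
      rw [tsum_mul_right, tsum_mul_right, ofReal_tsum]
    simp only [hcol] at hcomm
    have hDsum : ∑' N, D N z = (∫ t in Ici (τ 0), (g t : ℂ) * cexp (-(z * t))) -
        ∑' N, ∑' n, (r N n : ℂ) * pw n * cexp (-(z * lg n)) := by
      have h1 := hS.sub hrow.hasSum
      refine (h1.congr_fun fun N => ?_).tsum_eq
      rw [hD N z hz, hpiece N]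
    simp only
    rw [hDsum, hsplit, hcomm]
    ring

/-! ### Rounding to signs and conclusion -/

/-- The weight `log p` at primes `p`, and `0` elsewhere. -/
noncomputable def plog (n : ℕ) : ℝ := if n.Prime then lg n else 0

lemma plog_nonneg (n : ℕ) : 0 ≤ plog n := by
  unfold plog; split_ifs
  exacts [lg_nonneg n, le_rfl]

lemma plog_le (n : ℕ) : plog n ≤ lg n := by
  unfold plog; split_ifs
  exacts [le_rfl, lg_nonneg n]

/-- The sign `1` or `-1` of a real number, with value `1` at `0`. -/
noncomputable def sg (x : ℝ) : ℝ := if 0 ≤ x then 1 else -1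

lemma sg_eq (x : ℝ) : sg x = 1 ∨ sg x = -1 := by
  unfold sg; split_ifs <;> simp

/-- The accumulated error `∑_{p < n} (r p - χ p) log p` of greedy rounding, the sign `χ n` being
chosen as the sign of the error accumulated so far. -/
noncomputable def roundErr (r : ℕ → ℝ) : ℕ → ℝ
  | 0 => 0
  | n + 1 => roundErr r n + plog n * (r n - sg (roundErr r n))

lemma roundErr_eq_sum (r : ℕ → ℝ) (n : ℕ) :
    roundErr r n = ∑ k ∈ Finset.range n, plog k * (r k - sg (roundErr r k)) := by
  induction n with
  | zero => rfl
  | succ n ih => rw [Finset.sum_range_succ, ← ih]; rfl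

lemma abs_roundErr_succ_le {r : ℕ → ℝ} (hr : ∀ n, |r n| ≤ 1) (n : ℕ) :
    |roundErr r (n + 1)| ≤ 2 * lg n := by
  induction n with
  | zero => simp [roundErr, plog, lg]
  | succ n ih =>
    have hm : lg n ≤ lg (n + 1) := by
      unfold lg
      rcases Nat.eq_zero_or_pos n with rfl | h
      · simp
      · exact Real.log_le_log (by exact_mod_cast h) (by push_cast; linarith)
    have h1 := plog_le (n + 1)
    have h0 := plog_nonneg (n + 1)
    have h2 := abs_le.1 (hr (n + 1))
    have h3 := abs_le.1 ih
    have h4 : roundErr r (n + 1 + 1) = roundErr r (n + 1) +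
      plog (n + 1) * (r (n + 1) - sg (roundErr r (n + 1))) := rfl
    rw [h4, abs_le]
    unfold sg
    split_ifs with h
    · constructor <;> nlinarith
    · constructor <;> nlinarith

lemma exp_neg_mul_lg {n : ℕ} (h0 : n ≠ 0) (s : ℂ) :
    cexp (-((s - 1) * lg n)) = n * (n : ℂ) ^ (-s) := by
  have hn : (n : ℂ) ≠ 0 := by exact_mod_cast h0
  rw [cpow_def_of_ne_zero hn, show -((s - 1) * (lg n : ℂ)) = lg n + lg n * -s by ring,
    Complex.exp_add]
  unfold lg
  rw [natCast_log, Complex.exp_log hn]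

/-- A bounded sequence weighted by `log p` can be rounded to signs so that the difference of the
two Dirichlet series over primes continues to `Re s > 21/40`. -/
lemma exists_rounding {r : ℕ → ℝ} (hr : ∀ n, |r n| ≤ 1) :
    ∃ c : ℕ → ℝ, (∀ n, c n = 1 ∨ c n = -1) ∧ ∃ H : ℂ → ℂ,
      DifferentiableOn ℂ H {s : ℂ | 21 / 40 < s.re} ∧ ∀ s : ℂ, 1 < s.re →
        HasSum (fun n : ℕ => ((r n - c n : ℝ) : ℂ) * pw n * cexp (-((s - 1) * lg n))) (H s) := by
  set c : ℕ → ℝ := fun n => sg (roundErr r n) with hc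
  have hc1 : ∀ n, |c n| ≤ 1 := fun n => by
    rcases sg_eq (roundErr r n) with h | h <;> simp [hc, h]
  set f : ℕ → ℂ := fun n => ((plog n * (r n - c n) : ℝ) : ℂ) with hf
  have hsum : ∀ n, ∑ k ∈ Finset.Icc 1 n, f k = (roundErr r (n + 1) : ℂ) := by
    intro n
    rw [roundErr_eq_sum, ofReal_sum, Finset.range_eq_Ico, Finset.sum_eq_sum_Ico_succ_bot (by omega)]
    have h0 : plog 0 = 0 := by simp [plog, Nat.not_prime_zero]
    rw [h0]
    simp only [zero_mul, ofReal_zero, zero_add]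
    rfl
  have hbound : ∀ n : ℕ, ‖∑ k ∈ Finset.Icc 1 n, f k‖ ≤ 4 * (n : ℝ) ^ (1 / 2 : ℝ) := by
    intro n
    rw [hsum, Complex.norm_real]
    refine (abs_roundErr_succ_le hr n).trans ?_
    have := Real.log_le_rpow_div (x := n) n.cast_nonneg (show (0 : ℝ) < 1 / 2 by norm_num)
    unfold lg
    linarith
  have hO : (fun n => ∑ k ∈ Finset.Icc 1 n, f k) =O[atTop] fun n => (n : ℝ) ^ (1 / 2 : ℝ) := by
    refine Asymptotics.IsBigO.of_bound 4 (Eventually.of_forall fun n => ?_)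
    rw [Real.norm_of_nonneg (by positivity)]
    exact hbound n
  have hterm : ∀ (s : ℂ) (n : ℕ), LSeries.term f s n =
      ((r n - c n : ℝ) : ℂ) * pw n * cexp (-((s - 1) * lg n)) := by
    intro s n
    by_cases hp : n.Prime
    · have hn : (n : ℂ) ≠ 0 := by exact_mod_cast hp.ne_zero
      rw [LSeries.term_of_ne_zero hp.ne_zero]
      have e1 := exp_neg_mul_lg hp.ne_zero s
      rw [e1, cpow_neg]
      simp only [hf, plog, pw, hp, if_true]
      push_cast
      field_simp
    · rcases Nat.eq_zero_or_pos n with rfl | h0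
      · simp [pw, Nat.not_prime_zero]
      · rw [LSeries.term_of_ne_zero h0.ne']
        simp [hf, plog, pw, hp]
  have hS : ∀ s : ℂ, 1 < s.re → LSeriesSummable f s := by
    intro s hs
    refine (Summable.of_norm_bounded ((summable_vw_exp (σ := (s - 1).re)
      (by simpa using hs)).mul_left 2) fun n => ?_)
    rw [hterm]
    exact norm_pw_term (r := fun n => r n - c n)
      (fun n => (abs_sub _ _).trans (by linarith [hr n, hc1 n])) _ n
  refine ⟨c, fun n => sg_eq _, fun s => s * ∫ t in Ioi (1 : ℝ),
    (∑ k ∈ Finset.Icc 1 ⌊t⌋₊, f k) * (t : ℂ) ^ (-(s + 1)), ?_, ?_⟩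
  · refine differentiableOn_id.mul ?_
    have hIntg : IntegrableOn (fun t : ℝ => 4 * t ^ (-(41 / 40) : ℝ)) (Ioi 1) :=
      (integrableOn_Ioi_rpow_of_lt (by norm_num) one_pos).const_mul 4
    refine differentiableOn_integral (isOpen_lt continuous_const continuous_re) (fun w _ => ?_)
      ?_ hIntg ?_
    · have h1 : Measurable fun t : ℝ => ∑ k ∈ Finset.Icc 1 ⌊t⌋₊, f k :=
        (measurable_from_nat (f := fun n => ∑ k ∈ Finset.Icc 1 n, f k)).comp Nat.measurable_floor
      have h2 : Measurable fun t : ℝ => (t : ℂ) ^ (-(w + 1)) := by fun_prop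
      exact (h1.mul h2).aestronglyMeasurable
    · filter_upwards [ae_restrict_mem measurableSet_Ioi] with t ht
      have ht0 : (t : ℂ) ≠ 0 := by
        have : (0 : ℝ) < t := one_pos.trans ht
        exact_mod_cast this.ne'
      refine DifferentiableOn.const_mul ?_ _
      intro s _
      exact ((by fun_prop : DifferentiableAt ℂ (fun s : ℂ => -(s + 1)) s).const_cpow
        (Or.inl ht0)).differentiableWithinAt
    · filter_upwards [ae_restrict_mem measurableSet_Ioi] with t ht s hs
      have ht1 : 1 < t := ht
      have ht0 : 0 < t := one_pos.trans ht1
      have hs' : 21 / 40 < s.re := hs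
      rw [norm_mul, norm_cpow_eq_rpow_re_of_pos ht0]
      have h1 : ‖∑ k ∈ Finset.Icc 1 ⌊t⌋₊, f k‖ ≤ 4 * t ^ (1 / 2 : ℝ) :=
        (hbound _).trans (by gcongr; exact Nat.floor_le ht0.le)
      calc _ ≤ 4 * t ^ (1 / 2 : ℝ) * t ^ (-(61 / 40) : ℝ) := by
            refine mul_le_mul h1 (Real.rpow_le_rpow_of_exponent_le ht1.le ?_) (by positivity)
              (by positivity)
            simp only [neg_re, add_re, one_re]; linarith
        _ = _ := by rw [mul_assoc, ← Real.rpow_add ht0]; norm_num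
  · intro s hs
    simp only
    rw [← LSeries_eq_mul_integral f (by norm_num) (by linarith : (1 / 2 : ℝ) < s.re) (hS s hs) hO]
    have : HasSum (LSeries.term f s) (LSeries f s) := Summable.hasSum (hS s hs)
    exact this.congr_fun fun n => (hterm s n).symm

/-- The completely multiplicative function with prescribed values `c p` at primes `p`. -/
noncomputable def extendMul (c : ℕ → ℝ) (n : ℕ) : ℂ :=
  if n = 0 then 0 else n.factorization.prod fun p k => (c p : ℂ) ^ k

lemma extendMul_prime (c : ℕ → ℝ) {p : ℕ} (hp : p.Prime) : extendMul c p = c p := by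
  unfold extendMul
  rw [if_neg hp.ne_zero, hp.factorization, Finsupp.prod_single_index] <;> simp

lemma extendMul_completelyMultiplicative (c : ℕ → ℝ) : CompletelyMultiplicative (extendMul c) := by
  refine ⟨by simp [extendMul], fun m n => ?_⟩
  unfold extendMul
  by_cases hm : m = 0
  · simp [hm]
  by_cases hn : n = 0
  · simp [hn]
  rw [if_neg hm, if_neg hn, if_neg (mul_ne_zero hm hn), Nat.factorization_mul hm hn,
    Finsupp.prod_add_index' (by simp) (fun _ _ _ => pow_add _ _ _)]

lemma extendMul_mem {c : ℕ → ℝ} (hc : ∀ n, c n = 1 ∨ c n = -1) {n : ℕ} (hn : 1 ≤ n) :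
    extendMul c n ∈ ({1, -1} : Set ℂ) := by
  unfold extendMul
  rw [if_neg (by omega), Finsupp.prod]
  refine Finset.prod_induction _ (fun x : ℂ => x ∈ ({1, -1} : Set ℂ)) ?_ (by simp) fun p _ => ?_
  · rintro a b (rfl | rfl) (rfl | rfl) <;> simp
  · rcases hc p with h | h
    · simp [h]
    · rw [h]
      rcases neg_one_pow_eq_or ℂ (n.factorization p) with h | h <;> simp [h]

/-- The substitution `x = e^t`. -/
lemma integral_exp_subst (q : ℝ → ℝ) (s : ℂ) :
    ∫ x in Ioi (1 : ℝ), (q x : ℂ) * (x : ℂ) ^ (-s) =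
      ∫ t in Ici (0 : ℝ), (q (Real.exp (max t 0)) : ℂ) * cexp (-((s - 1) * t)) := by
  have himg : Real.exp '' Ioi 0 = Ioi 1 := by
    ext x
    constructor
    · rintro ⟨t, ht, rfl⟩
      exact Real.one_lt_exp_iff.2 ht
    · intro hx
      exact ⟨Real.log x, Real.log_pos hx, Real.exp_log (one_pos.trans hx)⟩
  rw [← himg, integral_image_eq_integral_abs_deriv_smul measurableSet_Ioi
    (fun t _ => (Real.hasDerivAt_exp t).hasDerivWithinAt) Real.exp_injective.injOn,
    integral_Ici_eq_integral_Ioi]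
  refine setIntegral_congr_fun measurableSet_Ioi fun t ht => ?_
  have ht' : 0 < t := ht
  simp only [max_eq_left ht'.le, abs_of_pos (Real.exp_pos t), real_smul]
  rw [cpow_def_of_ne_zero (by exact_mod_cast (Real.exp_pos t).ne'), ← ofReal_log (Real.exp_pos t).le,
    Real.log_exp, show -((s - 1) * (t : ℂ)) = t + t * -s by ring, Complex.exp_add, ofReal_exp]
  ring

lemma tsum_primes_eq {c : ℕ → ℝ} (s : ℂ) :
    ∑' p : Nat.Primes, extendMul c p * (p : ℂ) ^ (-s) * (Real.log p : ℂ) =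
      ∑' n : ℕ, (c n : ℂ) * pw n * cexp (-((s - 1) * lg n)) := by
  rw [← tsum_subtype_eq_of_support_subset (s := {p : ℕ | p.Prime}) (f := fun n : ℕ =>
    (c n : ℂ) * pw n * cexp (-((s - 1) * lg n)))]
  · refine tsum_congr fun p : Nat.Primes => ?_
    obtain ⟨n, hp⟩ := p
    have hn : (n : ℂ) ≠ 0 := by exact_mod_cast hp.ne_zero
    have e1 := exp_neg_mul_lg hp.ne_zero s
    change extendMul c n * (n : ℂ) ^ (-s) * ((lg n : ℝ) : ℂ) = _
    rw [extendMul_prime c hp, e1]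
    simp only [pw, hp, if_true]
    push_cast
    field_simp
  · intro n hn
    by_contra hp
    exact hn (by simp [pw, show ¬ n.Prime from hp])

end PrimeSign

theorem mellin_minus_prime_sum_extends_pm_one
    (q : ℝ → ℝ) (hq : ContinuousOn q (Set.Ici 1))
    (hq0 : Tendsto q atTop (nhds 0)) :
    ∃ χ : ℕ → ℂ,
      CompletelyMultiplicative χ ∧
      (∀ n : ℕ, 1 ≤ n → χ n ∈ ({1, -1} : Set ℂ)) ∧
      ∃ G : ℂ → ℂ, AnalyticOnNhd ℂ G {s : ℂ | 21 / 40 < s.re} ∧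
        ∀ s : ℂ, 1 < s.re →
          G s = (∫ x in Set.Ioi (1 : ℝ), (q x : ℂ) * (x : ℂ) ^ (-s)) -
            ∑' p : Nat.Primes, χ p * (p : ℂ) ^ (-s) * (Real.log p : ℂ) := by
  have hg : Continuous fun t : ℝ => q (Real.exp (max t 0)) :=
    hq.comp_continuous (by fun_prop) fun t => Real.one_le_exp (le_max_right _ _)
  have hg0 : Tendsto (fun t : ℝ => q (Real.exp (max t 0))) atTop (nhds 0) :=
    hq0.comp (Real.tendsto_exp_atTop.comp
      (tendsto_atTop_mono (fun t => le_max_left t 0) tendsto_id))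
  obtain ⟨r, hr, D, hDd, hD⟩ := PrimeSign.exists_coefficients hg hg0
  obtain ⟨c, hc, H, hHd, hH⟩ := PrimeSign.exists_rounding hr
  refine ⟨PrimeSign.extendMul c, PrimeSign.extendMul_completelyMultiplicative c,
    fun n hn => PrimeSign.extendMul_mem hc hn, fun s => D (s - 1) + H s, ?_, ?_⟩
  · refine DifferentiableOn.analyticOnNhd ?_ (isOpen_lt continuous_const continuous_re)
    refine DifferentiableOn.add (hDd.comp (by fun_prop) fun s hs => ?_) hHd
    have : 21 / 40 < s.re := hs
    change -1 / 2 < (s - 1).re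
    rw [sub_re, one_re]; linarith
  · intro s hs
    have hz : 0 < (s - 1).re := by rw [sub_re, one_re]; linarith
    have hrs : Summable fun n : ℕ => (r n : ℂ) * PrimeSign.pw n *
        cexp (-((s - 1) * PrimeSign.lg n)) :=
      Summable.of_norm_bounded ((PrimeSign.summable_vw_exp hz).mul_left 1)
        (PrimeSign.norm_pw_term hr (s - 1))
    have h1 := hrs.hasSum.sub (hH s hs)
    have h2 : ∑' n : ℕ, (c n : ℂ) * PrimeSign.pw n * cexp (-((s - 1) * PrimeSign.lg n)) = _ :=
      (h1.congr_fun fun n => by push_cast; ring).tsum_eq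
    rw [PrimeSign.integral_exp_subst, PrimeSign.tsum_primes_eq, h2]
    simp only
    rw [hD _ hz]
    ring
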